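/- For all n ≥ 1 and all a₁,…,aₙ > 0, c₂ᵐⁱⁿ(P(a₁,…,aₙ)) = c₂ᵐᵃˣ(P(a₁,…,aₙ)), where P(a₁,…,aₙ) ⊂ ℂⁿ. -/

import Mathlib

/-!
Both capacities of `P(a)` are equal to `2 μ`, where `μ = min a`.

*Embeddings.* The polydisk is contained in `E(μ + ε, M, …, M)` for `M` large (`polydisk_subset`),
and `E(A, 2A, …, 2A)` embeds into it for every `A < μ` (`sympEmb_polydisk`). For the latter, each
coordinate is mapped area-preservingly into the strip `ℝ × (-1/2, 1/2)`, the disk of area `t` going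
to `|x| ≤ t/2 + δ` (`strip`); then a linear map acts on the positions and its inverse transpose on
the momenta (`shear`), and the result is read in action-angle coordinates (`polar`).

*Obstructions.* Gromov's theorem (`nonsqueezing`) bounds the shortest axis of an ellipsoid inside
`P(a)`, so that its `N₂` is at most `2 μ`. An ellipsoid `E(b')` containing `P(a)` contains a copy of
`E(A, 2A, …, 2A)`: its axes are at least `A` by nonsqueezing, and no two of them are below `2A` by
`second_obstruction`; hence its `N₂` is at least `2A`.

Both obstructions come from `no_sympEmb`. Given an embedding `ψ` of `E(b)` into `E(b')`, consider
the Hamiltonian `hamK`: the function `f(q_b)` transported by `ψ`, equal to the constant `m` outside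
the image, plus `g(q_{b'})`, where `q_b` is the quadratic form defining `E(b)`, the profile `f` has
slope `s₀` at `0` and the profile `g` has slope `s` at infinity. If `s₀` and `s` are not integral
multiples of the axes, every `1`-periodic orbit of nonnegative action is trivial (`orbit_trivial`).
If, on the other hand, more axes of `E(b')` are below `s` than axes of `E(b)` are below `s₀`, a
nontrivial orbit of nonnegative action exists (`no_ham`). It is the limit of critical points of the
action functional restricted to trigonometric polynomials of degree at most `N` (`exists_crit`),
the limit being controlled by the decay of Fourier coefficients (`crit_decay`) and by
nonresonance at the origin (`crit_eq_zero_of_small`).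

The critical points are found by a linking argument (`no_linking`). The action is positive near the
origin on a subspace, and bounded above on a second subspace with one mode more than the codimension
of the first; the half period shift acts on all of this, and on its fixed vectors in the second
subspace the action is nonpositive. Without nontrivial critical points of nonnegative action, the
gradient descent pushes the second subspace below the level of a small sphere in the first one,
against a Borsuk–Ulam theorem for linear involutions (`exists_zero_frontier`). That theorem
follows from a count of zeros modulo two, made possible by a degree integral whose homotopy
invariance is proved by Milnor's change of variables (`integral_det_fderiv_eq_zero`).
-/


open Set MeasureTheory
open scoped Real ENNReal Pointwise

noncomputable section

/-- The standard symplectic form `ω = Σᵢ dxᵢ ∧ dyᵢ` on `ℂⁿ ≅ ℝ²ⁿ`. -/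
def stdSymp (n : ℕ) (v w : Fin n → ℂ) : ℝ :=
  ∑ i, ((starRingEnd ℂ) (v i) * w i).im

/-- `X` symplectically embeds into `X'` (both subsets of `ℂⁿ`): there is an injective map
`φ : X → ℂⁿ` with image in `X'`, smooth on the interior of `X`, whose derivative preserves
the standard symplectic form at every interior point. -/
def SympEmb (n : ℕ) (X X' : Set (Fin n → ℂ)) : Prop :=
  ∃ φ : (Fin n → ℂ) → (Fin n → ℂ),
    Set.InjOn φ X ∧ φ '' X ⊆ X' ∧ ContDiffOn ℝ (⊤ : ℕ∞) φ (interior X) ∧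
    ∀ x ∈ interior X, ∀ v w : Fin n → ℂ,
      stdSymp n (fderiv ℝ φ x v) (fderiv ℝ φ x w) = stdSymp n v w

/-- The ellipsoid `E(a₁,…,aₙ) ⊂ ℂⁿ`. -/
def ellipsoid {n : ℕ} (a : Fin n → ℝ) : Set (Fin n → ℂ) :=
  {z | ∑ i, Real.pi * ‖z i‖ ^ 2 / a i ≤ 1}

/-- The polydisk `P(a₁,…,aₙ) ⊂ ℂⁿ`. -/
def polydisk {n : ℕ} (a : Fin n → ℝ) : Set (Fin n → ℂ) :=
  {z | ∀ i, Real.pi * ‖z i‖ ^ 2 ≤ a i}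

/-- `Nk k a` is the `k`-th smallest element (with multiplicity) of the multiset
`{m · aᵢ : m ∈ ℤ_{>0}, 1 ≤ i ≤ n}`. -/
def Nk {n : ℕ} (k : ℕ) (a : Fin n → ℝ) : ℝ :=
  sInf {t : ℝ | k ≤ {p : Fin n × ℕ | ((p.2 : ℝ) + 1) * a p.1 ≤ t}.ncard}

/-- `c_k^max(X)`: the infimum of `N_k(a)` over ellipsoids `E(a)` into which `X`
symplectically embeds. -/
def ckmax (n k : ℕ) (X : Set (Fin n → ℂ)) : ℝ :=
  sInf {c : ℝ | ∃ a : Fin n → ℝ, (∀ i, 0 < a i) ∧ SympEmb n X (ellipsoid a) ∧ c = Nk k a}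

/-- `c_k^min(X)`: the supremum of `N_k(a)` over ellipsoids `E(a)` symplectically
embedding into `X`. -/
def ckmin (n k : ℕ) (X : Set (Fin n → ℂ)) : ℝ :=
  sSup {c : ℝ | ∃ a : Fin n → ℝ, (∀ i, 0 < a i) ∧ SympEmb n (ellipsoid a) X ∧ c = Nk k a}

/-- The moment map `μ(z₁,…,zₙ) = (π|z₁|²,…,π|zₙ|²)`. -/
def momentMap (n : ℕ) (z : Fin n → ℂ) : Fin n → ℝ := fun i => Real.pi * ‖z i‖ ^ 2

/-- The toric domain `X_Ω = μ⁻¹(Ω)`. -/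
def toricDomain {n : ℕ} (Ω : Set (Fin n → ℝ)) : Set (Fin n → ℂ) :=
  momentMap n ⁻¹' Ω

/-- `X_Ω` is a convex toric domain: `Ω ⊆ [0,∞)ⁿ`, the symmetrization
`Ω̂ = {x : (|x₁|,…,|xₙ|) ∈ Ω}` is compact and convex, and `Ω` is the closure of a
nonempty relatively open subset of `[0,∞)ⁿ`. -/
def IsConvexToricDomain {n : ℕ} (Ω : Set (Fin n → ℝ)) : Prop :=
  Ω ⊆ {x | ∀ i, 0 ≤ x i} ∧
  IsCompact {x : Fin n → ℝ | (fun i => |x i|) ∈ Ω} ∧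
  Convex ℝ {x : Fin n → ℝ | (fun i => |x i|) ∈ Ω} ∧
  ∃ V : Set (Fin n → ℝ), IsOpen V ∧ (V ∩ {x | ∀ i, 0 ≤ x i}).Nonempty ∧
    Ω = closure (V ∩ {x | ∀ i, 0 ≤ x i})

/-- The quadrilateral `Q_ε` with vertices `(0,0)`, `(1,0)`, `(ε,ε)`, `(0,1)`, i.e. the union
of the triangles `conv{(0,0),(1,0),(ε,ε)}` and `conv{(0,0),(ε,ε),(0,1)}`. -/
def Qeps (ε : ℝ) : Set (Fin 2 → ℝ) :=
  convexHull ℝ {![0, 0], ![1, 0], ![ε, ε]} ∪ convexHull ℝ {![0, 0], ![ε, ε], ![0, 1]}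

/-! ### Mapping degree through integrals -/

section Degree

set_option linter.unusedSectionVars false

variable {E : Type*} [NormedAddCommGroup E] [NormedSpace ℝ E] [FiniteDimensional ℝ E]

theorem det_interp (d : ℕ) (s₀ : ℝ) (hd : Module.finrank ℝ E = d) :
    ∃ c : Fin (d + 1) → ℝ, ∀ A : E →L[ℝ] E,
      A.det = ∑ i, c i * ((s₀ + i) • ContinuousLinearMap.id ℝ E + A).det := by
  let v : Fin (d + 1) → ℝ := fun i => s₀ + i
  have hv : Set.InjOn v (Finset.univ : Finset (Fin (d+1))) := by
    intro i _ j _ h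
    simpa [v, Fin.ext_iff] using h
  refine ⟨fun i => (Lagrange.basis Finset.univ v i).eval 0, fun A => ?_⟩
  let P := LinearMap.charpoly (-(A : E →ₗ[ℝ] E))
  have hP : ∀ s : ℝ, P.eval s = (s • ContinuousLinearMap.id ℝ E + A).det := by
    intro s
    simp only [P]
    rw [LinearMap.eval_charpoly]
    simp [ContinuousLinearMap.det, Algebra.algebraMap_eq_smul_one, sub_neg_eq_add]
    rfl
  have hdeg : P.degree < (Finset.univ : Finset (Fin (d+1))).card := by
    have : P.natDegree = d := by rw [← hd]; exact LinearMap.charpoly_natDegree _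
    refine lt_of_le_of_lt Polynomial.degree_le_natDegree ?_
    rw [this]; simp
    exact_mod_cast Nat.lt_succ_self d
  have h := Lagrange.eq_interpolate hv hdeg
  have h0 := hP 0
  rw [zero_smul, zero_add] at h0
  rw [← h0, h, Lagrange.interpolate_apply, Polynomial.eval_finsetSum]
  refine Finset.sum_congr rfl fun i _ => ?_
  rw [Polynomial.eval_mul, Polynomial.eval_C, mul_comm, hP]

theorem clm_det_ne_zero_of_injective {A : E →L[ℝ] E} (h : ∀ x, A x = 0 → x = 0) : A.det ≠ 0 := by
  have hi : LinearMap.ker (A : E →ₗ[ℝ] E) = ⊥ := by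
    rw [LinearMap.ker_eq_bot']
    exact h
  intro h0
  have := LinearMap.bot_lt_ker_of_det_eq_zero (f := (A : E →ₗ[ℝ] E)) h0
  rw [hi] at this
  exact lt_irrefl _ this

theorem clm_exists_ker_of_det_eq_zero {A : E →L[ℝ] E} (h : A.det = 0) : ∃ x, x ≠ 0 ∧ A x = 0 := by
  by_contra! h'
  exact clm_det_ne_zero_of_injective (A := A) (fun x hx => by
    by_contra hx0; exact h' x hx0 hx) h

theorem clm_det_continuous : Continuous fun A : E →L[ℝ] E => A.det :=
  ContinuousLinearMap.continuous_det

theorem det_smul_id_add_pos {A : E →L[ℝ] E} {s : ℝ} (hA : ‖A‖ < s) :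
    0 < (s • ContinuousLinearMap.id ℝ E + A).det := by
  have hs : 0 < s := (norm_nonneg A).trans_lt hA
  let g : ℝ → ℝ := fun t => (s • ContinuousLinearMap.id ℝ E + t • A).det
  have hg : Continuous g := clm_det_continuous.comp (by fun_prop)
  have hne : ∀ t ∈ Icc (0:ℝ) 1, g t ≠ 0 := by
    intro t ht
    refine clm_det_ne_zero_of_injective fun x hx => ?_
    have h1 : s • x = -(t • A x) := by
      simpa [add_eq_zero_iff_eq_neg] using hx
    have h2 : s * ‖x‖ ≤ ‖A‖ * ‖x‖ := by
      calc s * ‖x‖ = ‖s • x‖ := by rw [norm_smul, Real.norm_of_nonneg hs.le]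
        _ = t * ‖A x‖ := by rw [h1, norm_neg, norm_smul, Real.norm_of_nonneg ht.1]
        _ ≤ 1 * ‖A x‖ := by gcongr; exact ht.2
        _ ≤ ‖A‖ * ‖x‖ := by rw [one_mul]; exact A.le_opNorm x
    by_contra hx0
    have : 0 < ‖x‖ := norm_pos_iff.2 hx0
    nlinarith
  have h0 : 0 < g 0 := by
    have : g 0 = s ^ Module.finrank ℝ E := by
      simp [g, ContinuousLinearMap.det]
    rw [this]; positivity
  by_contra hneg
  have h1 : g 1 ≤ 0 := by simpa [g] using hneg
  have := intermediate_value_Icc' (zero_le_one (α := ℝ)) hg.continuousOn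
  obtain ⟨t, ht, hgt⟩ := this ⟨h1, h0.le⟩
  exact hne t ht hgt

variable [MeasurableSpace E] [BorelSpace E] (μ : Measure E) [μ.IsAddHaarMeasure]

/-- Milnor's argument: for large `s` the map `s • id + ψ` is a bijection of `E`, equal to `s • id`
near infinity, so `∫ det (s + Dψ)` over a large ball is a monomial in `s`. -/
theorem integral_det_fderiv_eq_zero [Nontrivial E] {ψ : E → E} (hψ : ContDiff ℝ 1 ψ)
    (hc : HasCompactSupport ψ) : ∫ x, (fderiv ℝ ψ x).det ∂μ = 0 := by
  obtain ⟨C, hC⟩ := ContDiff.lipschitzWith_of_hasCompactSupport hc hψ (by simp)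
  obtain ⟨R, hR⟩ := hc.isCompact.isBounded.subset_closedBall (0 : E)
  set B : Set E := Metric.closedBall (0 : E) R with hB
  set d := Module.finrank ℝ E with hd
  have hdpos : 0 < d := Module.finrank_pos
  have hψ0 : ∀ x ∉ B, ψ x = 0 := fun x hx => by
    by_contra h; exact hx (hR (subset_tsupport _ h))
  have hnorm : ∀ x, ‖fderiv ℝ ψ x‖ ≤ C := fun x => norm_fderiv_le_of_lipschitz ℝ hC
  have hdiff : ∀ x, HasFDerivAt ψ (fderiv ℝ ψ x) x := fun x =>
    (hψ.differentiable (by simp) x).hasFDerivAt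
  have hcont : Continuous (fderiv ℝ ψ) := hψ.continuous_fderiv (by simp)
  -- the volume of the ball under `s • id + ψ`
  have key : ∀ s : ℝ, (C : ℝ) + 1 ≤ s →
      ∫ x in B, (s • ContinuousLinearMap.id ℝ E + fderiv ℝ ψ x).det ∂μ = s ^ d * μ.real B := by
    intro s hs
    have hs0 : 0 < s := by have := C.2; linarith [NNReal.coe_nonneg C]
    let h : E → E := fun x => s • x + ψ x
    have hinj : Function.Injective h := by
      intro x y hxy
      have h1 : s • (x - y) = ψ y - ψ x := by
        have : s • x + ψ x = s • y + ψ y := hxy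
        rw [smul_sub, sub_eq_sub_iff_add_eq_add, this, add_comm]
      have h2 : s * ‖x - y‖ ≤ C * ‖x - y‖ := by
        calc s * ‖x - y‖ = ‖s • (x - y)‖ := by rw [norm_smul, Real.norm_of_nonneg hs0.le]
          _ = dist (ψ y) (ψ x) := by rw [h1, dist_eq_norm]
          _ ≤ C * dist y x := hC.dist_le_mul y x
          _ = C * ‖x - y‖ := by rw [dist_eq_norm, norm_sub_rev]
      have h3 : ‖x - y‖ = 0 := by
        by_contra hx0
        have : 0 < ‖x - y‖ := lt_of_le_of_ne (norm_nonneg _) (Ne.symm hx0)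
        nlinarith
      exact sub_eq_zero.1 (norm_eq_zero.1 h3)
    have hsurj : Function.Surjective h := by
      intro y
      -- solve `x = s⁻¹ • (y - ψ x)` by contraction
      let T : E → E := fun x => s⁻¹ • (y - ψ x)
      have hT : ContractingWith (s.toNNReal⁻¹ * C) T := by
        refine ⟨?_, ?_⟩
        · rw [← NNReal.coe_lt_coe]
          push_cast
          rw [Real.coe_toNNReal _ hs0.le]
          rw [inv_mul_lt_iff₀ hs0]; linarith
        · refine LipschitzWith.of_dist_le_mul fun a b => ?_
          push_cast
          rw [Real.coe_toNNReal _ hs0.le]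
          change dist (s⁻¹ • (y - ψ a)) (s⁻¹ • (y - ψ b)) ≤ s⁻¹ * C * dist a b
          rw [dist_smul₀, dist_sub_left, Real.norm_of_nonneg (by positivity), mul_assoc]
          gcongr
          exact hC.dist_le_mul a b
      refine ⟨hT.fixedPoint, ?_⟩
      have := hT.fixedPoint_isFixedPt
      have h4 : s⁻¹ • (y - ψ hT.fixedPoint) = hT.fixedPoint := this
      have h5 : y - ψ hT.fixedPoint = s • hT.fixedPoint := by
        rw [← h4, smul_smul, mul_inv_cancel₀ hs0.ne', one_smul, h4]
      change s • _ + ψ _ = y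
      rw [← h5]; abel
    have himg : h '' B = s • B := by
      have hcompl : h '' Bᶜ = s • Bᶜ := by
        rw [← Set.image_smul]
        refine Set.image_congr fun x hx => ?_
        simp [h, hψ0 x hx]
      have h6 : h '' B = (h '' Bᶜ)ᶜ := by
        rw [Set.image_compl_eq ⟨hinj, hsurj⟩, compl_compl]
      rw [h6, hcompl, ← Set.image_smul, ← Set.image_smul,
        Set.image_compl_eq (MulAction.bijective₀ hs0.ne'), compl_compl]
    have hh : ∀ x ∈ B, HasFDerivWithinAt h (s • ContinuousLinearMap.id ℝ E + fderiv ℝ ψ x) B x :=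
      fun x _ => (((hasFDerivAt_id x).const_smul s).add (hdiff x)).hasFDerivWithinAt
    have hcov := integral_image_eq_integral_abs_det_fderiv_smul μ
      Metric.isClosed_closedBall.measurableSet hh hinj.injOn (fun _ => (1:ℝ))
    rw [himg] at hcov
    have h7 : ∫ x in s • B, (1:ℝ) ∂μ = s ^ d * μ.real B := by
      rw [setIntegral_const, smul_eq_mul, mul_one, Measure.real, Measure.addHaar_smul,
        ENNReal.toReal_mul, ENNReal.toReal_ofReal (abs_nonneg _), abs_of_nonneg (by positivity)]
      rfl
    rw [← h7, hcov]
    refine setIntegral_congr_fun Metric.isClosed_closedBall.measurableSet fun x _ => ?_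
    simp only [smul_eq_mul, mul_one]
    rw [abs_of_pos (det_smul_id_add_pos (lt_of_le_of_lt (hnorm x) (by linarith)))]
  obtain ⟨c, hcd⟩ := det_interp (E := E) d (C + 1) rfl
  have hzero : ∑ i : Fin (d+1), c i * ((C:ℝ) + 1 + i) ^ d = 0 := by
    have := hcd 0
    have h0 : (0 : E →L[ℝ] E).det = 0 := by
      simp [ContinuousLinearMap.det]
    rw [h0] at this
    rw [this]
    refine Finset.sum_congr rfl fun i _ => ?_
    simp [ContinuousLinearMap.det, hd]
  have hrestr : ∫ x, (fderiv ℝ ψ x).det ∂μ = ∫ x in B, (fderiv ℝ ψ x).det ∂μ := by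
    refine (setIntegral_eq_integral_of_forall_compl_eq_zero fun x hx => ?_).symm
    have : x ∉ tsupport ψ := fun h => hx (hR h)
    rw [fderiv_of_notMem_tsupport (𝕜 := ℝ) this]
    simp [ContinuousLinearMap.det]
  rw [hrestr]
  have hintg : ∀ i : Fin (d+1), Integrable (fun x => c i *
      (((C:ℝ) + 1 + i) • ContinuousLinearMap.id ℝ E + fderiv ℝ ψ x).det) (μ.restrict B) := by
    intro i
    have : Continuous fun x => c i *
      (((C:ℝ) + 1 + i) • ContinuousLinearMap.id ℝ E + fderiv ℝ ψ x).det :=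
      continuous_const.mul (clm_det_continuous.comp (by fun_prop))
    exact this.continuousOn.integrableOn_compact (isCompact_closedBall _ _)
  simp_rw [fun x => hcd (fderiv ℝ ψ x)]
  rw [integral_finsetSum _ fun i _ => hintg i]
  simp_rw [integral_const_mul]
  have : ∀ i : Fin (d+1), c i * ∫ x in B,
      (((C:ℝ) + 1 + i) • ContinuousLinearMap.id ℝ E + fderiv ℝ ψ x).det ∂μ
      = (c i * ((C:ℝ) + 1 + i) ^ d) * μ.real B := by
    intro i
    rw [key _ (by simp), mul_assoc]
  simp_rw [this]
  rw [← Finset.sum_mul, hzero, zero_mul]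

end Degree

section Degree2

variable {E : Type*} [NormedAddCommGroup E] [NormedSpace ℝ E] [FiniteDimensional ℝ E]

/-- A `C¹` map whose Jacobian determinant is a nonnegative bump concentrated near `0`: it is a
rank-one perturbation `y ↦ y + (h y - ℓ y) • e` of the identity with `∂ₑ h` the desired bump. -/
theorem exists_map_det_bump [Nontrivial E] {r : ℝ} (hr : 0 < r) :
    ∃ (N : E → E) (η : E → ℝ), ContDiff ℝ 1 N ∧ (∀ y, (fderiv ℝ N y).det = η y) ∧
      Continuous η ∧ (∀ y, 0 ≤ η y) ∧ 0 < η 0 ∧ ∀ y, r ≤ ‖y‖ → η y = 0 := by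
  obtain ⟨e, he⟩ := exists_norm_eq E (zero_le_one (α := ℝ))
  have he0 : e ≠ 0 := by rintro rfl; simp at he
  obtain ⟨ℓ, -, hℓ⟩ := exists_dual_vector ℝ e (norm_ne_zero_iff.2 he0)
  simp only [he] at hℓ
  have hℓe : ℓ e = 1 := by simpa using hℓ
  let b : ContDiffBump (0 : ℝ) := ⟨r / 4, r / 2, by positivity, by linarith⟩
  let B : ContDiffBump (0 : E) := ⟨r / 4, r / 2, by positivity, by linarith⟩
  let M : ℝ → ℝ := fun t => ∫ s in (0:ℝ)..t, b s
  have hM : ∀ t, HasDerivAt M (b t) t := fun t =>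
    b.continuous.integral_hasStrictDerivAt 0 t |>.hasDerivAt
  have hM1 : ContDiff ℝ 1 M := by
    rw [contDiff_one_iff_deriv]
    refine ⟨fun t => (hM t).differentiableAt, ?_⟩
    have : deriv M = b := funext fun t => (hM t).deriv
    rw [this]; exact b.continuous
  let π' : E →L[ℝ] E := ContinuousLinearMap.id ℝ E - ℓ.smulRight e
  have hπ : ∀ y, π' y = y - ℓ y • e := fun y => rfl
  have hπe : π' e = 0 := by rw [hπ, hℓe, one_smul, sub_self]
  have hB1 : ContDiff ℝ 1 (B : E → ℝ) := B.contDiff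
  let h : E → ℝ := fun y => M (ℓ y) * B (π' y)
  have hh : ContDiff ℝ 1 h := (hM1.comp ℓ.contDiff).mul (hB1.comp π'.contDiff)
  have hderiv : ∀ y, fderiv ℝ h y e = b (ℓ y) * B (π' y) := by
    intro y
    have h1 : HasFDerivAt (fun y => M (ℓ y)) (b (ℓ y) • (ℓ : E →L[ℝ] ℝ)) y :=
      (hM (ℓ y)).comp_hasFDerivAt y ℓ.hasFDerivAt
    have h2 : HasFDerivAt (fun y => B (π' y)) ((fderiv ℝ B (π' y)).comp π') y :=
      ((hB1.differentiable (by simp) (π' y)).hasFDerivAt).comp y π'.hasFDerivAt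
    have h3 : HasFDerivAt h _ y := h1.mul h2
    rw [h3.fderiv]
    simp [hπe, hℓe, mul_comm]
  refine ⟨fun y => y + (h y - ℓ y) • e, fun y => b (ℓ y) * B (π' y), ?_, ?_, ?_, ?_, ?_, ?_⟩
  · exact contDiff_id.add ((hh.sub ℓ.contDiff).smul contDiff_const)
  · intro y
    have h1 : HasFDerivAt (fun y => y + (h y - ℓ y) • e)
        (ContinuousLinearMap.id ℝ E + (fderiv ℝ h y - ℓ).smulRight e) y :=
      (hasFDerivAt_id y).add
        (((hh.differentiable (by simp) y).hasFDerivAt.sub ℓ.hasFDerivAt).smul_const e)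
    rw [h1.fderiv]
    beta_reduce
    rw [← hderiv y]
    have h2 : ((ContinuousLinearMap.id ℝ E + (fderiv ℝ h y - ℓ).smulRight e : E →L[ℝ] E)
        : E →ₗ[ℝ] E) = LinearMap.transvection ((fderiv ℝ h y - ℓ : E →L[ℝ] ℝ) : E →ₗ[ℝ] ℝ) e := by
      ext v; simp [LinearMap.transvection]
    rw [ContinuousLinearMap.det, h2, LinearMap.transvection.det]
    simp [hℓe]
  · exact (b.continuous.comp ℓ.continuous).mul (B.continuous.comp π'.continuous)
  · exact fun y => mul_nonneg b.nonneg B.nonneg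
  · have h1 : b (ℓ 0) = 1 := b.one_of_mem_closedBall (by simp; exact b.rIn_pos.le)
    have h2 : B (π' 0) = 1 := B.one_of_mem_closedBall (by simp; exact B.rIn_pos.le)
    simp only [h1, h2]; norm_num
  · intro y hy
    by_cases h1 : r / 2 ≤ |ℓ y|
    · have : b (ℓ y) = 0 := b.zero_of_le_dist (by simpa using h1)
      simp [this]
    · have h2 : B (π' y) = 0 := B.zero_of_le_dist (by
        rw [dist_zero_right, hπ]
        have h3 : ‖ℓ y • e‖ = |ℓ y| := by rw [norm_smul, he, mul_one, Real.norm_eq_abs]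
        have h4 := norm_sub_norm_le y (ℓ y • e)
        change r / 2 ≤ _
        rw [h3] at h4
        push Not at h1
        linarith)
      simp [h2]

variable [MeasurableSpace E] [BorelSpace E] (μ : Measure E) [μ.IsAddHaarMeasure]

/-- Homotopy invariance of the degree integral, for maps agreeing near the boundary. -/
theorem integral_degree_eq [Nontrivial E] {Ω K : Set E} (hΩ : IsOpen Ω) (hb : Bornology.IsBounded Ω)
    (hK : IsClosed K) (hKΩ : K ⊆ Ω) {G H N : E → E} {η : E → ℝ} (hG : ContDiff ℝ 1 G)
    (hH : ContDiff ℝ 1 H) (hN : ContDiff ℝ 1 N) (hη : ∀ y, (fderiv ℝ N y).det = η y)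
    (hGH : ∀ x ∉ K, H x = G x) :
    ∫ x in Ω, (η (H x) * (fderiv ℝ H x).det - η (G x) * (fderiv ℝ G x).det) ∂μ = 0 := by
  obtain ⟨R, hR⟩ := hb.subset_ball (0 : E)
  let θ : ContDiffBump (0 : E) := ⟨|R| + 1, |R| + 2, by positivity, by linarith⟩
  have hθ1 : ContDiff ℝ 1 (θ : E → ℝ) := θ.contDiff
  have hdet : ∀ (P : E → E), ContDiff ℝ 1 P → ∀ x ∈ Ω,
      (fderiv ℝ (fun x => θ x • N (P x)) x).det = η (P x) * (fderiv ℝ P x).det := by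
    intro P hP x hx
    have h1 : (fun x => θ x • N (P x)) =ᶠ[nhds x] fun x => N (P x) := by
      filter_upwards [hΩ.mem_nhds hx] with y hy
      rw [θ.one_of_mem_closedBall, one_smul]
      have := hR hy
      simp only [Metric.mem_ball, Metric.mem_closedBall] at this ⊢
      have h2 := le_abs_self R
      change _ ≤ |R| + 1
      linarith
    rw [h1.fderiv_eq, fderiv_fun_comp x (hN.differentiable (by simp) _) (hP.differentiable (by simp) _)]
    rw [← hη]
    simp [ContinuousLinearMap.det]
  have hintg : ∀ (P : E → E), ContDiff ℝ 1 P →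
      Integrable (fun x => (fderiv ℝ (fun x => θ x • N (P x)) x).det) μ ∧
      ∫ x, (fderiv ℝ (fun x => θ x • N (P x)) x).det ∂μ = 0 := by
    intro P hP
    have h1 : ContDiff ℝ 1 (fun x => θ x • N (P x)) := hθ1.smul (hN.comp hP)
    have h2 : HasCompactSupport (fun x => θ x • N (P x)) := θ.hasCompactSupport.smul_right
    refine ⟨?_, integral_det_fderiv_eq_zero μ h1 h2⟩
    refine (clm_det_continuous.comp (h1.continuous_fderiv (by simp))).integrable_of_hasCompactSupport ?_
    refine HasCompactSupport.intro h2.isCompact fun x hx => ?_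
    have : (0 : E →L[ℝ] E).det = 0 := by simp [ContinuousLinearMap.det]
    rw [Function.comp_apply, fderiv_of_notMem_tsupport (𝕜 := ℝ) hx, this]
  have h1 : ∫ x in Ω, (η (H x) * (fderiv ℝ H x).det - η (G x) * (fderiv ℝ G x).det) ∂μ
      = ∫ x in Ω, ((fderiv ℝ (fun x => θ x • N (H x)) x).det -
          (fderiv ℝ (fun x => θ x • N (G x)) x).det) ∂μ := by
    refine setIntegral_congr_fun hΩ.measurableSet fun x hx => ?_
    simp only [hdet H hH x hx, hdet G hG x hx]
  rw [h1, setIntegral_eq_integral_of_forall_compl_eq_zero, integral_sub (hintg H hH).1 (hintg G hG).1,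
    (hintg H hH).2, (hintg G hG).2, sub_zero]
  intro x hx
  have hxK : Kᶜ ∈ nhds x := hK.isOpen_compl.mem_nhds fun h => hx (hKΩ h)
  have h2 : (fun x => θ x • N (H x)) =ᶠ[nhds x] fun x => θ x • N (G x) := by
    filter_upwards [hxK] with y hy
    rw [hGH y hy]
  rw [h2.fderiv_eq, sub_self]

end Degree2

section Degree3

variable {E : Type*} [NormedAddCommGroup E] [NormedSpace ℝ E] [FiniteDimensional ℝ E]

theorem exists_cutoff {s t : Set E} (hs : IsClosed s) (ht : IsClosed t) (hd : Disjoint s t) :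
    ∃ χ : E → ℝ, ContDiff ℝ (⊤ : ℕ∞) χ ∧ (∀ x ∈ s, x ∉ tsupport χ) ∧ (∀ᶠ x in nhdsSet t, χ x = 1) ∧
      ∀ x, χ x ∈ Icc (0:ℝ) 1 := by
  obtain ⟨f, h0, h1, hf⟩ := exists_contMDiffMap_zero_one_nhds_of_isClosed
    (modelWithCornersSelf ℝ E) hs ht hd (n := (⊤ : ℕ∞))
  refine ⟨f, f.contMDiff.contDiff, fun x hx => ?_, h1, hf⟩
  rw [notMem_tsupport_iff_eventuallyEq]
  exact h0.filter_mono (nhds_le_nhdsSet hx)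

theorem int_odd_sum_of_odd {α : Type*} (Z : Finset α) (f : α → ℤ) (hf : ∀ z ∈ Z, Odd (f z))
    (hZ : Odd Z.card) : Odd (∑ z ∈ Z, f z) := by
  rw [← ZMod.intCast_eq_one_iff_odd]
  push_cast
  rw [Finset.sum_congr rfl fun z hz => (ZMod.intCast_eq_one_iff_odd).2 (hf z hz)]
  simpa [ZMod.natCast_eq_one_iff_odd] using hZ

/-- Around a nondegenerate zero a `C¹` map is injective, with Jacobian of constant sign, and
covers a ball around `0`. -/
theorem exists_nhds_nondegenerate {F : E → E} (hF : ContDiff ℝ 1 F) {z : E} (hz : F z = 0)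
    (hd : (fderiv ℝ F z).det ≠ 0) {W : Set E} (hW : W ∈ nhds z) :
    ∃ U : Set E, IsOpen U ∧ z ∈ U ∧ U ⊆ W ∧ InjOn F U ∧
      (∀ x ∈ U, |(fderiv ℝ F x).det| = SignType.sign (fderiv ℝ F z).det * (fderiv ℝ F x).det) ∧
      ∃ δ > 0, Metric.ball (0:E) δ ⊆ F '' U := by
  have hs : HasStrictFDerivAt F (fderiv ℝ F z) z := hF.contDiffAt.hasStrictFDerivAt (by simp)
  let A := (fderiv ℝ F z).toContinuousLinearEquivOfDetNeZero hd
  have hs' : HasStrictFDerivAt F (A : E →L[ℝ] E) z := hs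
  obtain ⟨U₁, hU₁, hinj⟩ : ∃ U ∈ nhds z, InjOn F U := by
    let e := hs'.toOpenPartialHomeomorph F
    exact ⟨e.source, e.open_source.mem_nhds hs'.mem_toOpenPartialHomeomorph_source, e.injOn⟩
  have hc : Continuous fun x => (fderiv ℝ F x).det :=
    clm_det_continuous.comp (hF.continuous_fderiv (by simp))
  have hsgn : ∀ᶠ x in nhds z,
      |(fderiv ℝ F x).det| = SignType.sign (fderiv ℝ F z).det * (fderiv ℝ F x).det := by
    rcases lt_or_gt_of_ne hd with h | h
    · filter_upwards [hc.continuousAt.eventually (gt_mem_nhds h)] with x hx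
      rw [sign_neg h, abs_of_neg hx]; simp
    · filter_upwards [hc.continuousAt.eventually (lt_mem_nhds h)] with x hx
      rw [sign_pos h, abs_of_pos hx]; simp
  obtain ⟨U, hUsub, hUo, hzU⟩ := mem_nhds_iff.1 (Filter.inter_mem (Filter.inter_mem hW hU₁) hsgn)
  refine ⟨U, hUo, hzU, fun x hx => (hUsub hx).1.1, hinj.mono fun x hx => (hUsub hx).1.2,
    fun x hx => (hUsub hx).2, ?_⟩
  have : F '' U ∈ nhds (0:E) := by
    rw [← hz, ← hs'.map_nhds_eq_of_equiv]
    exact Filter.image_mem_map (hUo.mem_nhds hzU)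
  exact Metric.mem_nhds_iff.1 this

/-- A `C¹` map with an odd number of zeros in `Ω`, all nondegenerate, has no zero-free small
perturbation: otherwise the degree integral would be both an odd multiple of `∫ η` and zero. -/
theorem no_zero_free_perturbation [Nontrivial E] {Ω : Set E} (hΩ : IsOpen Ω)
    (hb : Bornology.IsBounded Ω) {F G : E → E} (hF : ContDiff ℝ 1 F) (hG : ContDiff ℝ 1 G)
    {ε : ℝ} (hε : 0 < ε) (hFG : ∀ x ∈ closure Ω, ‖F x - G x‖ ≤ ε)
    (hfr : ∀ x ∈ frontier Ω, 2 * ε < ‖F x‖) (hG0 : ∀ x ∈ closure Ω, G x ≠ 0)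
    (Z : Finset E) (hZ : ∀ x, x ∈ Z ↔ x ∈ Ω ∧ F x = 0)
    (hnd : ∀ x ∈ Z, (fderiv ℝ F x).det ≠ 0) (hodd : Odd Z.card) : False := by
  classical
  let _ : MeasurableSpace E := borel E
  have _ : BorelSpace E := ⟨rfl⟩
  let μ : Measure E := Measure.addHaar
  have hcl : IsCompact (closure Ω) := hb.isCompact_closure
  -- the cutoff
  have hclosedT : IsClosed (closure Ω ∩ {x | ‖F x‖ ≤ 2 * ε}) :=
    isClosed_closure.inter (isClosed_le hF.continuous.norm continuous_const)
  obtain ⟨χ, hχ, hχ0, hχ1, hχI⟩ := exists_cutoff (s := Ωᶜ) hΩ.isClosed_compl hclosedT (by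
    rw [Set.disjoint_left]
    rintro x hx ⟨hx1, hx2⟩
    have : x ∈ frontier Ω := by
      rw [hΩ.frontier_eq]; exact ⟨hx1, hx⟩
    exact absurd (hfr x this) (not_lt.2 hx2))
  have hχ' : ContDiff ℝ 1 χ := hχ.of_le (by exact_mod_cast le_top)
  have hKΩ : tsupport χ ⊆ Ω := fun x hx => by
    by_contra h; exact hχ0 x h hx
  let H : E → E := fun x => G x + χ x • (F x - G x)
  have hH : ContDiff ℝ 1 H := hG.add (hχ'.smul (hF.sub hG))
  have hHG : ∀ x ∉ tsupport χ, H x = G x := fun x hx => by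
    simp [H, image_eq_zero_of_notMem_tsupport hx]
  have hHF : ∀ x ∈ closure Ω, ‖F x‖ ≤ 2 * ε → H x = F x := fun x hx hx2 => by
    have : χ x = 1 := hχ1.self_of_nhdsSet x ⟨hx, hx2⟩
    simp [H, this]
  have hHbig : ∀ x ∈ closure Ω, 2 * ε < ‖F x‖ → ε ≤ ‖H x‖ := fun x hx hx2 => by
    have h1 : H x = F x - (1 - χ x) • (F x - G x) := by simp only [H]; module
    have h2 : ‖(1 - χ x) • (F x - G x)‖ ≤ ε := by
      rw [norm_smul]
      have h3 : ‖1 - χ x‖ ≤ 1 := by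
        rw [Real.norm_eq_abs, abs_le]; constructor <;> linarith [(hχI x).1, (hχI x).2]
      calc _ ≤ 1 * ε := by gcongr; exact hFG x hx
        _ = ε := one_mul _
    have h4 := norm_sub_norm_le (F x) ((1 - χ x) • (F x - G x))
    rw [h1]; linarith
  -- neighbourhoods of the zeros
  obtain ⟨D, hD, hDdisj⟩ := Z.finite_toSet.t2_separation
  have hex : ∀ z : E, ∃ U : Set E, z ∈ Z → IsOpen U ∧ z ∈ U ∧ U ⊆ Ω ∩ D z ∩ {x | ‖F x‖ < 2 * ε} ∧
      InjOn F U ∧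
      (∀ x ∈ U, |(fderiv ℝ F x).det| = SignType.sign (fderiv ℝ F z).det * (fderiv ℝ F x).det) ∧
      ∃ δ > 0, Metric.ball (0:E) δ ⊆ F '' U := by
    intro z
    by_cases hz : z ∈ Z
    · have h1 := (hZ z).1 hz
      obtain ⟨U, hU⟩ := exists_nhds_nondegenerate hF h1.2 (hnd z hz)
        (W := Ω ∩ D z ∩ {x | ‖F x‖ < 2 * ε}) (by
          refine Filter.inter_mem (Filter.inter_mem (hΩ.mem_nhds h1.1)
            ((hD z).2.mem_nhds (hD z).1)) ?_
          refine (isOpen_lt hF.continuous.norm continuous_const).mem_nhds ?_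
          simp [h1.2, hε])
      exact ⟨U, fun _ => hU⟩
    · exact ⟨∅, fun h => absurd h hz⟩
  choose U hU using hex
  have hδex : ∀ z : E, ∃ δ > 0, z ∈ Z → Metric.ball (0:E) δ ⊆ F '' U z := by
    intro z
    by_cases hz : z ∈ Z
    · obtain ⟨δ, h1, h2⟩ := (hU z hz).2.2.2.2.2
      exact ⟨δ, h1, fun _ => h2⟩
    · exact ⟨1, one_pos, fun h => absurd h hz⟩
  choose δ hδ0 hδ using hδex
  have hposmin : ∀ (g : E → E) (S : Set E), Continuous g → IsCompact S → (∀ x ∈ S, g x ≠ 0) →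
      ∃ r > 0, ∀ x ∈ S, r ≤ ‖g x‖ := by
    intro g S hg hS hne
    rcases S.eq_empty_or_nonempty with h | h
    · exact ⟨1, one_pos, by simp [h]⟩
    · obtain ⟨x, hx, hmin⟩ := hS.exists_isMinOn h hg.norm.continuousOn
      exact ⟨‖g x‖, norm_pos_iff.2 (hne x hx), fun y hy => hmin hy⟩
  have hUopen : IsOpen (⋃ z ∈ Z, U z) := isOpen_biUnion fun z hz => (hU z hz).1
  obtain ⟨r₁, hr₁, hr₁'⟩ := hposmin G (closure Ω) hG.continuous hcl hG0
  obtain ⟨r₂, hr₂, hr₂'⟩ := hposmin F (closure Ω \ ⋃ z ∈ Z, U z) hF.continuous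
    (hcl.diff hUopen) (by
      rintro x ⟨hx1, hx2⟩ hx0
      have hxΩ : x ∈ Ω := by
        by_contra h
        have := hfr x (by rw [hΩ.frontier_eq]; exact ⟨hx1, h⟩)
        rw [hx0, norm_zero] at this
        linarith
      have hxZ : x ∈ Z := (hZ x).2 ⟨hxΩ, hx0⟩
      exact hx2 (Set.mem_biUnion hxZ (hU x hxZ).2.1))
  have hZne : Z.Nonempty := Finset.card_pos.1 hodd.pos
  obtain ⟨r₃, hr₃, hr₃'⟩ : ∃ r > 0, ∀ z ∈ Z, r ≤ δ z := by
    obtain ⟨z, hz, hmin⟩ := Z.exists_min_image δ hZne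
    exact ⟨δ z, hδ0 z, hmin⟩
  let r := min (min r₁ r₂) (min r₃ ε)
  have hr : 0 < r := by simp [r, hr₁, hr₂, hr₃, hε]
  have hrr₁ : r ≤ r₁ := (min_le_left _ _).trans (min_le_left _ _)
  have hrr₂ : r ≤ r₂ := (min_le_left _ _).trans (min_le_right _ _)
  have hrr₃ : r ≤ r₃ := (min_le_right _ _).trans (min_le_left _ _)
  have hrε : r ≤ ε := (min_le_right _ _).trans (min_le_right _ _)
  obtain ⟨N, η, hN, hNη, hηc, hη0, hηpos, hηr⟩ := exists_map_det_bump (E := E) hr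
  have hinv := integral_degree_eq μ hΩ hb (isClosed_tsupport χ) hKΩ hG hH hN hNη hHG
  have hηcs : HasCompactSupport η := HasCompactSupport.intro (isCompact_closedBall (0:E) r)
    fun x hx => hηr x (by simp at hx; exact hx.le)
  have hIpos : 0 < ∫ y, η y ∂μ :=
    hηc.integral_pos_of_hasCompactSupport_nonneg_nonzero hηcs hη0 (ne_of_gt hηpos)
  -- the left-hand side is a signed count
  have hcount : ∫ x in Ω, (η (H x) * (fderiv ℝ H x).det - η (G x) * (fderiv ℝ G x).det) ∂μ
      = ∑ z ∈ Z, (SignType.sign (fderiv ℝ F z).det : ℝ) * ∫ y, η y ∂μ := by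
    have h1 : ∫ x in Ω, (η (H x) * (fderiv ℝ H x).det - η (G x) * (fderiv ℝ G x).det) ∂μ
        = ∫ x in Ω, η (H x) * (fderiv ℝ H x).det ∂μ := by
      refine setIntegral_congr_fun hΩ.measurableSet fun x hx => ?_
      have : η (G x) = 0 := hηr _ (hrr₁.trans (hr₁' x (subset_closure hx)))
      simp [this]
    have hUsub : (⋃ z ∈ Z, U z) ⊆ Ω := Set.iUnion₂_subset fun z hz x hx => ((hU z hz).2.2.1 hx).1.1
    have h2 : ∫ x in Ω, η (H x) * (fderiv ℝ H x).det ∂μ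
        = ∫ x in ⋃ z ∈ Z, U z, η (H x) * (fderiv ℝ H x).det ∂μ := by
      refine setIntegral_eq_of_subset_of_forall_sdiff_eq_zero hΩ.measurableSet hUsub ?_
      rintro x ⟨hx1, hx2⟩
      have hxc := subset_closure hx1
      have : η (H x) = 0 := by
        refine hηr _ ?_
        by_cases h : ‖F x‖ ≤ 2 * ε
        · rw [hHF x hxc h]; exact hrr₂.trans (hr₂' x ⟨hxc, hx2⟩)
        · exact hrε.trans (hHbig x hxc (not_le.1 h))
      simp [this]
    have hcontH : Continuous fun x => η (H x) * (fderiv ℝ H x).det :=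
      (hηc.comp hH.continuous).mul (clm_det_continuous.comp (hH.continuous_fderiv (by simp)))
    rw [h1, h2, integral_biUnion_finset Z (fun z hz => (hU z hz).1.measurableSet)
      (fun z hz z' hz' hzz' => (hDdisj hz hz' hzz').mono
        (fun x hx => ((hU z hz).2.2.1 hx).1.2) (fun x hx => ((hU z' hz').2.2.1 hx).1.2))
      (fun z hz => (hcontH.continuousOn.integrableOn_compact hcl).mono_set
        (fun x hx => subset_closure ((hU z hz).2.2.1 hx).1.1))]
    refine Finset.sum_congr rfl fun z hz => ?_
    obtain ⟨hUo, hzU, hUW, hUinj, hUsgn, -⟩ := hU z hz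
    have h3 : ∫ y, η y ∂μ = ∫ y in F '' U z, η y ∂μ := by
      refine (setIntegral_eq_integral_of_forall_compl_eq_zero fun y hy => ?_).symm
      refine hηr y ?_
      by_contra h
      refine hy (hδ z hz ?_)
      simp only [Metric.mem_ball, dist_zero_right]
      linarith [hr₃' z hz]
    rw [h3, integral_image_eq_integral_abs_det_fderiv_smul μ hUo.measurableSet
      (fun x _ => (hF.differentiable (by simp) x).hasFDerivAt.hasFDerivWithinAt) hUinj,
      ← integral_const_mul]
    refine setIntegral_congr_fun hUo.measurableSet fun x hx => ?_
    have h4 : H =ᶠ[nhds x] F := by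
      filter_upwards [hUo.mem_nhds hx] with y hy
      exact hHF y (subset_closure (hUW hy).1.1) (hUW hy).2.le
    have h5 : (SignType.sign (fderiv ℝ F z).det : ℝ) * SignType.sign (fderiv ℝ F z).det = 1 := by
      rcases lt_or_gt_of_ne (hnd z hz) with h | h
      · simp [sign_neg h]
      · simp [sign_pos h]
    simp only [smul_eq_mul]
    rw [h4.fderiv_eq, h4.eq_of_nhds, hUsgn x hx]
    linear_combination (-(fderiv ℝ F x).det * η (F x)) * h5
  rw [hcount, ← Finset.sum_mul] at hinv
  have hs0 : ∑ z ∈ Z, (SignType.sign (fderiv ℝ F z).det : ℤ) = 0 := by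
    have := (mul_eq_zero.1 hinv).resolve_right hIpos.ne'
    have h6 : ((∑ z ∈ Z, (SignType.sign (fderiv ℝ F z).det : ℤ) : ℤ) : ℝ) = 0 := by
      rw [← this]; push_cast
      exact Finset.sum_congr rfl fun z _ => by simp
    exact_mod_cast h6
  have : Odd (∑ z ∈ Z, (SignType.sign (fderiv ℝ F z).det : ℤ)) := by
    refine int_odd_sum_of_odd Z _ ?_ hodd
    · intro z hz
      rcases lt_or_gt_of_ne (hnd z hz) with h | h
      · simp [sign_neg h]
      · simp [sign_pos h]
  rw [hs0] at this
  exact absurd this (by decide)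

end Degree3

/-! ### A Borsuk–Ulam theorem for linear involutions with fixed vectors -/

section BorsukUlam

variable {E : Type*} [NormedAddCommGroup E] [NormedSpace ℝ E]

/-- For a linear involution `ι`, the operator `s²` on the fixed space and `s` on the
antifixed space. Replacing `s` by `-s` amounts to composing with `ι`. -/
def oddR (ι : E →L[ℝ] E) (s : ℝ) (e : E) : E := (s ^ 2 / 2) • (e + ι e) + (s / 2) • (e - ι e)

theorem oddR_neg {ι : E →L[ℝ] E} (hι : ∀ x, ι (ι x) = x) (s : ℝ) (e : E) :
    oddR ι (-s) e = ι (oddR ι s e) := by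
  simp only [oddR, map_add, map_sub, map_smul, hι]; module

theorem oddR_inv {ι : E →L[ℝ] E} (hι : ∀ x, ι (ι x) = x) {s : ℝ} (hs : s ≠ 0) (e : E) :
    oddR ι s⁻¹ (oddR ι s e) = e := by
  simp only [oddR, map_add, map_sub, map_smul, hι]
  match_scalars <;> field_simp <;> ring

theorem oddR_add (ι : E →L[ℝ] E) (s : ℝ) (e e' : E) :
    oddR ι s (e + e') = oddR ι s e + oddR ι s e' := by
  simp only [oddR, map_add]; module

theorem oddR_neg_right (ι : E →L[ℝ] E) (s : ℝ) (e : E) : oddR ι s (-e) = -oddR ι s e := by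
  simp only [oddR, map_neg]; module

theorem oddR_sub (ι : E →L[ℝ] E) (s : ℝ) (e e' : E) :
    oddR ι s (e - e') = oddR ι s e - oddR ι s e' := by
  simp only [oddR, map_sub]; module

/-- Parametric Sard: generic equivariant polynomial perturbations of `f` have only nondegenerate
zeros off the common kernel of the functionals `w j`. On `w j ≠ 0` the equation can be solved for
the parameter `p j`, so that bad parameters are critical values of a map between spaces of
equal dimension. -/
theorem exists_generic_perturbation [FiniteDimensional ℝ E] {d : ℕ} {ι : E →L[ℝ] E}
    (hι : ∀ x, ι (ι x) = x) (w : Fin d → E →L[ℝ] ℝ) {f : E → E} (hf : Differentiable ℝ f)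
    {O : Set (Fin d → E)} (hO : O ∈ nhds 0) :
    ∃ p ∈ O, ∀ x, (∃ j, w j x ≠ 0) → f x + ∑ i, oddR ι (w i x) (p i) = 0 →
      (fderiv ℝ (fun x => f x + ∑ i, oddR ι (w i x) (p i)) x).det ≠ 0 := by
  classical
  let _ : MeasurableSpace (Fin d → E) := borel _
  have _ : BorelSpace (Fin d → E) := ⟨rfl⟩
  let μ : Measure (Fin d → E) := Measure.addHaar
  let Ψ : Fin d → (Fin d → E) → (Fin d → E) := fun j q i => if i = j then
    - oddR ι (w j (q j))⁻¹ (f (q j) + ∑ i ∈ Finset.univ.erase j, oddR ι (w i (q j)) (q i)) else q i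
  have hdiff : ∀ j q, w j (q j) ≠ 0 → DifferentiableAt ℝ (Ψ j) q := by
    intro j q hq
    rw [differentiableAt_pi]
    intro i
    by_cases hij : i = j
    · simp only [Ψ, hij, if_true, oddR]
      have h1 : DifferentiableAt ℝ (fun q : Fin d → E => (w j (q j))⁻¹) q :=
        DifferentiableAt.inv (by fun_prop) hq
      have h2 : DifferentiableAt ℝ (fun q : Fin d → E => f (q j)) q :=
        DifferentiableAt.comp (g := f) q (hf (q j)) (differentiableAt_apply j q)
      fun_prop
    · simp only [Ψ, hij, if_false]
      exact differentiableAt_apply i q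
  let S : Fin d → Set (Fin d → E) := fun j => {q | w j (q j) ≠ 0 ∧ (fderiv ℝ (Ψ j) q).det = 0}
  have hnull : μ (⋃ j, Ψ j '' S j) = 0 := by
    rw [measure_iUnion_null_iff]
    intro j
    exact addHaar_image_eq_zero_of_det_fderivWithin_eq_zero μ
      (fun q hq => (hdiff j q hq.1).hasFDerivAt.hasFDerivWithinAt) (fun q hq => hq.2)
  obtain ⟨p, hpO, hp⟩ : ∃ p ∈ O, p ∉ ⋃ j, Ψ j '' S j := by
    by_contra! hcon
    have : μ O = 0 := measure_mono_null hcon hnull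
    exact (μ.measure_pos_of_mem_nhds hO).ne' this
  refine ⟨p, hpO, ?_⟩
  rintro x ⟨j, hj⟩ hx hdet
  set F : E → E := fun x => f x + ∑ i, oddR ι (w i x) (p i) with hF
  have hFd : Differentiable ℝ F := by
    intro y
    simp only [hF, oddR]
    fun_prop
  obtain ⟨v, hv0, hv⟩ := clm_exists_ker_of_det_eq_zero hdet
  refine hp (mem_iUnion.2 ⟨j, Function.update p j x, ⟨by simpa using hj, ?_⟩, ?_⟩)
  · by_contra hne
    -- the direction `v` in the slot `j` lies in the kernel
    have hΨ : ∀ t : ℝ, w j (x + t • v) ≠ 0 →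
        Ψ j (Function.update p j x + t • (Pi.single j v : Fin d → E)) =
          Function.update p j (p j - oddR ι (w j (x + t • v))⁻¹ (F (x + t • v))) := by
      intro t ht
      funext i
      by_cases hij : i = j
      · subst hij
        simp only [Ψ, if_true, Function.update_self, Pi.add_apply, Pi.smul_apply, Pi.single_eq_same]
        have h1 : ∑ k ∈ Finset.univ.erase i, oddR ι (w k (x + t • v))
            (Function.update p i x k + t • (Pi.single i v : Fin d → E) k)
            = ∑ k ∈ Finset.univ.erase i, oddR ι (w k (x + t • v)) (p k) := by
          refine Finset.sum_congr rfl fun k hk => ?_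
          have hk' : k ≠ i := Finset.ne_of_mem_erase hk
          simp [hk']
        rw [h1]
        have h2 : f (x + t • v) + ∑ k ∈ Finset.univ.erase i, oddR ι (w k (x + t • v)) (p k)
            = F (x + t • v) - oddR ι (w i (x + t • v)) (p i) := by
          simp only [hF]
          rw [← Finset.add_sum_erase _ _ (Finset.mem_univ i)]
          abel
        rw [h2, oddR_sub, oddR_inv hι ht]
        abel
      · simp [Ψ, hij]
    have hline : HasDerivAt (fun t : ℝ => x + t • v) v 0 := by
      simpa using ((hasDerivAt_id (0:ℝ)).smul_const v).const_add x
    have hFline : HasDerivAt (fun t : ℝ => F (x + t • v)) 0 0 := by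
      have h3 : HasFDerivAt F (fderiv ℝ F x) (x + (0:ℝ) • v) := by
        simpa using (hFd x).hasFDerivAt
      have := h3.comp_hasDerivAt (0:ℝ) hline
      rwa [hv] at this
    have hwline : DifferentiableAt ℝ (fun t : ℝ => (w j (x + t • v))⁻¹) 0 := by
      refine DifferentiableAt.inv (by fun_prop) ?_
      simpa using hj
    have hcomp : HasDerivAt (fun t : ℝ => oddR ι (w j (x + t • v))⁻¹ (F (x + t • v))) 0 0 := by
      have h5 : HasDerivAt (fun t : ℝ => ι (F (x + t • v))) 0 0 := by
        have h := ι.hasFDerivAt.comp_hasDerivAt (0:ℝ) hFline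
        rw [map_zero] at h
        exact h
      obtain ⟨a, ha⟩ : ∃ a, HasDerivAt (fun t : ℝ => (w j (x + t • v))⁻¹ ^ 2 / 2) a 0 :=
        ⟨_, ((hwline.pow 2).div_const 2).hasDerivAt⟩
      obtain ⟨b, hb⟩ : ∃ b, HasDerivAt (fun t : ℝ => (w j (x + t • v))⁻¹ / 2) b 0 :=
        ⟨_, (hwline.div_const 2).hasDerivAt⟩
      have h6 := (ha.smul (hFline.add h5)).add (hb.smul (hFline.sub h5))
      have hx' : F x = 0 := hx
      simp only [Pi.add_apply, Pi.sub_apply, zero_smul, add_zero, hx', map_zero, sub_zero,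
        smul_zero] at h6
      exact h6
    have hupd : HasDerivAt (fun t : ℝ => Ψ j (Function.update p j x + t • (Pi.single j v : Fin d → E))) 0 0 := by
      have h7 : HasDerivAt (fun t : ℝ =>
          Function.update p j (p j - oddR ι (w j (x + t • v))⁻¹ (F (x + t • v)))) 0 0 := by
        rw [hasDerivAt_pi]
        intro i
        by_cases hij : i = j
        · subst hij
          simpa using hcomp.const_sub (p i)
        · simpa [hij] using hasDerivAt_const (0:ℝ) (p i)
      refine h7.congr_of_eventuallyEq ?_
      have : ∀ᶠ t : ℝ in nhds 0, w j (x + t • v) ≠ 0 := by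
        have hc : ContinuousAt (fun t : ℝ => w j (x + t • v)) 0 := by fun_prop
        exact hc.eventually_ne (by simpa using hj)
      filter_upwards [this] with t ht using hΨ t ht
    have hlineq : HasDerivAt (fun t : ℝ => Function.update p j x + t • (Pi.single j v : Fin d → E))
        (Pi.single j v) 0 := by
      simpa using ((hasDerivAt_id (0:ℝ)).smul_const
        (Pi.single j v : Fin d → E)).const_add (Function.update p j x)
    have h8 : HasFDerivAt (Ψ j) (fderiv ℝ (Ψ j) (Function.update p j x))
        (Function.update p j x + (0:ℝ) • (Pi.single j v : Fin d → E)) := by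
      rw [zero_smul, add_zero]
      exact (hdiff j _ (by simpa using hj)).hasFDerivAt
    have h9' := h8.comp_hasDerivAt (0:ℝ) hlineq
    have h9 := HasDerivAt.unique h9' hupd
    obtain ⟨A, hA⟩ : ∃ A : (Fin d → E) ≃L[ℝ] (Fin d → E),
        (A : (Fin d → E) →L[ℝ] (Fin d → E)) = fderiv ℝ (Ψ j) (Function.update p j x) :=
      ⟨ContinuousLinearMap.toContinuousLinearEquivOfDetNeZero _ hne, rfl⟩
    rw [← hA] at h9
    have h10 : (Pi.single j v : Fin d → E) = 0 := by
      have : A (Pi.single j v) = 0 := h9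
      simpa using this
    exact hv0 (by simpa using congrFun h10 j)
  · funext i
    by_cases hij : i = j
    · subst hij
      simp only [Ψ, if_true, Function.update_self]
      have h1 : ∑ k ∈ Finset.univ.erase i, oddR ι (w k x) (Function.update p i x k)
          = ∑ k ∈ Finset.univ.erase i, oddR ι (w k x) (p k) := by
        refine Finset.sum_congr rfl fun k hk => ?_
        simp [Finset.ne_of_mem_erase hk]
      have h2 : f x + ∑ k ∈ Finset.univ.erase i, oddR ι (w k x) (p k)
          = - oddR ι (w i x) (p i) := by
        rw [← Finset.add_sum_erase _ _ (Finset.mem_univ i)] at hx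
        rw [eq_neg_iff_add_eq_zero, ← hx]
        abel
      rw [h1, h2, oddR_neg_right, oddR_inv hι hj, neg_neg]
    · simp [Ψ, hij]

end BorsukUlam

section BorsukUlamMain

variable {E : Type*} [NormedAddCommGroup E] [NormedSpace ℝ E]

theorem odd_card_of_involution {α : Type*} [DecidableEq α] (Z : Finset α) (ι : α → α) (a : α) (ha : a ∈ Z)
    (h1 : ∀ x ∈ Z, ι x ∈ Z) (h2 : ∀ x, ι (ι x) = x) (h3 : ∀ x ∈ Z, ι x = x → x = a)
    (h4 : ι a = a) : Odd Z.card := by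
  have h5 : Even (Z.erase a).card := by
    rw [← ZMod.natCast_eq_zero_iff_even]
    have : ∑ x ∈ Z.erase a, (1 : ZMod 2) = 0 := by
      refine Finset.sum_involution (fun x _ => ι x) (fun x _ => by decide) ?_ ?_ ?_
      · intro x hx _ hxx
        exact Finset.ne_of_mem_erase hx (h3 x (Finset.mem_of_mem_erase hx) hxx)
      · intro x hx
        refine Finset.mem_erase.2 ⟨fun h => Finset.ne_of_mem_erase hx ?_,
          h1 x (Finset.mem_of_mem_erase hx)⟩
        rw [← h2 x, h, h4]
      · intro x hx
        exact h2 x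
    simpa using this
  rw [← Finset.card_erase_add_one ha]
  exact h5.add_one

/-- An equivariant map which misses a direction `ℓ` must vanish on the boundary of a symmetric
neighbourhood of `0`, provided that `0` is its only zero in the fixed space and is nondegenerate
there: after an equivariant perturbation with nondegenerate zeros, the number of zeros is odd. -/
theorem exists_zero_frontier [FiniteDimensional ℝ E] {ι : E →L[ℝ] E}
    (hι : ∀ x, ι (ι x) = x) {f : E → E} (hf : ContDiff ℝ 1 f) (hfι : ∀ x, f (ι x) = ι (f x))
    {ℓ : E →L[ℝ] ℝ} {v : E} (hv : ℓ v = 1) (hℓf : ∀ x, ℓ (f x) = 0)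
    {Ω : Set E} (hΩ : IsOpen Ω) (hb : Bornology.IsBounded Ω) (h0 : 0 ∈ Ω)
    (hsym : ∀ x ∈ Ω, ι x ∈ Ω) (hf0 : f 0 = 0)
    (hfix : ∀ x ∈ closure Ω, ι x = x → f x = 0 → x = 0)
    (hd : ∀ v, ι v = v → fderiv ℝ f 0 v = 0 → v = 0) : ∃ x ∈ frontier Ω, f x = 0 := by
  classical
  by_contra! hcon
  have hnt : Nontrivial E := ⟨v, 0, by rintro rfl; simp at hv⟩
  have hK : IsCompact (closure Ω) := hb.isCompact_closure
  have hKf : IsCompact (frontier Ω) := hK.of_isClosed_subset isClosed_frontier frontier_subset_closure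
  obtain ⟨m, hm0, hm⟩ := hKf.exists_forall_le' (f := fun x => ‖f x‖) (a := 0)
    hf.continuous.norm.continuousOn (fun x hx => norm_pos_iff.2 (hcon x hx))
  obtain ⟨R, hR⟩ := hK.isBounded.exists_norm_le
  let πW : E →L[ℝ] E := (1/2 : ℝ) • (ContinuousLinearMap.id ℝ E - ι)
  have hπW : ∀ x, πW x = (1/2 : ℝ) • (x - ι x) := fun x => rfl
  have hπι : ∀ x, πW (ι x) = - πW x := by
    intro x; rw [hπW, hπW, hι]; module
  have hιπ : ∀ x, ι (πW x) = - πW x := by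
    intro x; rw [hπW]; simp only [map_smul, map_sub, hι]; module
  have hπ0 : ∀ x, πW x = 0 → ι x = x := by
    intro x hx
    rw [hπW, smul_eq_zero] at hx
    exact (sub_eq_zero.1 (hx.resolve_left (by norm_num))).symm
  -- the derivative at the origin commutes with `ι`
  have hDι : ∀ u, fderiv ℝ f 0 (ι u) = ι (fderiv ℝ f 0 u) := by
    have hfd : HasFDerivAt f (fderiv ℝ f 0) 0 := (hf.differentiable one_ne_zero 0).hasFDerivAt
    have h1 : HasFDerivAt (fun x => f (ι x)) ((fderiv ℝ f 0).comp ι) 0 := by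
      have hfd' : HasFDerivAt f (fderiv ℝ f 0) (ι 0) := by simpa using hfd
      exact hfd'.comp (0:E) ι.hasFDerivAt
    have h2 : HasFDerivAt (fun x => ι (f x)) (ι.comp (fderiv ℝ f 0)) 0 :=
      ι.hasFDerivAt.comp (0:E) hfd
    have h3 : (fun x => f (ι x)) = fun x => ι (f x) := funext hfι
    rw [h3] at h1
    intro u
    exact congrArg (fun A : E →L[ℝ] E => A u) (h1.unique h2)
  -- a small multiple of `πW` makes the derivative at the origin invertible
  obtain ⟨ε, hε0, hεs, hεe⟩ : ∃ ε : ℝ, 0 < ε ∧ (∀ x ∈ closure Ω, ‖ε • πW x‖ ≤ m / 16) ∧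
      ∀ u, fderiv ℝ f 0 u = (-ε) • u → u = 0 := by
    set δ : ℝ := m / (16 * (‖πW‖ * |R| + 1)) with hδ
    have hδ0 : 0 < δ := by positivity
    have hfin : {ε : ℝ | Module.End.HasEigenvalue ((fderiv ℝ f 0 : E →L[ℝ] E) : E →ₗ[ℝ] E) (-ε)}.Finite :=
      Set.Finite.preimage (f := fun ε : ℝ => -ε) neg_injective.injOn (Module.End.finite_hasEigenvalue _)
    obtain ⟨ε, hε, hε'⟩ := (Set.Ioo_infinite hδ0).exists_notMem_finite hfin
    refine ⟨ε, hε.1, ?_, ?_⟩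
    · intro x hx
      have h1 : ‖πW x‖ ≤ ‖πW‖ * |R| + 1 := by
        have := πW.le_opNorm x
        have h2 : ‖x‖ ≤ |R| := (hR x hx).trans (le_abs_self R)
        have := mul_le_mul_of_nonneg_left h2 (norm_nonneg πW)
        linarith
      rw [norm_smul, Real.norm_of_nonneg hε.1.le]
      have hε2 := hε.2.le
      calc ε * ‖πW x‖ ≤ δ * (‖πW‖ * |R| + 1) := by gcongr
        _ = m / 16 := by rw [hδ]; field_simp
    · intro u hu
      by_contra hu0
      exact hε' (Module.End.hasEigenvalue_of_hasEigenvector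
        (Module.End.hasEigenvector_iff.2 ⟨Module.End.mem_eigenspace_iff.2 hu, hu0⟩))
  let f1 : E → E := fun x => f x + ε • πW x
  have hf1 : ContDiff ℝ 1 f1 := by fun_prop
  let D1 : E →L[ℝ] E := fderiv ℝ f 0 + ε • πW
  have hf1d : HasFDerivAt f1 D1 0 :=
    (hf.differentiable one_ne_zero 0).hasFDerivAt.add (πW.hasFDerivAt.const_smul ε)
  have hD1 : ∀ u, D1 u = 0 → u = 0 := by
    intro u hu
    have hu' : fderiv ℝ f 0 u + ε • πW u = 0 := hu
    have h1 : fderiv ℝ f 0 (ι u) - ε • πW u = 0 := by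
      have := congrArg ι hu'
      rw [map_add, map_smul, ← hDι, hιπ, map_zero, smul_neg] at this
      rw [sub_eq_add_neg, this]
    have h2 : fderiv ℝ f 0 (πW u) = (-ε) • πW u := by
      have h3 : fderiv ℝ f 0 (πW u) = (1/2:ℝ) • (fderiv ℝ f 0 u - fderiv ℝ f 0 (ι u)) := by
        rw [hπW, map_smul, map_sub]
      rw [h3, eq_neg_of_add_eq_zero_left hu', sub_eq_zero.1 h1]; module
    have h4 := hεe _ h2
    rw [h4, smul_zero, add_zero] at hu'
    exact hd u (hπ0 u h4) hu'
  have hD1det : D1.det ≠ 0 := by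
    exact clm_det_ne_zero_of_injective hD1
  let b := Module.finBasis ℝ E
  let w : Fin (Module.finrank ℝ E) → E →L[ℝ] ℝ := fun j =>
    (LinearMap.toContinuousLinearMap (b.coord j)).comp πW
  have hw : ∀ j x, w j x = b.coord j (πW x) := fun j x => rfl
  have hwι : ∀ j x, w j (ι x) = - w j x := by intro j x; rw [hw, hw, hπι, map_neg]
  have hw0 : ∀ x, (¬ ∃ j, w j x ≠ 0) → ι x = x := by
    intro x hx
    push Not at hx
    exact hπ0 x (b.forall_coord_eq_zero_iff.1 hx)
  let Pt : (Fin (Module.finrank ℝ E) → E) → E → E := fun p x => ∑ i, oddR ι (w i x) (p i)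
  have hPtc : Continuous (fun z : (Fin (Module.finrank ℝ E) → E) × E => Pt z.1 z.2) := by
    simp only [Pt, oddR]
    fun_prop
  have hP1 : ∀ᶠ p in nhds (0 : Fin (Module.finrank ℝ E) → E), ∀ x ∈ closure Ω, ‖Pt p x‖ < m / 16 := by
    refine hK.eventually_forall_of_forall_eventually (P := fun p x => ‖Pt p x‖ < m / 16) ?_
    intro x hx
    have h1 : ‖Pt 0 x‖ < m / 16 := by
      simp only [Pt, oddR, Pi.zero_apply, map_zero, add_zero, sub_zero, smul_zero,
        Finset.sum_const_zero, norm_zero]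
      positivity
    exact (hPtc.norm.continuousAt (x := ((0, x) : _ × E))).eventually_lt_const h1
  let DP : (Fin (Module.finrank ℝ E) → E) → E →L[ℝ] E := fun p =>
    D1 + ∑ i, (w i).smulRight ((1/2:ℝ) • (p i - ι (p i)))
  have hP2 : ∀ᶠ p in nhds (0 : Fin (Module.finrank ℝ E) → E), (DP p).det ≠ 0 := by
    have hc : Continuous fun p => (DP p).det := by
      refine clm_det_continuous.comp ?_
      refine continuous_const.add (continuous_finsetSum _ fun i _ => ?_)
      exact ((ContinuousLinearMap.smulRightL ℝ E E (w i)).continuous).comp (by fun_prop)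
    have h1 : (DP 0).det ≠ 0 := by
      have : DP 0 = D1 := by simp [DP]
      rw [this]; exact hD1det
    exact hc.continuousAt.eventually_ne h1
  obtain ⟨p, hpO, hp⟩ := exists_generic_perturbation hι w (hf1.differentiable one_ne_zero)
    (hP1.and hP2)
  obtain ⟨hps, hpd⟩ := hpO
  set F : E → E := fun x => f1 x + ∑ i, oddR ι (w i x) (p i) with hF
  have hFC : ContDiff ℝ 1 F := by
    simp only [hF, oddR]
    fun_prop
  have hFd : HasFDerivAt F (DP p) 0 := by
    refine hf1d.add (HasFDerivAt.fun_sum fun i _ => ?_)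
    have hwi : HasFDerivAt (fun x => w i x) (w i) 0 := (w i).hasFDerivAt
    have h2 := (((hwi.pow 2).mul_const (1/2:ℝ)).smul_const (p i + ι (p i))).add
      ((hwi.mul_const (1/2:ℝ)).smul_const (p i - ι (p i)))
    refine (h2.congr_fderiv ?_).congr_of_eventuallyEq ?_
    · ext u
      simp
      module
    · filter_upwards with x
      simp [oddR, div_eq_mul_inv]
  have hFι : ∀ x, F (ι x) = ι (F x) := by
    intro x
    simp only [hF, f1, map_add, map_sum, hfι, map_smul, hπι, hιπ, hwι, oddR_neg hι]
  have hFf : ∀ x ∈ closure Ω, ‖F x - f x‖ ≤ m / 8 := by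
    intro x hx
    have h1 : F x - f x = ε • πW x + Pt p x := by simp only [hF, f1, Pt]; abel
    rw [h1]
    have h2 := norm_add_le (ε • πW x) (Pt p x)
    have h3 := hεs x hx
    have h4 := (hps x hx).le
    linarith
  have hFfr : ∀ x ∈ frontier Ω, m * (7/8) ≤ ‖F x‖ := by
    intro x hx
    have h1 := hFf x (frontier_subset_closure hx)
    have h2 := hm x hx
    have h3 := norm_sub_norm_le (f x) (F x)
    rw [norm_sub_rev] at h3
    linarith
  have hF0 : F 0 = 0 := by simp [hF, f1, hf0, oddR]
  have hFnd : ∀ x ∈ closure Ω, F x = 0 → (fderiv ℝ F x).det ≠ 0 := by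
    intro x hx hFx
    by_cases hj : ∃ j, w j x ≠ 0
    · exact hp x hj hFx
    · have hfx := hw0 x hj
      have hπx : πW x = 0 := by rw [hπW, hfx, sub_self, smul_zero]
      have : f x = 0 := by
        have h5 : F x = f x := by simp [hF, f1, oddR, hw, hπx]
        rw [← h5, hFx]
      have hx0 := hfix x hx hfx this
      rw [hx0, hFd.fderiv]
      exact hpd
  have hmem : ∀ x ∈ closure Ω, F x = 0 → x ∈ Ω := by
    intro x hx hFx
    by_contra hxn
    have h1 : x ∈ frontier Ω := by rw [hΩ.frontier_eq]; exact ⟨hx, hxn⟩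
    have := hFfr x h1
    rw [hFx, norm_zero] at this
    nlinarith
  have hSc : IsCompact (closure Ω ∩ F ⁻¹' {0}) :=
    hK.inter_right (isClosed_singleton.preimage hFC.continuous)
  have hiso : ∀ x ∈ closure Ω ∩ F ⁻¹' {0}, ∃ U ∈ nhds x, InjOn F U := by
    intro x hx
    obtain ⟨U, hU, hxU, -, hinj, -⟩ := exists_nhds_nondegenerate hFC hx.2 (hFnd x hx.1 hx.2)
      (Filter.univ_mem : univ ∈ nhds x)
    exact ⟨U, hU.mem_nhds hxU, hinj⟩
  have hfin : (closure Ω ∩ F ⁻¹' {0}).Finite := by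
    choose! U hU hinj using hiso
    obtain ⟨t, ht, hcov⟩ := hSc.elim_nhds_subcover U hU
    refine t.finite_toSet.subset fun y hy => ?_
    obtain ⟨x, hxt, hyx⟩ := mem_iUnion₂.1 (hcov hy)
    have := hinj x (ht x hxt) hyx (mem_of_mem_nhds (hU x (ht x hxt))) (hy.2.trans (ht x hxt).2.symm)
    rw [this]; exact hxt
  have hZ : ∀ x, x ∈ hfin.toFinset ↔ x ∈ Ω ∧ F x = 0 := by
    intro x
    rw [Set.Finite.mem_toFinset]
    exact ⟨fun h => ⟨hmem x h.1 h.2, h.2⟩, fun h => ⟨subset_closure h.1, h.2⟩⟩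
  have hodd : Odd hfin.toFinset.card := by
    refine odd_card_of_involution _ ι 0 ((hZ 0).2 ⟨h0, hF0⟩) ?_ hι ?_ (map_zero ι)
    · intro x hx
      rw [hZ] at hx ⊢
      exact ⟨hsym x hx.1, by rw [hFι, hx.2, map_zero]⟩
    · intro x hx hxx
      rw [hZ] at hx
      have hπx : πW x = 0 := by rw [hπW, hxx, sub_self, smul_zero]
      have h5 : F x = f x := by simp [hF, f1, oddR, hw, hπx]
      exact hfix x (subset_closure hx.1) hxx (h5 ▸ hx.2)
  set ε' : ℝ := m / (16 * (‖v‖ + 1)) with hε'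
  have hε'0 : 0 < ε' := by positivity
  refine no_zero_free_perturbation hΩ hb hFC (G := fun x => f x + ε' • v) (by fun_prop)
    (ε := m / 4) (by positivity) ?_ ?_ ?_ hfin.toFinset hZ ?_ hodd
  · intro x hx
    have h1 : ‖ε' • v‖ ≤ m / 16 := by
      rw [norm_smul, Real.norm_of_nonneg hε'0.le]
      calc ε' * ‖v‖ ≤ ε' * (‖v‖ + 1) := by gcongr; linarith
        _ = m / 16 := by rw [hε']; field_simp
    have h2 := norm_sub_le (F x - f x) (ε' • v)
    have h3 : F x - f x - ε' • v = F x - (f x + ε' • v) := by abel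
    rw [h3] at h2
    have := hFf x hx
    linarith
  · intro x hx
    have := hFfr x hx
    linarith
  · intro x hx hG
    have := congrArg ℓ hG
    simp only [map_add, map_smul, hℓf, hv, map_zero, zero_add, smul_eq_mul, mul_one] at this
    exact hε'0.ne' this
  · intro x hx
    rw [hZ] at hx
    exact hFnd x (subset_closure hx.1) hx.2

end BorsukUlamMain

/-! ### A finite-dimensional linking theorem for gradient maps -/

section Linking

variable {E : Type*} [NormedAddCommGroup E] [NormedSpace ℝ E]
variable {V : Type*} [NormedAddCommGroup V] [InnerProductSpace ℝ V]

/-- Mean value theorem along a segment for a function with gradient `G`. -/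
theorem exists_inner_grad {Φ : V → ℝ} {G : V → V} (hΦ : ∀ x, HasFDerivAt Φ (innerSL ℝ (G x)) x)
    (x h : V) : ∃ t ∈ Ioo (0:ℝ) 1, Φ (x + h) - Φ x = inner ℝ (G (x + t • h)) h := by
  have hd : ∀ t : ℝ, HasDerivAt (fun t : ℝ => Φ (x + t • h)) (inner ℝ (G (x + t • h)) h) t := by
    intro t
    have h1 : HasDerivAt (fun t : ℝ => x + t • h) h t := by
      simpa using ((hasDerivAt_id t).smul_const h).const_add x
    have h2 := (hΦ (x + t • h)).comp_hasDerivAt t h1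
    rw [innerSL_apply_apply] at h2
    exact h2
  obtain ⟨t, ht, hteq⟩ := exists_hasDerivAt_eq_slope (fun t : ℝ => Φ (x + t • h)) _ zero_lt_one
    (fun t _ => (hd t).continuousAt.continuousWithinAt) (fun t _ => hd t)
  refine ⟨t, ht, ?_⟩
  rw [hteq]
  simp

theorem grad_step {Φ : V → ℝ} {G : V → V} (hΦ : ∀ x, HasFDerivAt Φ (innerSL ℝ (G x)) x)
    {Λ η : ℝ} (hΛ : ∀ x y, ‖G x - G y‖ ≤ Λ * ‖x - y‖) (hη : 0 < η) (hΛη : η * Λ ≤ 1 / 2) (x : V) :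
    Φ (x - η • G x) ≤ Φ x - η / 2 * ‖G x‖ ^ 2 := by
  obtain ⟨t, ht, h⟩ := exists_inner_grad hΦ x (-(η • G x))
  rw [← sub_eq_add_neg] at h
  set y := x + t • -(η • G x) with hy
  have h1 : ‖y - x‖ ≤ η * ‖G x‖ := by
    have : y - x = -((t * η) • G x) := by rw [hy]; module
    rw [this, norm_neg, norm_smul, Real.norm_of_nonneg (by nlinarith [ht.1])]
    have := norm_nonneg (G x)
    nlinarith [mul_nonneg hη.le this, ht.2]
  have h2 : inner ℝ (G y) (-(η • G x)) = -(η * ‖G x‖ ^ 2) - η * inner ℝ (G y - G x) (G x) := by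
    rw [inner_neg_right, inner_smul_right, inner_sub_left, real_inner_self_eq_norm_sq]; ring
  have h3 : |inner ℝ (G y - G x) (G x)| ≤ 1 / 2 * ‖G x‖ ^ 2 := by
    refine (abs_real_inner_le_norm _ _).trans ?_
    by_cases hL : 0 ≤ Λ
    · have h4 : ‖G y - G x‖ ≤ Λ * (η * ‖G x‖) :=
        (hΛ y x).trans (mul_le_mul_of_nonneg_left h1 hL)
      have := norm_nonneg (G x)
      calc ‖G y - G x‖ * ‖G x‖ ≤ Λ * (η * ‖G x‖) * ‖G x‖ := by gcongr
        _ = (η * Λ) * ‖G x‖ ^ 2 := by ring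
        _ ≤ 1 / 2 * ‖G x‖ ^ 2 := by gcongr
    · have h4 : ‖G y - G x‖ ≤ 0 :=
        (hΛ y x).trans (mul_nonpos_of_nonpos_of_nonneg (not_le.1 hL).le (norm_nonneg _))
      have : ‖G y - G x‖ = 0 := le_antisymm h4 (norm_nonneg _)
      rw [this, zero_mul]; positivity
  rw [h2] at h
  have h5 := (abs_le.1 h3).1
  nlinarith

theorem abs_sub_le_of_grad {Φ : V → ℝ} {G : V → V} (hΦ : ∀ x, HasFDerivAt Φ (innerSL ℝ (G x)) x)
    {Λ : ℝ} (hΛ0 : 0 ≤ Λ) (hΛ : ∀ x y, ‖G x - G y‖ ≤ Λ * ‖x - y‖) (hG0 : G 0 = 0) {x y : V} {ρ : ℝ}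
    (hx : ‖x‖ ≤ ρ) (hy : ‖y‖ ≤ ρ) : |Φ y - Φ x| ≤ Λ * ρ * ‖y - x‖ := by
  obtain ⟨t, ht, h⟩ := exists_inner_grad hΦ x (y - x)
  rw [add_sub_cancel] at h
  rw [h]
  refine (abs_real_inner_le_norm _ _).trans ?_
  have h1 : ‖x + t • (y - x)‖ ≤ ρ := by
    have h2 : x + t • (y - x) = (1 - t) • x + t • y := by module
    rw [h2]
    refine (norm_add_le _ _).trans ?_
    rw [norm_smul, norm_smul, Real.norm_of_nonneg ht.1.le, Real.norm_of_nonneg (by linarith [ht.2])]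
    nlinarith [ht.1, ht.2]
  have h2 := hΛ (x + t • (y - x)) 0
  rw [hG0, sub_zero, sub_zero] at h2
  gcongr
  exact h2.trans (by gcongr)

set_option maxHeartbeats 800000 in
/-- A linking theorem with symmetry. The space `E` is pushed by the descent map `x ↦ x - η G x` below
the level of a small sphere in `ker p`; the Borsuk–Ulam theorem says that it nevertheless
has to meet that sphere. -/
theorem no_linking [FiniteDimensional ℝ E] [FiniteDimensional ℝ V] {Φ : V → ℝ} {G : V → V}
    (hΦ : ∀ x, HasFDerivAt Φ (innerSL ℝ (G x)) x) (hG : ContDiff ℝ 1 G)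
    {Λ : ℝ} (hΛ0 : 0 < Λ) (hΛ : ∀ x y, ‖G x - G y‖ ≤ Λ * ‖x - y‖)
    {ιV : V →L[ℝ] V} (hιV : ∀ x, ‖ιV x‖ = ‖x‖) (hGι : ∀ x, G (ιV x) = ιV (G x))
    {ιE : E →L[ℝ] E} (hιE : ∀ x, ιE (ιE x) = x)
    {j : E →L[ℝ] V} (hj : Function.Injective j) (hjι : ∀ x, j (ιE x) = ιV (j x))
    {p : V →L[ℝ] E} (hpι : ∀ x, p (ιV x) = ιE (p x))
    {ℓ : E →L[ℝ] ℝ} {v₀ : E} (hv₀ : ℓ v₀ = 1) (hℓ : ∀ x, ℓ (p x) = 0)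
    (hΦ0 : Φ 0 = 0) (hG0 : G 0 = 0) {κ C : ℝ} (hκ : 0 < κ) (hcoer : ∀ x, κ * ‖x‖ - C ≤ ‖G x‖)
    (hcrit : ∀ x, G x = 0 → 0 ≤ Φ x → x = 0) {B : ℝ} (hB : ∀ x, Φ (j x) ≤ B)
    (hfix : ∀ x, ιE x = x → Φ (j x) ≤ 0) {c r : ℝ} (hc : 0 < c) (hr : 0 < r)
    (hpos : ∀ x, p x = 0 → ‖x‖ ≤ r → c * ‖x‖ ^ 2 ≤ Φ x) : False := by
  set η : ℝ := 1 / (2 * Λ) with hηdef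
  have hη : 0 < η := by positivity
  have hΛη : η * Λ ≤ 1 / 2 := by rw [hηdef]; field_simp; rfl
  set D : V → V := fun x => x - η • G x with hD
  have hDC : ContDiff ℝ 1 D := by fun_prop
  have hD0 : D 0 = 0 := by simp [hD, hG0]
  have hDstep : ∀ x, Φ (D x) ≤ Φ x - η / 2 * ‖G x‖ ^ 2 := grad_step hΦ hΛ hη hΛη
  have hDle : ∀ x, Φ (D x) ≤ Φ x := fun x => (hDstep x).trans (by
    have := norm_nonneg (G x); nlinarith [sq_nonneg ‖G x‖])
  have hDι : ∀ x, D (ιV x) = ιV (D x) := by intro x; simp [hD, hGι]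
  have hDlow : ∀ x, 1 / 2 * ‖x‖ ≤ ‖D x‖ := by
    intro x
    have h1 := hΛ x 0
    rw [hG0, sub_zero, sub_zero] at h1
    have h2 := norm_sub_norm_le x (η • G x)
    rw [norm_smul, Real.norm_of_nonneg hη.le] at h2
    have h3 : η * ‖G x‖ ≤ 1 / 2 * ‖x‖ := by
      calc η * ‖G x‖ ≤ η * (Λ * ‖x‖) := by gcongr
        _ = (η * Λ) * ‖x‖ := by ring
        _ ≤ _ := by gcongr
    simp only [hD]
    linarith
  have hα : 0 < c * r ^ 2 := by positivity
  -- on the super-level set the gradient is bounded away from zero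
  obtain ⟨κ₀, hκ₀, hκ₀'⟩ : ∃ κ₀ > 0, ∀ x, c * r ^ 2 ≤ Φ x → κ₀ ≤ ‖G x‖ := by
    have hΦc : Continuous Φ := continuous_iff_continuousAt.2 fun x => (hΦ x).continuousAt
    have hS : IsCompact (Metric.closedBall (0:V) ((C + 1) / κ) ∩ {x | c * r ^ 2 ≤ Φ x}) :=
      (isCompact_closedBall _ _).inter_right (isClosed_le continuous_const hΦc)
    obtain ⟨κ₁, hκ₁, h⟩ := hS.exists_forall_le' (f := fun x => ‖G x‖) (a := 0)
      hG.continuous.norm.continuousOn (fun x hx => norm_pos_iff.2 fun h => by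
        have h1 := hcrit x h (hα.le.trans hx.2)
        have h2 : c * r ^ 2 ≤ Φ x := hx.2
        rw [h1, hΦ0] at h2
        linarith)
    refine ⟨min 1 κ₁, lt_min one_pos hκ₁, fun x hx => ?_⟩
    by_cases hxs : ‖x‖ ≤ (C + 1) / κ
    · exact (min_le_right _ _).trans (h x ⟨by simpa using hxs, hx⟩)
    · refine (min_le_left _ _).trans (le_trans ?_ (hcoer x))
      have := (div_lt_iff₀ hκ).1 (not_le.1 hxs)
      linarith
  obtain ⟨M, hM⟩ := exists_nat_gt ((B - c * r ^ 2) / (η / 2 * κ₀ ^ 2))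
  rw [div_lt_iff₀ (by positivity)] at hM
  have hiter : ∀ k x, Φ (D^[k] x) ≤ Φ x := by
    intro k x
    induction k with
    | zero => simp
    | succ k ih => rw [Function.iterate_succ_apply']; exact (hDle _).trans ih
  have hiter2 : ∀ (k : ℕ) x, c * r ^ 2 ≤ Φ (D^[k] x) → Φ (D^[k] x) ≤ Φ x - k * (η / 2 * κ₀ ^ 2) := by
    intro k x
    induction k with
    | zero => simp
    | succ k ih =>
      rw [Function.iterate_succ_apply']
      intro hk
      have h1 := hk.trans (hDle _)
      have h2 := hDstep (D^[k] x)
      have h3 := hκ₀' _ h1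
      have h4 : κ₀ ^ 2 ≤ ‖G (D^[k] x)‖ ^ 2 := by gcongr
      have h5 := ih h1
      push_cast
      nlinarith
  have hlev : ∀ x, Φ (D^[M] (j x)) < c * r ^ 2 := by
    intro x
    by_contra! hcon
    have h1 := hiter2 M (j x) hcon
    have := hB x
    linarith
  have hiterlow : ∀ k x, (1 / 2 : ℝ) ^ k * ‖x‖ ≤ ‖D^[k] x‖ := by
    intro k x
    induction k with
    | zero => simp
    | succ k ih =>
      rw [Function.iterate_succ_apply', pow_succ]
      have := hDlow (D^[k] x)
      linarith
  have hiterι : ∀ k x, D^[k] (ιV x) = ιV (D^[k] x) := by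
    intro k x
    induction k with
    | zero => simp
    | succ k ih => rw [Function.iterate_succ_apply', Function.iterate_succ_apply', ih, hDι]
  have hiterC : ∀ k, ContDiff ℝ 1 D^[k] := by
    intro k
    induction k with
    | zero => exact contDiff_id
    | succ k ih => rw [Function.iterate_succ']; exact hDC.comp ih
  have hiter0 : ∀ k, D^[k] 0 = 0 := fun k => Function.iterate_fixed hD0 k
  obtain ⟨cj, hcj0, hcj⟩ : ∃ cj > 0, ∀ x, cj * ‖x‖ ≤ ‖j x‖ := by
    obtain ⟨K, hK, h⟩ := (j : E →ₗ[ℝ] V).exists_antilipschitzWith (LinearMap.ker_eq_bot.2 hj)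
    refine ⟨(K:ℝ)⁻¹, by positivity, fun x => ?_⟩
    have := h.le_mul_norm (map_zero _) x
    rw [inv_mul_le_iff₀ (by exact_mod_cast hK)]
    exact this
  set H : E → V := fun x => D^[M] (j x) with hH
  have hHC : ContDiff ℝ 1 H := (hiterC M).comp j.contDiff
  have hH0 : H 0 = 0 := by simp [hH, hiter0]
  set c' : ℝ := (1/2) ^ M * cj with hc'
  have hc'0 : 0 < c' := by positivity
  have hHlow : ∀ x, c' * ‖x‖ ≤ ‖H x‖ := by
    intro x
    have h1 := hiterlow M (j x)
    have h2 := hcj x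
    calc c' * ‖x‖ = (1/2) ^ M * (cj * ‖x‖) := by rw [hc']; ring
      _ ≤ (1/2) ^ M * ‖j x‖ := by gcongr
      _ ≤ _ := h1
  have hHι : ∀ x, H (ιE x) = ιV (H x) := by intro x; simp only [hH, hjι, hiterι]
  have hHc : Continuous fun x => ‖H x‖ := hHC.continuous.norm
  have key : ∃ x ∈ frontier {x | ‖H x‖ < r}, p (H x) = 0 := by
    refine exists_zero_frontier hιE (f := fun x => p (H x)) (p.contDiff.comp hHC)
      (fun x => by rw [hHι, hpι]) hv₀ (fun x => hℓ _) (Ω := {x | ‖H x‖ < r})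
      (isOpen_lt hHc continuous_const) ?_ ?_ ?_ (by simp [hH0]) ?_ ?_
    · refine (Metric.isBounded_closedBall (x := (0:E)) (r := r / c')).subset fun x hx => ?_
      rw [mem_closedBall_zero_iff, le_div_iff₀ hc'0, mul_comm]
      exact (hHlow x).trans (le_of_lt hx)
    · simp [hH0, hr]
    · intro x hx
      simpa [hHι, hιV] using hx
    · intro x hx hxx hpx
      have h1 : ‖H x‖ ≤ r := closure_lt_subset_le hHc continuous_const hx
      have h2 := hpos (H x) hpx h1
      have h3 : Φ (H x) ≤ 0 := (hiter M (j x)).trans (hfix x hxx)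
      have h4 : ‖H x‖ = 0 := by
        have : ‖H x‖ ^ 2 ≤ 0 := by nlinarith
        exact pow_eq_zero_iff two_ne_zero |>.1 (le_antisymm this (by positivity))
      have h5 := hHlow x
      rw [h4] at h5
      have : ‖x‖ ≤ 0 := by nlinarith
      exact norm_le_zero_iff.1 this
    · intro v hv hdv
      by_contra hv0
      set y : V := fderiv ℝ H 0 v with hy
      have hHd : HasFDerivAt H (fderiv ℝ H 0) 0 := (hHC.differentiable one_ne_zero 0).hasFDerivAt
      have hpy : p y = 0 := by
        have h1 : HasFDerivAt (fun x => p (H x)) (p.comp (fderiv ℝ H 0)) 0 :=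
          p.hasFDerivAt.comp (0:E) hHd
        rw [h1.fderiv] at hdv
        exact hdv
      have hlim : HasDerivAt (fun t : ℝ => H (t • v)) y 0 := by
        have h1 : HasDerivAt (fun t : ℝ => t • v) v 0 := by
          simpa using (hasDerivAt_id (0:ℝ)).smul_const v
        have h2 : HasFDerivAt H (fderiv ℝ H 0) ((0:ℝ) • v) := by simpa using hHd
        exact h2.comp_hasDerivAt (0:ℝ) h1
      have happ : ∀ δ > 0, ∀ᶠ t : ℝ in nhdsWithin 0 (Ioi 0), ‖H (t • v) - t • y‖ ≤ δ * t := by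
        intro δ hδ
        have h1 := (hasDerivAt_iff_isLittleO_nhds_zero.1 hlim).def hδ
        have h2 := h1.filter_mono (nhdsWithin_le_nhds (s := Ioi 0))
        filter_upwards [h2, self_mem_nhdsWithin] with t ht ht0
        have ht0' : (0:ℝ) < t := ht0
        simpa [hH0, Real.norm_of_nonneg ht0'.le] using ht
      have hypos : 0 < ‖y‖ := by
        by_contra hcon
        have hy0 : y = 0 := norm_le_zero_iff.1 (not_lt.1 hcon)
        have hvp : 0 < ‖v‖ := norm_pos_iff.2 hv0
        obtain ⟨t, ht, ht0⟩ := ((happ (c' * ‖v‖ / 2) (by positivity)).and self_mem_nhdsWithin).exists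
        have ht0' : (0:ℝ) < t := ht0
        have h3 := hHlow (t • v)
        rw [norm_smul, Real.norm_of_nonneg ht0'.le] at h3
        rw [hy0, smul_zero, sub_zero] at ht
        nlinarith [mul_pos (mul_pos hc'0 hvp) ht0']
      set δ : ℝ := min ‖y‖ (c * ‖y‖ / (4 * Λ)) with hδ
      have hδ0 : 0 < δ := lt_min hypos (by positivity)
      have hsmall : ∀ᶠ t : ℝ in nhdsWithin 0 (Ioi 0), ‖t • y‖ ≤ r := by
        have hc : ContinuousAt (fun t : ℝ => ‖t • y‖) 0 := by fun_prop
        have := (hc.eventually_lt_const (u := r) (by simpa using hr)).filter_mono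
          (nhdsWithin_le_nhds (s := Ioi 0))
        filter_upwards [this] with t ht using ht.le
      obtain ⟨t, ⟨ht, hts⟩, ht0⟩ := (((happ δ hδ0).and hsmall).and self_mem_nhdsWithin).exists
      have ht0' : (0:ℝ) < t := ht0
      have h1 := hpos (t • y) (by rw [map_smul, hpy, smul_zero]) hts
      have hty : ‖t • y‖ = t * ‖y‖ := by rw [norm_smul, Real.norm_of_nonneg ht0'.le]
      have h2 : Φ (H (t • v)) ≤ 0 :=
        (hiter M (j (t • v))).trans (hfix _ (by rw [map_smul, hv]))
      have hHt : ‖H (t • v)‖ ≤ t * (‖y‖ + δ) := by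
        have := norm_add_le (H (t • v) - t • y) (t • y)
        rw [sub_add_cancel, hty] at this
        linarith
      have h3 := abs_sub_le_of_grad hΦ hΛ0.le hΛ hG0 (x := H (t • v)) (y := t • y) hHt
        (by rw [hty]; nlinarith)
      rw [norm_sub_rev] at h3
      have h4 : Λ * (t * (‖y‖ + δ)) * ‖H (t • v) - t • y‖ ≤ Λ * (t * (‖y‖ + δ)) * (δ * t) := by gcongr
      have h5 := (abs_le.1 h3).2
      rw [hty] at h1
      have hδ1 : δ ≤ ‖y‖ := min_le_left _ _
      have hδ2 : δ * (4 * Λ) ≤ c * ‖y‖ := by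
        rw [← le_div_iff₀ (by positivity)]; exact min_le_right _ _
      have h6 : c * ‖y‖ ^ 2 ≤ Λ * (‖y‖ + δ) * δ := by
        have : t ^ 2 * (c * ‖y‖ ^ 2) ≤ t ^ 2 * (Λ * (‖y‖ + δ) * δ) := by linarith
        exact le_of_mul_le_mul_left this (by positivity)
      have h7 : Λ * (‖y‖ + δ) * δ ≤ Λ * (2 * ‖y‖) * δ := by gcongr; linarith
      have h8 : Λ * (2 * ‖y‖) * δ ≤ c * ‖y‖ ^ 2 / 2 := by
        calc Λ * (2 * ‖y‖) * δ = δ * (4 * Λ) * ‖y‖ / 2 := by ring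
          _ ≤ c * ‖y‖ * ‖y‖ / 2 := by gcongr
          _ = c * ‖y‖ ^ 2 / 2 := by ring
      linarith [mul_pos hc (pow_pos hypos 2)]
  obtain ⟨x, hx, hx0⟩ := key
  have h1 : ‖H x‖ = r := frontier_lt_subset_eq hHc continuous_const hx
  have h2 := hpos (H x) hx0 h1.le
  rw [h1] at h2
  exact absurd (hlev x) (not_lt.2 h2)

end Linking

/-! ### Fourier series of loops -/

section FourierTools

/-- The character `t ↦ exp (2πimt)`. -/
def eC (m : ℤ) (t : ℝ) : ℂ := Complex.exp (((2 * π * m * t : ℝ) : ℂ) * Complex.I)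

theorem eC_continuous (m : ℤ) : Continuous (eC m) := by unfold eC; fun_prop

theorem norm_eC (m : ℤ) (t : ℝ) : ‖eC m t‖ = 1 := by
  unfold eC; exact Complex.norm_exp_ofReal_mul_I _

theorem eC_zero (t : ℝ) : eC 0 t = 1 := by simp [eC]

theorem eC_zero_right (m : ℤ) : eC m 0 = 1 := by simp [eC]

theorem eC_add (m k : ℤ) (t : ℝ) : eC (m + k) t = eC m t * eC k t := by
  unfold eC; rw [← Complex.exp_add]; congr 1; push_cast; ring

theorem conj_eC (m : ℤ) (t : ℝ) : (starRingEnd ℂ) (eC m t) = eC (-m) t := by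
  unfold eC; rw [← Complex.exp_conj]; congr 1
  rw [map_mul, Complex.conj_ofReal, Complex.conj_I]; push_cast; ring

theorem eC_int (m k : ℤ) : eC m k = 1 := by
  unfold eC
  rw [Complex.exp_eq_one_iff]
  exact ⟨m * k, by push_cast; ring⟩

theorem eC_add_right (m : ℤ) (t s : ℝ) : eC m (t + s) = eC m t * eC m s := by
  unfold eC; rw [← Complex.exp_add]; congr 1; push_cast; ring

theorem eC_add_one (m : ℤ) (t : ℝ) : eC m (t + 1) = eC m t := by
  have := eC_int m 1
  rw [eC_add_right]
  simp only [Int.cast_one] at this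
  rw [this, mul_one]

/-- The sign `(-1)^m` by which a half period shift acts on the mode `m`. -/
def sgnC (m : ℤ) : ℝ := ((Int.negOnePow m : ℤˣ) : ℤ)

theorem sgnC_mul_self (m : ℤ) : sgnC m * sgnC m = 1 := by
  unfold sgnC
  have : ((Int.negOnePow m : ℤˣ) : ℤ) * ((Int.negOnePow m : ℤˣ) : ℤ) = 1 := by
    rw [← Units.val_mul, ← Int.negOnePow_add, Int.negOnePow_even _ ⟨m, rfl⟩]; rfl
  exact_mod_cast this

theorem abs_sgnC (m : ℤ) : |sgnC m| = 1 := by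
  have h := sgnC_mul_self m
  have : |sgnC m| * |sgnC m| = 1 := by rw [abs_mul_abs_self, h]
  nlinarith [abs_nonneg (sgnC m)]

theorem sgnC_one : sgnC 1 = -1 := by simp [sgnC]

theorem sgnC_neg (m : ℤ) : sgnC (-m) = sgnC m := by simp [sgnC, Int.negOnePow_neg]

theorem eC_half (m : ℤ) : eC m (1 / 2) = sgnC m := by
  unfold eC sgnC
  rcases Int.even_or_odd m with h | h
  · rw [Int.negOnePow_even m h]
    obtain ⟨k, rfl⟩ := h
    simp only [Units.val_one, Int.cast_one, Complex.ofReal_one]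
    rw [Complex.exp_eq_one_iff]
    exact ⟨k, by push_cast; ring⟩
  · rw [Int.negOnePow_odd m h]
    obtain ⟨k, rfl⟩ := h
    simp only [Units.val_neg, Units.val_one, Int.cast_neg, Int.cast_one, Complex.ofReal_neg,
      Complex.ofReal_one]
    have h1 : ((2 * π * ((2 * k + 1 : ℤ) : ℝ) * (1 / 2) : ℝ) : ℂ) * Complex.I
        = (k : ℂ) * (2 * π * Complex.I) + π * Complex.I := by push_cast; ring
    rw [h1, Complex.exp_add, Complex.exp_pi_mul_I, Complex.exp_int_mul_two_pi_mul_I, one_mul]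

theorem hasDerivAt_eC (m : ℤ) (t : ℝ) :
    HasDerivAt (eC m) (2 * π * m * Complex.I * eC m t) t := by
  have h1 : HasDerivAt (fun t : ℝ => ((2 * π * m * t : ℝ) : ℂ) * Complex.I)
      (((2 * π * m : ℝ) : ℂ) * Complex.I) t := by
    have h0 : HasDerivAt (fun t : ℝ => 2 * π * m * t) (2 * π * m) t := by
      simpa using (hasDerivAt_id t).const_mul (2 * π * (m:ℝ))
    exact h0.ofReal_comp.mul_const _
  have h2 := h1.cexp
  refine h2.congr_deriv ?_
  unfold eC
  push_cast
  ring

theorem integral_eC (m : ℤ) : ∫ t in (0:ℝ)..1, eC m t = if m = 0 then 1 else 0 := by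
  split_ifs with h
  · subst h; simp [eC_zero]
  · have h1 : (2 * π * m * Complex.I : ℂ) ≠ 0 := by
      have : (m : ℂ) ≠ 0 := by exact_mod_cast h
      simp [this, Real.pi_ne_zero]
    have h2 : ∀ t ∈ uIcc (0:ℝ) 1, HasDerivAt (fun t => (2 * π * m * Complex.I : ℂ)⁻¹ * eC m t) (eC m t) t := by
      intro t _
      refine ((hasDerivAt_eC m t).const_mul _).congr_deriv ?_
      field_simp
    rw [intervalIntegral.integral_eq_sub_of_hasDerivAt h2
      ((eC_continuous m).intervalIntegrable _ _)]
    have := eC_int m 1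
    simp only [Int.cast_one] at this
    rw [this, eC_zero_right, sub_self]

/-- The Fourier coefficient of a loop. -/
def fc (h : ℝ → ℂ) (m : ℤ) : ℂ := ∫ t in (0:ℝ)..1, eC (-m) t * h t

/-- Integration by parts for Fourier coefficients. -/
theorem fc_deriv {h h' : ℝ → ℂ} (hd : ∀ t, HasDerivAt h (h' t) t) (hc : Continuous h')
    (h01 : h 1 = h 0) (m : ℤ) : fc h' m = 2 * π * m * Complex.I * fc h m := by
  unfold fc
  have h1 : ∀ t ∈ uIcc (0:ℝ) 1, HasDerivAt (fun t => eC (-m) t * h t)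
      (2 * π * ((-m : ℤ) : ℂ) * Complex.I * eC (-m) t * h t + eC (-m) t * h' t) t := by
    intro t _
    exact (hasDerivAt_eC (-m) t).mul (hd t)
  have hcont : Continuous h := continuous_iff_continuousAt.2 fun t => (hd t).continuousAt
  have hce := eC_continuous (-m)
  have h2 := intervalIntegral.integral_eq_sub_of_hasDerivAt h1
    (Continuous.intervalIntegrable (by fun_prop) _ _)
  rw [intervalIntegral.integral_add (Continuous.intervalIntegrable (by fun_prop) _ _)
    (Continuous.intervalIntegrable (by fun_prop) _ _)] at h2
  have h3 : ∫ t in (0:ℝ)..1, 2 * π * ((-m : ℤ) : ℂ) * Complex.I * eC (-m) t * h t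
      = 2 * π * ((-m : ℤ) : ℂ) * Complex.I * ∫ t in (0:ℝ)..1, eC (-m) t * h t := by
    rw [← intervalIntegral.integral_const_mul]
    congr 1; ext t; ring
  have h4 : eC (-m) 1 = 1 := by have := eC_int (-m) 1; simpa using this
  rw [h3, h4, eC_zero_right, h01, sub_self] at h2
  push_cast at h2
  linear_combination h2

theorem norm_fc_le (h : ℝ → ℂ) (m : ℤ) : ‖fc h m‖ ≤ ∫ t in (0:ℝ)..1, ‖h t‖ := by
  unfold fc
  refine (intervalIntegral.norm_integral_le_integral_norm zero_le_one).trans (le_of_eq ?_)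
  congr 1; ext t; rw [norm_mul, norm_eC, one_mul]

variable {A : Type*} [Fintype A]

/-- Parseval's identity for trigonometric polynomials with frequencies `μ a`. -/
theorem integral_trig_mul {μ : A → ℤ} (hμ : Function.Injective μ) (b c : A → ℂ) :
    ∫ t in (0:ℝ)..1, (starRingEnd ℂ) (∑ a, eC (μ a) t * b a) * (∑ a, eC (μ a) t * c a)
      = ∑ a, (starRingEnd ℂ) (b a) * c a := by
  classical
  have h1 : ∀ t, (starRingEnd ℂ) (∑ a, eC (μ a) t * b a) * (∑ a, eC (μ a) t * c a)
      = ∑ a, ∑ a', eC (μ a' - μ a) t * ((starRingEnd ℂ) (b a) * c a') := by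
    intro t
    rw [map_sum, Finset.sum_mul_sum]
    refine Finset.sum_congr rfl fun a _ => Finset.sum_congr rfl fun a' _ => ?_
    rw [map_mul, conj_eC, sub_eq_add_neg, eC_add]; ring
  simp_rw [h1]
  rw [intervalIntegral.integral_finsetSum]
  · refine Finset.sum_congr rfl fun a _ => ?_
    rw [intervalIntegral.integral_finsetSum]
    · simp_rw [intervalIntegral.integral_mul_const, integral_eC, sub_eq_zero]
      rw [Finset.sum_eq_single a]
      · simp
      · intro a' _ ha'
        rw [if_neg (fun h => ha' (hμ h)), zero_mul]
      · simp
    · intro a' _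
      exact Continuous.intervalIntegrable ((eC_continuous _).mul continuous_const) _ _
  · intro a _
    exact Continuous.intervalIntegrable (continuous_finsetSum _ fun a' _ =>
      (eC_continuous _).mul continuous_const) _ _

theorem trig_continuous (μ : A → ℤ) (c : A → ℂ) : Continuous fun t => ∑ a, eC (μ a) t * c a :=
  continuous_finsetSum _ fun _ _ => (eC_continuous _).mul continuous_const

theorem integral_norm_sq_trig {μ : A → ℤ} (hμ : Function.Injective μ) (c : A → ℂ) :
    ∫ t in (0:ℝ)..1, ‖∑ a, eC (μ a) t * c a‖ ^ 2 = ∑ a, ‖c a‖ ^ 2 := by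
  have h := integral_trig_mul hμ c c
  simp_rw [Complex.conj_mul', ← Complex.ofReal_pow] at h
  rw [intervalIntegral.integral_ofReal, ← Complex.ofReal_sum] at h
  exact_mod_cast h

/-- Pairing a loop with a trigonometric polynomial. -/
theorem integral_mul_trig {h : ℝ → ℂ} (hc : Continuous h) (μ : A → ℤ) (c : A → ℂ) :
    ∫ t in (0:ℝ)..1, (starRingEnd ℂ) (h t) * ∑ a, eC (μ a) t * c a
      = ∑ a, (starRingEnd ℂ) (fc h (μ a)) * c a := by
  simp_rw [Finset.mul_sum]
  rw [intervalIntegral.integral_finsetSum]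
  · refine Finset.sum_congr rfl fun a _ => ?_
    unfold fc
    rw [← intervalIntegral.intervalIntegral_conj, ← intervalIntegral.integral_mul_const]
    congr 1; ext t
    rw [map_mul, conj_eC, neg_neg]; ring
  · intro a _
    refine Continuous.intervalIntegrable ?_ _ _
    have := eC_continuous (μ a)
    exact (Complex.continuous_conj.comp hc).mul (this.mul continuous_const)

/-- A continuous loop with summable Fourier coefficients is the sum of its Fourier series. -/
theorem hasSum_fc {h : ℝ → ℂ} (hc : Continuous h) (hper : ∀ t, h (t + 1) = h t)
    (hs : Summable (fc h)) (t : ℝ) : HasSum (fun m => fc h m * eC m t) (h t) := by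
  have hper' : Function.Periodic h 1 := hper
  let g : C(AddCircle (1:ℝ), ℂ) := ⟨hper'.lift, by
    have : Continuous fun t : ℝ => hper'.lift (t : AddCircle (1:ℝ)) := by simpa using hc
    exact continuous_coinduced_dom.2 this⟩
  have hfe : ∀ (m : ℤ) (t : ℝ), fourier m (t : AddCircle (1:ℝ)) = eC m t := by
    intro m t
    rw [fourier_coe_apply, eC]
    congr 1; push_cast; ring
  have hco : ∀ m, fourierCoeff g m = fc h m := by
    intro m
    rw [fourierCoeff_eq_intervalIntegral _ m 0]
    simp only [fc, zero_add, div_one, one_smul, smul_eq_mul]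
    congr 1; ext t
    rw [hfe]
    rfl
  have hs' : Summable (fourierCoeff g) := by rw [show fourierCoeff g = fc h from funext hco]; exact hs
  have h1 := has_pointwise_sum_fourier_series_of_summable hs' (t : AddCircle (1:ℝ))
  simp_rw [hco, hfe] at h1
  exact h1

end FourierTools

/-! ### The action functional on trigonometric loops -/

section Galerkin

theorem hasFDerivAt_param_integral {H E' : Type*} [NormedAddCommGroup H] [NormedSpace ℝ H]
    [FiniteDimensional ℝ H] [NormedAddCommGroup E'] [NormedSpace ℝ E']
    {f : H → ℝ → E'} {f' : H → ℝ → H →L[ℝ] E'} (hf : ∀ x t, HasFDerivAt (fun x => f x t) (f' x t) x)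
    (hfc : ∀ x, Continuous (f x)) (hf'c : Continuous (Function.uncurry f')) (x : H) :
    HasFDerivAt (fun x => ∫ t in (0:ℝ)..1, f x t) (∫ t in (0:ℝ)..1, f' x t) x := by
  obtain ⟨C, hC⟩ := ((isCompact_closedBall x 1).prod (isCompact_Icc (a := (0:ℝ)) (b := 1))).exists_bound_of_continuousOn
    hf'c.continuousOn
  refine intervalIntegral.hasFDerivAt_integral_of_dominated_of_fderiv_le
    (Metric.closedBall_mem_nhds x one_pos) (bound := fun _ => C) ?_ ?_ ?_ ?_ ?_ ?_
  · exact Filter.Eventually.of_forall fun y => (hfc y).aestronglyMeasurable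
  · exact (hfc x).intervalIntegrable _ _
  · exact (hf'c.comp (by fun_prop : Continuous fun t : ℝ => (x, t))).aestronglyMeasurable
  · refine Filter.Eventually.of_forall fun t ht y hy => hC (y, t) ⟨hy, ?_⟩
    rw [uIoc_of_le zero_le_one] at ht
    exact ⟨ht.1.le, ht.2⟩
  · exact intervalIntegrable_const
  · exact Filter.Eventually.of_forall fun t _ y _ => hf y t

theorem contDiff_param_integral {H E' : Type*} [NormedAddCommGroup H] [NormedSpace ℝ H]
    [FiniteDimensional ℝ H] [NormedAddCommGroup E'] [NormedSpace ℝ E']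
    {f : H → ℝ → E'} {f' : H → ℝ → H →L[ℝ] E'} (hf : ∀ x t, HasFDerivAt (fun x => f x t) (f' x t) x)
    (hfc : ∀ x, Continuous (f x)) (hf'c : Continuous (Function.uncurry f')) :
    ContDiff ℝ 1 (fun x => ∫ t in (0:ℝ)..1, f x t) := by
  rw [contDiff_one_iff_hasFDerivAt]
  exact ⟨fun x => ∫ t in (0:ℝ)..1, f' x t,
    intervalIntegral.continuous_parametric_intervalIntegral_of_continuous' hf'c 0 1,
    hasFDerivAt_param_integral hf hfc hf'c⟩

variable {n : ℕ}

/-- The real part of the standard Hermitian product of `ℂⁿ`, as a functional of the second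
argument. -/
def rpL (u : Fin n → ℂ) : (Fin n → ℂ) →L[ℝ] ℝ :=
  ∑ i, (innerSL ℝ (u i)).comp (ContinuousLinearMap.proj (R := ℝ) (φ := fun _ : Fin n => ℂ) i)

theorem rpL_apply (u v : Fin n → ℂ) : rpL u v = ∑ i, inner ℝ (u i) (v i) := by
  simp [rpL]

theorem rpL_continuous : Continuous (rpL : (Fin n → ℂ) → (Fin n → ℂ) →L[ℝ] ℝ) := by
  unfold rpL
  refine continuous_finsetSum _ fun i _ => ?_
  exact Continuous.clm_comp ((innerSL ℝ).continuous.comp (continuous_apply i)) continuous_const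

/-- A Hamiltonian `K ≥ 0` with gradient `Gr` which is, up to bounded terms, the nonresonant
linear gradient with frequencies `σ i`. -/
structure IsHam (K : (Fin n → ℂ) → ℝ) (Gr : (Fin n → ℂ) → Fin n → ℂ) (σ : Fin n → ℝ) : Prop where
  hK : ∀ x, HasFDerivAt K (rpL (Gr x)) x
  hGr : ContDiff ℝ 1 Gr
  K_zero : K 0 = 0
  K_nonneg : ∀ x, 0 ≤ K x
  bdd : ∃ CB : ℝ, ∀ x i, ‖Gr x i - (2 * π * σ i : ℝ) • x i‖ ≤ CB
  lip : ∃ Λ : ℝ, ∀ x y, ‖Gr x - Gr y‖ ≤ Λ * ‖x - y‖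
  nonres : ∀ i (m : ℤ), σ i ≠ m
  low : ∃ C : ℝ, ∀ x : Fin n → ℂ, π * ∑ i, (if 1 < σ i then ‖x i‖ ^ 2 else 0) - C ≤ K x

theorem IsHam.Gr_zero {K : (Fin n → ℂ) → ℝ} {Gr : (Fin n → ℂ) → Fin n → ℂ} {σ : Fin n → ℝ}
    (h : IsHam K Gr σ) : Gr 0 = 0 := by
  have hmin : IsLocalMin K 0 := Filter.Eventually.of_forall fun x => by
    rw [h.K_zero]; exact h.K_nonneg x
  have h1 := hmin.hasFDerivAt_eq_zero (h.hK 0)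
  have h2 : rpL (Gr 0) (Gr 0) = 0 := by rw [h1]; rfl
  rw [rpL_apply] at h2
  simp only [real_inner_self_eq_norm_sq] at h2
  rw [Finset.sum_eq_zero_iff_of_nonneg (fun i _ => by positivity)] at h2
  funext i
  have := h2 i (Finset.mem_univ i)
  simpa using this

theorem exists_gap (σ : Fin n → ℝ) (h : ∀ i (m : ℤ), σ i ≠ m) :
    ∃ ρ > 0, ∀ i (m : ℤ), ρ ≤ |(m:ℝ) - σ i| := by
  obtain ⟨ρ, hρ, hle⟩ := (isCompact_univ (X := Fin n)).exists_forall_le'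
    (f := fun i => |σ i - round (σ i)|) (a := 0) continuous_of_discreteTopology.continuousOn
    (fun i _ => abs_pos.2 (sub_ne_zero.2 (h i _)))
  refine ⟨ρ, hρ, fun i m => (hle i (mem_univ i)).trans ?_⟩
  rw [abs_sub_comm (m:ℝ)]
  exact round_le (σ i) m

/-- The frequencies of the trigonometric polynomials of degree at most `N`. -/
abbrev Md (N : ℕ) : Type := ↥(Finset.Icc (-(N:ℤ)) N)

/-- The space of trigonometric loops of degree at most `N` in `ℂⁿ`, given by their Fourier
coefficients. -/
abbrev GV (n N : ℕ) : Type := PiLp 2 (fun _ : Md N × Fin n => ℂ)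

theorem Md_inj (N : ℕ) : Function.Injective (fun m : Md N => (m : ℤ)) := Subtype.val_injective

/-- Evaluation of a trigonometric loop at time `t`. -/
def loopL (n N : ℕ) (t : ℝ) : GV n N →L[ℝ] (Fin n → ℂ) :=
  ContinuousLinearMap.pi fun i => ∑ m : Md N,
    (ContinuousLinearMap.mul ℝ ℂ (eC m t)).comp (PiLp.proj 2 (𝕜 := ℝ) (fun _ : Md N × Fin n => ℂ) (m, i))

variable {N : ℕ}

theorem loopL_apply (t : ℝ) (c : GV n N) (i : Fin n) :
    loopL n N t c i = ∑ m : Md N, eC m t * c (m, i) := by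
  simp [loopL]

theorem loopL_continuous : Continuous (loopL n N) := by
  unfold loopL
  refine (ContinuousLinearMap.piEquivL ℝ (GV n N) (fun _ : Fin n => ℂ)).continuous.comp ?_
  refine continuous_pi fun i => continuous_finsetSum _ fun m _ => ?_
  exact Continuous.clm_comp ((ContinuousLinearMap.mul ℝ ℂ).continuous.comp (eC_continuous m))
    continuous_const

end Galerkin

section ActionFunctional

variable {n N : ℕ} {K : (Fin n → ℂ) → ℝ} {Gr : (Fin n → ℂ) → Fin n → ℂ} {σ : Fin n → ℝ}

/-- The gradient of the action functional on trigonometric loops, with respect to the Hermitian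
product of the Fourier coefficients. -/
def actG (Gr : (Fin n → ℂ) → Fin n → ℂ) (c : GV n N) : GV n N :=
  WithLp.toLp 2 fun k => ((2 * π * (k.1 : ℤ) : ℝ) : ℂ) * c k - fc (fun t => Gr (loopL n N t c) k.2) k.1

/-- The action functional `∫ (λ - K dt)` on trigonometric loops. -/
def actF (K : (Fin n → ℂ) → ℝ) (c : GV n N) : ℝ :=
  π * ∑ k, ((k.1 : ℤ) : ℝ) * ‖c k‖ ^ 2 - ∫ t in (0:ℝ)..1, K (loopL n N t c)

theorem loop_continuous (c : GV n N) : Continuous fun t => loopL n N t c :=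
  loopL_continuous.clm_apply continuous_const

theorem integral_rp_loop {u : ℝ → Fin n → ℂ} (hu : Continuous u) (v : GV n N) :
    ∫ t in (0:ℝ)..1, rpL (u t) (loopL n N t v) =
      ∑ k : Md N × Fin n, inner ℝ (fc (fun t => u t k.2) k.1) (v k) := by
  have hui : ∀ i, Continuous fun t => u t i := fun i => (continuous_apply i).comp hu
  simp only [rpL_apply]
  rw [intervalIntegral.integral_finsetSum]
  · rw [Fintype.sum_prod_type_right]
    refine Finset.sum_congr rfl fun i _ => ?_
    have h1 := integral_mul_trig (hui i) (fun m : Md N => (m : ℤ)) (fun m => v (m, i))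
    have h2 : ∀ t, inner ℝ (u t i) (loopL n N t v i) =
        Complex.reCLM ((starRingEnd ℂ) (u t i) * ∑ a : Md N, eC a t * v (a, i)) := by
      intro t; rw [Complex.inner, loopL_apply, mul_comm]; rfl
    simp only [h2]
    rw [ContinuousLinearMap.intervalIntegral_comp_comm, h1]
    · simp only [Complex.inner, map_sum, mul_comm]; rfl
    · refine Continuous.intervalIntegrable ?_ _ _
      exact (Complex.continuous_conj.comp (hui i)).mul (trig_continuous _ _)
  · intro i _
    refine Continuous.intervalIntegrable ?_ _ _
    exact (hui i).inner ((continuous_apply i).comp (loop_continuous v))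

theorem integral_rp_loop_loop (c v : GV n N) :
    ∫ t in (0:ℝ)..1, rpL (loopL n N t c) (loopL n N t v) = ∑ k, inner ℝ (c k) (v k) := by
  simp only [rpL_apply, loopL_apply]
  have hc : ∀ (c : GV n N) i, Continuous fun t => ∑ m : Md N, eC m t * c (m, i) :=
    fun c i => trig_continuous _ _
  rw [intervalIntegral.integral_finsetSum fun i _ => ((hc c i).inner (hc v i)).intervalIntegrable _ _]
  rw [Fintype.sum_prod_type_right]
  refine Finset.sum_congr rfl fun i _ => ?_
  have h1 := integral_trig_mul (Md_inj N) (fun m => c (m, i)) (fun m => v (m, i))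
  have h2 : ∀ t, inner ℝ (∑ m : Md N, eC m t * c (m, i)) (∑ m : Md N, eC m t * v (m, i)) =
        Complex.reCLM ((starRingEnd ℂ) (∑ m : Md N, eC m t * c (m, i)) * ∑ m : Md N, eC m t * v (m, i)) := by
    intro t; rw [Complex.inner, mul_comm]; rfl
  simp only [h2]
  rw [ContinuousLinearMap.intervalIntegral_comp_comm, h1]
  · simp only [Complex.inner, map_sum, mul_comm]; rfl
  · refine Continuous.intervalIntegrable ?_ _ _
    exact (Complex.continuous_conj.comp (hc c i)).mul (hc v i)

theorem actF_hasFDerivAt (h : IsHam K Gr σ) (c : GV n N) :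
    HasFDerivAt (actF K) (innerSL ℝ (actG Gr c)) c := by
  have hGc := h.hGr.continuous
  have h1 : HasFDerivAt (fun c : GV n N => π * ∑ k, ((k.1 : ℤ) : ℝ) * ‖c k‖ ^ 2)
      (π • ∑ k : Md N × Fin n, ((k.1 : ℤ) : ℝ) • ((2:ℝ) • (innerSL ℝ (c k))).comp
        (PiLp.proj 2 (𝕜 := ℝ) (fun _ : Md N × Fin n => ℂ) k)) c := by
    refine HasFDerivAt.const_mul (HasFDerivAt.fun_sum fun k _ => HasFDerivAt.const_mul ?_ _) _
    have := (hasStrictFDerivAt_norm_sq (c k)).hasFDerivAt.comp c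
      (PiLp.proj 2 (𝕜 := ℝ) (fun _ : Md N × Fin n => ℂ) k).hasFDerivAt
    refine HasFDerivAt.congr_fderiv (f := fun c : GV n N => ‖c k‖ ^ 2) this ?_
    ext v; simp [two_smul]
  have h2 : HasFDerivAt (fun c : GV n N => ∫ t in (0:ℝ)..1, K (loopL n N t c))
      (∫ t in (0:ℝ)..1, (rpL (Gr (loopL n N t c))).comp (loopL n N t)) c := by
    refine hasFDerivAt_param_integral (f := fun c t => K (loopL n N t c))
      (f' := fun c t => (rpL (Gr (loopL n N t c))).comp (loopL n N t)) ?_ ?_ ?_ c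
    · intro x t
      exact (h.hK _).comp x (loopL n N t).hasFDerivAt
    · intro x
      exact (continuous_iff_continuousAt.2 fun x => (h.hK x).continuousAt).comp (loop_continuous x)
    · have hl : Continuous fun p : GV n N × ℝ => loopL n N p.2 p.1 :=
        (loopL_continuous.comp continuous_snd).clm_apply continuous_fst
      exact (rpL_continuous.comp (hGc.comp hl)).clm_comp (loopL_continuous.comp continuous_snd)
  refine (h1.sub h2).congr_fderiv ?_
  ext v
  have hintg : Continuous fun t => (rpL (Gr (loopL n N t c))).comp (loopL n N t) :=
    (rpL_continuous.comp (hGc.comp (loop_continuous c))).clm_comp loopL_continuous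
  rw [_root_.sub_apply, ContinuousLinearMap.intervalIntegral_apply (hintg.intervalIntegrable _ _)]
  simp only [ContinuousLinearMap.comp_apply]
  rw [integral_rp_loop (u := fun t => Gr (loopL n N t c)) (hGc.comp (loop_continuous c)) v]
  simp only [innerSL_apply_apply, PiLp.inner_apply, actG, _root_.smul_apply,
    _root_.sum_apply, ContinuousLinearMap.comp_apply, PiLp.proj_apply, inner_sub_left,
    Finset.sum_sub_distrib, smul_eq_mul, Finset.mul_sum]
  congr 1
  refine Finset.sum_congr rfl fun k _ => ?_
  rw [← Complex.real_smul, inner_smul_left]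
  simp; ring

theorem contDiff_actG (hGr : ContDiff ℝ 1 Gr) : ContDiff ℝ 1 (actG Gr : GV n N → GV n N) := by
  rw [contDiff_piLp]
  intro k
  have h0 : ∀ k, ContDiff ℝ 1 fun c : GV n N => c k := fun k =>
    (PiLp.proj 2 (𝕜 := ℝ) (fun _ : Md N × Fin n => ℂ) k).contDiff
  refine ContDiff.sub (contDiff_const.mul (h0 k)) ?_
  have hl : Continuous fun p : GV n N × ℝ => loopL n N p.2 p.1 :=
    (loopL_continuous.comp continuous_snd).clm_apply continuous_fst
  refine contDiff_param_integral
    (f' := fun c t => (ContinuousLinearMap.mul ℝ ℂ (eC (-k.1) t)).comp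
      ((ContinuousLinearMap.proj (R := ℝ) (φ := fun _ : Fin n => ℂ) k.2).comp
        ((fderiv ℝ Gr (loopL n N t c)).comp (loopL n N t)))) ?_ ?_ ?_
  · intro x t
    have h1 := (hGr.differentiable one_ne_zero (loopL n N t x)).hasFDerivAt.comp x
      (loopL n N t).hasFDerivAt
    exact (ContinuousLinearMap.mul ℝ ℂ (eC (-k.1) t)).hasFDerivAt.comp x
      ((ContinuousLinearMap.proj (R := ℝ) (φ := fun _ : Fin n => ℂ) k.2).hasFDerivAt.comp x h1)
  · intro x
    exact (eC_continuous _).mul ((continuous_apply k.2).comp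
      (hGr.continuous.comp (loop_continuous x)))
  · refine Continuous.clm_comp ((ContinuousLinearMap.mul ℝ ℂ).continuous.comp
      ((eC_continuous _).comp continuous_snd)) (continuous_const.clm_comp
        (((hGr.continuous_fderiv one_ne_zero).comp hl).clm_comp
          (loopL_continuous.comp continuous_snd)))

theorem norm_GV_le (x : GV n N) : ‖x‖ ≤ ∑ k, ‖x k‖ := by
  rw [PiLp.norm_eq_of_L2]
  refine Real.sqrt_le_iff.2 ⟨Finset.sum_nonneg fun _ _ => norm_nonneg _, ?_⟩
  exact Finset.sum_sq_le_sq_sum_of_nonneg fun i _ => norm_nonneg _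

theorem norm_coord_le (x : GV n N) (k) : ‖x k‖ ≤ ‖x‖ := PiLp.norm_apply_le x k

theorem exists_loopL_bound (n N : ℕ) : ∃ M : ℝ, 0 ≤ M ∧ ∀ t ∈ Icc (0:ℝ) 1, ‖loopL n N t‖ ≤ M := by
  obtain ⟨M, hM⟩ := (isCompact_Icc (a := (0:ℝ)) (b := 1)).exists_bound_of_continuousOn
    (loopL_continuous (n := n) (N := N)).continuousOn
  exact ⟨M, (norm_nonneg _).trans (hM 0 (by simp)), hM⟩

theorem fc_sub {f g : ℝ → ℂ} (hf : Continuous f) (hg : Continuous g) (m : ℤ) :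
    fc (fun t => f t - g t) m = fc f m - fc g m := by
  unfold fc
  rw [← intervalIntegral.integral_sub]
  · simp only [mul_sub]
  · exact ((eC_continuous _).mul hf).intervalIntegrable _ _
  · exact ((eC_continuous _).mul hg).intervalIntegrable _ _

theorem norm_fc_le_of_le {f : ℝ → ℂ} {C : ℝ} (h : ∀ t ∈ Icc (0:ℝ) 1, ‖f t‖ ≤ C) (m : ℤ) :
    ‖fc f m‖ ≤ C := by
  have := intervalIntegral.norm_integral_le_of_norm_le_const (a := (0:ℝ)) (b := 1)
    (f := fun t => eC (-m) t * f t) (C := C) (fun t ht => by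
      rw [uIoc_of_le zero_le_one] at ht
      rw [norm_mul, norm_eC, one_mul]; exact h t ⟨ht.1.le, ht.2⟩)
  simpa [fc] using this

theorem exists_lip_actG (h : IsHam K Gr σ) :
    ∃ Λ : ℝ, 0 < Λ ∧ ∀ x y : GV n N, ‖actG Gr x - actG Gr y‖ ≤ Λ * ‖x - y‖ := by
  obtain ⟨L, hL⟩ := h.lip
  obtain ⟨M, hM0, hM⟩ := exists_loopL_bound n N
  have hL' : ∀ x y, ‖Gr x - Gr y‖ ≤ |L| * ‖x - y‖ := fun x y =>
    (hL x y).trans (mul_le_mul_of_nonneg_right (le_abs_self L) (norm_nonneg _))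
  refine ⟨(∑ k : Md N × Fin n, (|2 * π * (k.1 : ℤ)| + |L| * M)) + 1, by positivity, fun x y => ?_⟩
  have hc : ∀ (x : GV n N) i, Continuous fun t => Gr (loopL n N t x) i := fun x i =>
    (continuous_apply i).comp (h.hGr.continuous.comp (loop_continuous x))
  refine (norm_GV_le _).trans ?_
  have : ∑ k : Md N × Fin n, ‖(actG Gr x - actG Gr y) k‖ ≤
      ∑ k : Md N × Fin n, (|2 * π * (k.1 : ℤ)| + |L| * M) * ‖x - y‖ := by
    refine Finset.sum_le_sum fun k _ => ?_
    have e : (actG Gr x - actG Gr y) k = ((2 * π * (k.1 : ℤ) : ℝ) : ℂ) * (x - y) k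
        - fc (fun t => Gr (loopL n N t x) k.2 - Gr (loopL n N t y) k.2) k.1 := by
      rw [fc_sub (hc x _) (hc y _)]; simp [actG]; ring
    rw [e, add_mul]
    refine (norm_sub_le _ _).trans (add_le_add ?_ ?_)
    · rw [norm_mul, Complex.norm_real, Real.norm_eq_abs]
      exact mul_le_mul_of_nonneg_left (norm_coord_le _ _) (abs_nonneg _)
    · refine norm_fc_le_of_le (fun t ht => ?_) _
      calc _ ≤ ‖Gr (loopL n N t x) - Gr (loopL n N t y)‖ :=
            norm_le_pi_norm (Gr (loopL n N t x) - Gr (loopL n N t y)) k.2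
        _ ≤ |L| * ‖loopL n N t (x - y)‖ := by rw [map_sub]; exact hL' _ _
        _ ≤ |L| * (M * ‖x - y‖) := by
            gcongr; exact ((loopL n N t).le_opNorm _).trans (by gcongr; exact hM t ht)
        _ = _ := by ring
  rw [← Finset.sum_mul] at this
  refine this.trans ?_
  gcongr
  linarith

theorem fc_loop (c : GV n N) (m : Md N) (i : Fin n) :
    fc (fun t => loopL n N t c i) m = c (m, i) := by
  have h1 : ∀ t, eC (-(m : ℤ)) t * loopL n N t c i =
      ∑ m' : Md N, eC ((m' : ℤ) - m) t * c (m', i) := by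
    intro t
    rw [loopL_apply, Finset.mul_sum]
    refine Finset.sum_congr rfl fun m' _ => ?_
    rw [sub_eq_neg_add, eC_add]; ring
  unfold fc
  simp_rw [h1]
  have hintg : ∀ a ∈ (Finset.univ : Finset (Md N)), IntervalIntegrable
      (fun t => eC ((a : ℤ) - m) t * c (a, i)) volume 0 1 := fun a _ =>
    Continuous.intervalIntegrable ((eC_continuous _).mul continuous_const) _ _
  rw [intervalIntegral.integral_finsetSum hintg]
  simp_rw [intervalIntegral.integral_mul_const, integral_eC, sub_eq_zero]
  rw [Finset.sum_eq_single m]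
  · simp
  · intro b _ hb
    rw [if_neg (fun h => hb (Subtype.ext h)), zero_mul]
  · simp

theorem fc_const_mul (a : ℂ) (f : ℝ → ℂ) (m : ℤ) : fc (fun t => a * f t) m = a * fc f m := by
  unfold fc
  rw [← intervalIntegral.integral_const_mul]
  congr 1; ext t; ring

theorem actG_apply_eq (h : IsHam K Gr σ) (c : GV n N) (k : Md N × Fin n) :
    actG Gr c k = ((2 * π * ((k.1 : ℤ) - σ k.2) : ℝ) : ℂ) * c k -
      fc (fun t => Gr (loopL n N t c) k.2 - (2 * π * σ k.2 : ℝ) • loopL n N t c k.2) k.1 := by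
  have hc : Continuous fun t => Gr (loopL n N t c) k.2 :=
    (continuous_apply _).comp (h.hGr.continuous.comp (loop_continuous c))
  have hc' : Continuous fun t => loopL n N t c k.2 := (continuous_apply _).comp (loop_continuous c)
  simp only [Complex.real_smul]
  rw [fc_sub hc (by fun_prop), fc_const_mul, fc_loop]
  simp [actG]; ring

theorem exists_coercive_actG (h : IsHam K Gr σ) :
    ∃ κ C : ℝ, 0 < κ ∧ ∀ x : GV n N, κ * ‖x‖ - C ≤ ‖actG Gr x‖ := by
  obtain ⟨CB, hCB⟩ := h.bdd
  obtain ⟨ρ, hρ, hgap⟩ := exists_gap σ h.nonres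
  refine ⟨2 * π * ρ, ∑ _k : Md N × Fin n, CB, by positivity, fun x => ?_⟩
  let u : GV n N := WithLp.toLp 2 fun k => ((2 * π * ((k.1 : ℤ) - σ k.2) : ℝ) : ℂ) * x k
  have h1 : 2 * π * ρ * ‖x‖ ≤ ‖u‖ := by
    refine abs_le_of_sq_le_sq' ?_ (norm_nonneg _) |>.2
    rw [mul_pow, PiLp.norm_sq_eq_of_L2, PiLp.norm_sq_eq_of_L2, Finset.mul_sum]
    refine Finset.sum_le_sum fun k _ => ?_
    simp only [u]
    rw [norm_mul, mul_pow, Complex.norm_real, Real.norm_eq_abs, abs_mul,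
      abs_of_pos (by positivity : 0 < 2 * π)]
    have := hgap k.2 k.1
    have h3 : 2 * π * ρ ≤ 2 * π * |((k.1 : ℤ) : ℝ) - σ k.2| :=
      mul_le_mul_of_nonneg_left this (by positivity)
    have h4 := mul_le_mul_of_nonneg_right
      (pow_le_pow_left₀ (by positivity : 0 ≤ 2 * π * ρ) h3 2) (sq_nonneg ‖x k‖)
    rw [mul_pow (_ * _) ‖x k‖, ← mul_pow]
    exact h4
  have h2 : ‖u - actG Gr x‖ ≤ ∑ _k : Md N × Fin n, CB := by
    refine (norm_GV_le _).trans (Finset.sum_le_sum fun k _ => ?_)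
    rw [PiLp.sub_apply, actG_apply_eq h]
    simp only [u, sub_sub_cancel]
    exact norm_fc_le_of_le (fun t _ => hCB _ _) _
  have := norm_le_insert' u (actG Gr x)
  linarith

/-- The diagonal operator with entries `d`. -/
def diagL (d : Md N × Fin n → ℝ) : GV n N →L[ℝ] GV n N :=
  LinearMap.toContinuousLinearMap
    { toFun := fun c => WithLp.toLp 2 fun k => d k • c k
      map_add' := fun x y => by ext k; simp
      map_smul' := fun r x => by ext k; simp; ring }

theorem diagL_apply (d : Md N × Fin n → ℝ) (c : GV n N) (k) : diagL d c k = d k • c k := rfl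

/-- The half period shift of loops. -/
def shiftV (n N : ℕ) : GV n N →L[ℝ] GV n N := diagL fun k => sgnC k.1

theorem norm_shiftV (x : GV n N) : ‖shiftV n N x‖ = ‖x‖ := by
  rw [PiLp.norm_eq_of_L2, PiLp.norm_eq_of_L2]
  congr 1
  refine Finset.sum_congr rfl fun k _ => ?_
  rw [shiftV, diagL_apply, norm_smul, Real.norm_eq_abs, abs_sgnC, one_mul]

theorem loopL_shiftV (t : ℝ) (x : GV n N) :
    loopL n N t (shiftV n N x) = loopL n N (t + 1 / 2) x := by
  funext i
  rw [loopL_apply, loopL_apply]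
  refine Finset.sum_congr rfl fun m _ => ?_
  rw [shiftV, diagL_apply, eC_add_right, eC_half, Complex.real_smul, mul_assoc]

theorem loopL_add_one (t : ℝ) (x : GV n N) : loopL n N (t + 1) x = loopL n N t x := by
  funext i
  rw [loopL_apply, loopL_apply]
  simp only [eC_add_one]

theorem fc_shift {h : ℝ → ℂ} (hper : ∀ t, h (t + 1) = h t) (m : ℤ) :
    fc (fun t => h (t + 1 / 2)) m = sgnC m • fc h m := by
  have h1 : ∀ t, eC (-m) t * h (t + 1 / 2) =
      (sgnC m : ℂ) * (eC (-m) (t + 1 / 2) * h (t + 1 / 2)) := by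
    intro t
    rw [eC_add_right, eC_half, sgnC_neg]
    have : (sgnC m : ℂ) * sgnC m = 1 := by exact_mod_cast sgnC_mul_self m
    linear_combination (-(eC (-m) t * h (t + 1 / 2))) * this
  have hp : Function.Periodic (fun t => eC (-m) t * h t) 1 := fun t => by
    simp only [eC_add_one, hper]
  have h2 := hp.intervalIntegral_add_eq (0 + 1 / 2) 0
  unfold fc
  simp_rw [h1]
  rw [intervalIntegral.integral_const_mul, Complex.real_smul,
    intervalIntegral.integral_comp_add_right (fun t => eC (-m) t * h t)]
  rw [show (1:ℝ) + 1 / 2 = 0 + 1 / 2 + 1 by norm_num, h2, zero_add]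

theorem actG_shiftV (x : GV n N) : actG Gr (shiftV n N x) = shiftV n N (actG Gr x) := by
  ext k
  have h1 := fc_shift (h := fun t => Gr (loopL n N t x) k.2)
    (fun t => by simp only [loopL_add_one]) k.1
  simp only [actG, loopL_shiftV, h1]
  simp only [shiftV, diagL_apply, Complex.real_smul]
  ring

end ActionFunctional

/-! ### Linear symplectic maps acting on trigonometric loops -/

section LinearAction

variable {n N : ℕ}

/-- Multiplication by `i` on `ℂⁿ`, as a real linear map. -/
def mulI (n : ℕ) : (Fin n → ℂ) →L[ℝ] (Fin n → ℂ) :=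
  LinearMap.toContinuousLinearMap
    { toFun := fun u i => Complex.I * u i
      map_add' := fun x y => by ext i; simp [mul_add]
      map_smul' := fun r x => by ext i; simp; ring }

theorem mulI_apply (u : Fin n → ℂ) (i : Fin n) : mulI n u i = Complex.I * u i := rfl

theorem mulI_mulI (u : Fin n → ℂ) : mulI n (mulI n u) = -u := by
  ext i; rw [mulI_apply, mulI_apply, ← mul_assoc]; simp

/-- The complex linear part of a real linear map. -/
def La (L : (Fin n → ℂ) →L[ℝ] (Fin n → ℂ)) : (Fin n → ℂ) →L[ℝ] (Fin n → ℂ) :=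
  (1 / 2 : ℝ) • (L - (mulI n).comp (L.comp (mulI n)))

/-- The complex antilinear part of a real linear map. -/
def Lb (L : (Fin n → ℂ) →L[ℝ] (Fin n → ℂ)) : (Fin n → ℂ) →L[ℝ] (Fin n → ℂ) :=
  (1 / 2 : ℝ) • (L + (mulI n).comp (L.comp (mulI n)))

variable (L : (Fin n → ℂ) →L[ℝ] (Fin n → ℂ))

theorem La_apply (u : Fin n → ℂ) (i : Fin n) :
    La L u i = (1 / 2 : ℂ) * (L u i - Complex.I * L (mulI n u) i) := by
  simp [La, mulI_apply]

theorem Lb_apply (u : Fin n → ℂ) (i : Fin n) :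
    Lb L u i = (1 / 2 : ℂ) * (L u i + Complex.I * L (mulI n u) i) := by
  simp [Lb, mulI_apply]; ring

theorem map_complex_smul (z : ℂ) (u : Fin n → ℂ) (i : Fin n) :
    L (fun i => z * u i) i = z * La L u i + (starRingEnd ℂ) z * Lb L u i := by
  have h1 : (fun i => z * u i) = z.re • u + z.im • mulI n u := by
    ext i
    simp only [Pi.add_apply, Pi.smul_apply, mulI_apply, Complex.real_smul]
    conv_lhs => rw [← Complex.re_add_im z]
    ring
  rw [h1, map_add, map_smul, map_smul, La_apply, Lb_apply]
  simp only [Pi.add_apply, Pi.smul_apply, Complex.real_smul]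
  have h2 : (starRingEnd ℂ) z = z.re - z.im * Complex.I := by
    apply Complex.ext <;> simp
  have h3 : z = z.re + z.im * Complex.I := (Complex.re_add_im z).symm
  generalize z.re = a at *
  generalize z.im = b at *
  rw [h2, h3]
  linear_combination (b * L (mulI n u) i) * Complex.I_mul_I

/-- The frequency `-m`. -/
def Md.neg (m : Md N) : Md N := ⟨-m, by have := m.2; simp only [Finset.mem_Icc] at this ⊢; omega⟩

theorem Md.neg_neg (m : Md N) : m.neg.neg = m := Subtype.ext (by simp [Md.neg])

theorem Md.coe_neg (m : Md N) : ((m.neg : Md N) : ℤ) = -m := rfl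

/-- Negation of frequencies, as a permutation. -/
def Md.negEquiv (N : ℕ) : Md N ≃ Md N := ⟨Md.neg, Md.neg, Md.neg_neg, Md.neg_neg⟩

/-- The Fourier coefficient of frequency `m`, a vector of `ℂⁿ`. -/
def coefL (m : Md N) : GV n N →L[ℝ] (Fin n → ℂ) :=
  ContinuousLinearMap.pi fun i => PiLp.proj 2 (𝕜 := ℝ) (fun _ : Md N × Fin n => ℂ) (m, i)

theorem coefL_apply (m : Md N) (c : GV n N) (i : Fin n) : coefL m c i = c (m, i) := rfl

/-- The action of a real linear map of `ℂⁿ` on trigonometric loops, by composition. -/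
def Lact (L : (Fin n → ℂ) →L[ℝ] (Fin n → ℂ)) : GV n N →L[ℝ] GV n N :=
  LinearMap.toContinuousLinearMap
    { toFun := fun c => WithLp.toLp 2 fun k =>
        La L (coefL k.1 c) k.2 + Lb L (coefL k.1.neg c) k.2
      map_add' := fun x y => by ext k; simp; ring
      map_smul' := fun r x => by ext k; simp }

theorem Lact_apply (c : GV n N) (k : Md N × Fin n) :
    Lact L c k = La L (coefL k.1 c) k.2 + Lb L (coefL k.1.neg c) k.2 := rfl

theorem loopL_Lact (t : ℝ) (c : GV n N) : loopL n N t (Lact L c) = L (loopL n N t c) := by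
  have h1 : loopL n N t c = ∑ m : Md N, fun i => eC m t * coefL m c i := by
    ext i; rw [loopL_apply]; simp [coefL_apply]
  ext i
  rw [h1, map_sum, Finset.sum_apply, loopL_apply]
  simp only [map_complex_smul, Lact_apply, mul_add, Finset.sum_add_distrib]
  congr 1
  rw [← (Md.negEquiv N).sum_comp]
  refine Finset.sum_congr rfl fun m _ => ?_
  simp only [Md.negEquiv, Equiv.coe_fn_mk, Md.neg_neg, Md.coe_neg, conj_eC]

theorem loop_injective {c d : GV n N} (h : ∀ t, loopL n N t c = loopL n N t d) : c = d := by
  ext k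
  have h1 := fc_loop c k.1 k.2
  have h2 := fc_loop d k.1 k.2
  simp only [h] at h1
  exact h1.symm.trans h2

theorem Lact_shiftV (c : GV n N) : Lact L (shiftV n N c) = shiftV n N (Lact L c) :=
  loop_injective fun t => by simp only [loopL_Lact, loopL_shiftV]

theorem stdSymp_mulI (P Q : Fin n → ℂ) :
    stdSymp n (P + Q) (mulI n (P - Q)) = ∑ i, (‖P i‖ ^ 2 - ‖Q i‖ ^ 2) := by
  unfold stdSymp
  refine Finset.sum_congr rfl fun i _ => ?_
  rw [mulI_apply, Complex.sq_norm, Complex.sq_norm, Complex.normSq_apply, Complex.normSq_apply]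
  simp
  ring

theorem La_Lb_norm_sq (hL : ∀ v w, stdSymp n (L v) (L w) = stdSymp n v w) (c d : Fin n → ℂ) :
    ∑ i, (‖La L c i + Lb L d i‖ ^ 2 - ‖La L d i + Lb L c i‖ ^ 2) =
      ∑ i, (‖c i‖ ^ 2 - ‖d i‖ ^ 2) := by
  have h1 := stdSymp_mulI (La L c + Lb L d) (La L d + Lb L c)
  have e1 : La L c + Lb L d + (La L d + Lb L c) = L (c + d) := by
    ext i; simp only [Pi.add_apply, La_apply, Lb_apply, map_add]; ring
  have e2 : mulI n (La L c + Lb L d - (La L d + Lb L c)) = L (mulI n (c - d)) := by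
    ext i
    simp only [mulI_apply, Pi.add_apply, Pi.sub_apply, La_apply, Lb_apply, map_sub]
    linear_combination (-(L (mulI n c) i - L (mulI n d) i)) * Complex.I_mul_I
  rw [e1, e2, hL, stdSymp_mulI] at h1
  exact h1.symm

theorem sum_antisymm (f : Md N → ℝ) :
    ∑ m : Md N, ((m : ℤ) : ℝ) * f m = (1 / 2) * ∑ m : Md N, ((m : ℤ) : ℝ) * (f m - f m.neg) := by
  have h1 : ∑ m : Md N, ((m : ℤ) : ℝ) * f m = ∑ m : Md N, -((m : ℤ) : ℝ) * f m.neg := by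
    rw [← (Md.negEquiv N).sum_comp]
    refine Finset.sum_congr rfl fun m _ => ?_
    simp only [Md.negEquiv, Equiv.coe_fn_mk, Md.coe_neg]; push_cast; ring
  simp only [mul_sub, Finset.sum_sub_distrib]
  simp only [neg_mul, Finset.sum_neg_distrib] at h1
  linarith

/-- The symplectic area of loops is invariant under symplectic linear maps. -/
theorem area_Lact (hL : ∀ v w, stdSymp n (L v) (L w) = stdSymp n v w) (c : GV n N) :
    ∑ k : Md N × Fin n, ((k.1 : ℤ) : ℝ) * ‖Lact L c k‖ ^ 2 =
      ∑ k : Md N × Fin n, ((k.1 : ℤ) : ℝ) * ‖c k‖ ^ 2 := by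
  rw [Fintype.sum_prod_type, Fintype.sum_prod_type]
  simp only [← Finset.mul_sum]
  rw [sum_antisymm, sum_antisymm (fun m => ∑ i, ‖c (m, i)‖ ^ 2)]
  congr 1
  refine Finset.sum_congr rfl fun m _ => ?_
  congr 1
  rw [← Finset.sum_sub_distrib, ← Finset.sum_sub_distrib]
  have := La_Lb_norm_sq L hL (coefL m c) (coefL m.neg c)
  simp only [Lact_apply, Md.neg_neg]
  exact this

theorem area_Lact_inner (hL : ∀ v w, stdSymp n (L v) (L w) = stdSymp n v w) (c d : GV n N) :
    ∑ k : Md N × Fin n, ((k.1 : ℤ) : ℝ) * inner ℝ (Lact L c k) (Lact L d k) =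
      ∑ k : Md N × Fin n, ((k.1 : ℤ) : ℝ) * inner ℝ (c k) (d k) := by
  have h1 := area_Lact L hL (c + d)
  have h2 := area_Lact L hL c
  have h3 := area_Lact L hL d
  simp only [map_add, PiLp.add_apply, norm_add_sq_real, mul_add, Finset.sum_add_distrib] at h1
  have e : ∀ u v : GV n N, ∑ k : Md N × Fin n, ((k.1 : ℤ) : ℝ) * (2 * inner ℝ (u k) (v k)) =
      2 * ∑ k : Md N × Fin n, ((k.1 : ℤ) : ℝ) * inner ℝ (u k) (v k) := by
    intro u v; rw [Finset.mul_sum]; refine Finset.sum_congr rfl fun k _ => by ring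
  rw [e, e] at h1
  linarith

end LinearAction

/-! ### Positivity of the action near the origin -/

section CriticalPoint

variable {n N : ℕ} {K : (Fin n → ℂ) → ℝ} {Gr : (Fin n → ℂ) → Fin n → ℂ} {σ τ : Fin n → ℝ}
  {L : (Fin n → ℂ) ≃L[ℝ] (Fin n → ℂ)}

/-- Near the origin, in the linear symplectic coordinates `L`, the gradient field `Gr` is
asymptotic to the nonresonant linear gradient with frequencies `τ i < 2`. -/
structure LinAt (Gr : (Fin n → ℂ) → Fin n → ℂ) (L : (Fin n → ℂ) ≃L[ℝ] (Fin n → ℂ))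
    (τ : Fin n → ℝ) : Prop where
  symp : ∀ v w, stdSymp n (L v) (L w) = stdSymp n v w
  approx : ∀ ε > 0, ∃ δ > 0, ∀ y : Fin n → ℂ, ‖y‖ ≤ δ → ∀ v,
    |rpL (Gr (L y)) (L v) - ∑ i, 2 * π * τ i * inner ℝ (y i) (v i)| ≤ ε * ‖y‖ * ‖v‖
  nonres : ∀ i (m : ℤ), τ i ≠ m
  lt_two : ∀ i, τ i < 2

theorem sq_norm_le_sum (z : Fin n → ℂ) : ‖z‖ ^ 2 ≤ ∑ i, ‖z i‖ ^ 2 := by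
  have h0 : 0 ≤ ∑ i, ‖z i‖ ^ 2 := Finset.sum_nonneg fun _ _ => by positivity
  have : ‖z‖ ≤ √(∑ i, ‖z i‖ ^ 2) := by
    refine (pi_norm_le_iff_of_nonneg (Real.sqrt_nonneg _)).2 fun i => ?_
    refine Real.le_sqrt_of_sq_le ?_
    exact Finset.single_le_sum (f := fun i => ‖z i‖ ^ 2) (fun _ _ => by positivity)
      (Finset.mem_univ i)
  calc ‖z‖ ^ 2 ≤ √(∑ i, ‖z i‖ ^ 2) ^ 2 := by gcongr
    _ = _ := Real.sq_sqrt h0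

theorem K_le_quad (h : IsHam K Gr σ) (hl : LinAt Gr L τ) {ε : ℝ} (hε : 0 < ε) :
    ∃ δ > 0, ∀ z : Fin n → ℂ, ‖z‖ ≤ δ →
      K (L z) ≤ π * ∑ i, τ i * ‖z i‖ ^ 2 + ε * ∑ i, ‖z i‖ ^ 2 := by
  obtain ⟨δ, hδ, H⟩ := hl.approx ε hε
  refine ⟨δ, hδ, fun z hz => ?_⟩
  set Q : ℝ := π * ∑ i, τ i * ‖z i‖ ^ 2 with hQ
  have hd : ∀ s : ℝ, HasDerivAt (fun s : ℝ => s ^ 2 * Q + s ^ 2 * ε * ‖z‖ ^ 2 - K (L (s • z)))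
      (2 * s * Q + 2 * s * ε * ‖z‖ ^ 2 - rpL (Gr (L (s • z))) (L z)) s := by
    intro s
    have h1 : HasDerivAt (fun s : ℝ => L (s • z)) (L z) s := by
      have := ((hasDerivAt_id s).smul_const z)
      have h2 := (L : (Fin n → ℂ) →L[ℝ] (Fin n → ℂ)).hasFDerivAt.comp_hasDerivAt s this
      rw [one_smul] at h2
      exact h2
    have h2 := (h.hK (L (s • z))).comp_hasDerivAt s h1
    have h3 : HasDerivAt (fun s : ℝ => s ^ 2 * Q + s ^ 2 * ε * ‖z‖ ^ 2)
        (2 * s * Q + 2 * s * ε * ‖z‖ ^ 2) s := by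
      have := hasDerivAt_pow 2 s
      convert (this.mul_const Q).add ((this.mul_const ε).mul_const (‖z‖ ^ 2)) using 1 <;>
        first | rfl | simp
    exact h3.sub h2
  have hmono : MonotoneOn (fun s : ℝ => s ^ 2 * Q + s ^ 2 * ε * ‖z‖ ^ 2 - K (L (s • z)))
      (Icc 0 1) := by
    refine monotoneOn_of_deriv_nonneg (convex_Icc 0 1)
      (continuousOn_of_forall_continuousAt fun s _ => (hd s).continuousAt)
      (fun s _ => (hd s).differentiableAt.differentiableWithinAt) fun s hs => ?_
    rw [interior_Icc] at hs
    rw [(hd s).deriv]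
    have h1 := H (s • z) (by
      rw [norm_smul, Real.norm_eq_abs, abs_of_pos hs.1]
      nlinarith [norm_nonneg z, hs.2]) z
    have e : ∑ i, 2 * π * τ i * inner ℝ ((s • z) i) (z i) = 2 * s * Q := by
      rw [hQ, Finset.mul_sum, Finset.mul_sum]
      refine Finset.sum_congr rfl fun i _ => ?_
      rw [Pi.smul_apply, inner_smul_left, real_inner_self_eq_norm_sq]; simp; ring
    rw [e, norm_smul, Real.norm_eq_abs, abs_of_pos hs.1] at h1
    have h2 := (abs_le.1 h1).2
    have h3 : 0 ≤ ε * s * ‖z‖ ^ 2 := by have := hs.1; positivity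
    nlinarith
  have := hmono (left_mem_Icc.2 zero_le_one) (right_mem_Icc.2 zero_le_one) zero_le_one
  simp only [ne_eq, OfNat.ofNat_ne_zero, not_false_eq_true, zero_pow, zero_mul, zero_smul,
    map_zero, h.K_zero, one_pow, one_mul, one_smul] at this
  have h4 := mul_le_mul_of_nonneg_left (sq_norm_le_sum z) hε.le
  linarith

theorem integral_sum_norm_sq_loop (w : Fin n → ℝ) (c : GV n N) :
    ∫ t in (0:ℝ)..1, ∑ i, w i * ‖loopL n N t c i‖ ^ 2 =
      ∑ k : Md N × Fin n, w k.2 * ‖c k‖ ^ 2 := by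
  rw [intervalIntegral.integral_finsetSum]
  · rw [Fintype.sum_prod_type_right]
    refine Finset.sum_congr rfl fun i _ => ?_
    rw [intervalIntegral.integral_const_mul]
    simp only [loopL_apply, ← Finset.mul_sum]
    congr 1
    exact integral_norm_sq_trig (Md_inj N) _
  · intro i _
    refine Continuous.intervalIntegrable ?_ _ _
    have := (continuous_apply i).comp (loop_continuous c)
    exact continuous_const.mul (this.norm.pow 2)

theorem K_loop_continuous (h : IsHam K Gr σ) (c : GV n N) :
    Continuous fun t => K (loopL n N t c) :=
  (continuous_iff_continuousAt.2 fun x => (h.hK x).continuousAt).comp (loop_continuous c)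

theorem Lact_Lact_symm (L : (Fin n → ℂ) ≃L[ℝ] (Fin n → ℂ)) (x : GV n N) :
    Lact (L : (Fin n → ℂ) →L[ℝ] (Fin n → ℂ))
      (Lact (L.symm : (Fin n → ℂ) →L[ℝ] (Fin n → ℂ)) x) = x :=
  loop_injective fun t => by rw [loopL_Lact, loopL_Lact]; simp

/-- The action is positive definite near the origin on the loops whose coefficients, in the
coordinates `L`, vanish where `m - τ i` is negative. -/
theorem actF_pos (h : IsHam K Gr σ) (hl : LinAt Gr L τ) :
    ∃ c > 0, ∃ r > 0, ∀ x : GV n N,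
      (∀ k : Md N × Fin n, ((k.1 : ℤ) ≤ 0 ∨ ((k.1 : ℤ) = 1 ∧ 1 < τ k.2)) →
        Lact (L.symm : (Fin n → ℂ) →L[ℝ] (Fin n → ℂ)) x k = 0) → ‖x‖ ≤ r →
      c * ‖x‖ ^ 2 ≤ actF K x := by
  obtain ⟨ρ, hρ, hgap⟩ := exists_gap τ hl.nonres
  obtain ⟨δ, hδ, hq⟩ := K_le_quad h hl (ε := π * ρ / 2) (by positivity)
  obtain ⟨M, hM0, hM⟩ := exists_loopL_bound n N
  set A : GV n N →L[ℝ] GV n N := Lact (L.symm : (Fin n → ℂ) →L[ℝ] (Fin n → ℂ)) with hA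
  set A' : GV n N →L[ℝ] GV n N := Lact (L : (Fin n → ℂ) →L[ℝ] (Fin n → ℂ)) with hA'
  have hAA : ∀ x, A' (A x) = x := Lact_Lact_symm L
  refine ⟨π * ρ / 2 / (‖A'‖ + 1) ^ 2, by positivity, δ / ((M + 1) * (‖A‖ + 1)), by positivity,
    fun x hx hxr => ?_⟩
  set y := A x with hy
  have hAy : A' y = x := hAA x
  have hnx : ‖x‖ ≤ (‖A'‖ + 1) * ‖y‖ := by
    rw [← hAy]; exact (A'.le_opNorm _).trans (by gcongr; linarith)
  have hloop : ∀ t ∈ Icc (0:ℝ) 1, ‖loopL n N t y‖ ≤ δ := by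
    intro t ht
    calc ‖loopL n N t y‖ ≤ (M + 1) * ‖y‖ :=
          ((loopL n N t).le_opNorm _).trans (by gcongr; linarith [hM t ht])
      _ ≤ (M + 1) * ((‖A‖ + 1) * ‖x‖) := by
          gcongr; exact (A.le_opNorm _).trans (by gcongr; linarith)
      _ ≤ (M + 1) * ((‖A‖ + 1) * (δ / ((M + 1) * (‖A‖ + 1)))) := by gcongr
      _ = δ := by field_simp
  have hxy : ∀ t, loopL n N t x = L (loopL n N t y) := by
    intro t
    have h1 : loopL n N t (A' y) = L (loopL n N t y) :=
      loopL_Lact (L : (Fin n → ℂ) →L[ℝ] (Fin n → ℂ)) t y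
    rwa [hAy] at h1
  have harea : ∑ k : Md N × Fin n, ((k.1 : ℤ) : ℝ) * ‖x k‖ ^ 2 =
      ∑ k : Md N × Fin n, ((k.1 : ℤ) : ℝ) * ‖y k‖ ^ 2 := by
    have h1 := area_Lact (L : (Fin n → ℂ) →L[ℝ] (Fin n → ℂ)) hl.symp y
    rw [← hA', hAy] at h1
    exact h1
  have hintg : ∫ t in (0:ℝ)..1, K (loopL n N t x) ≤
      ∑ k : Md N × Fin n, (π * τ k.2 + π * ρ / 2) * ‖y k‖ ^ 2 := by
    rw [← integral_sum_norm_sq_loop (fun i => π * τ i + π * ρ / 2) y]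
    refine intervalIntegral.integral_mono_on zero_le_one
      ((K_loop_continuous h x).intervalIntegrable _ _) ?_ fun t ht => ?_
    · refine Continuous.intervalIntegrable (continuous_finsetSum _ fun i _ => ?_) _ _
      have := (continuous_apply i).comp (loop_continuous y)
      exact continuous_const.mul (this.norm.pow 2)
    · rw [hxy]
      refine (hq _ (hloop t ht)).trans (le_of_eq ?_)
      rw [Finset.mul_sum, Finset.mul_sum, ← Finset.sum_add_distrib]
      exact Finset.sum_congr rfl fun i _ => by ring
  have hkey : π * ρ / 2 * ‖y‖ ^ 2 ≤ actF K x := by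
    unfold actF
    rw [harea, PiLp.norm_sq_eq_of_L2, Finset.mul_sum, Finset.mul_sum]
    have : ∑ k : Md N × Fin n, π * ρ / 2 * ‖y k‖ ^ 2 ≤
        ∑ k : Md N × Fin n, (π * (((k.1 : ℤ) : ℝ) * ‖y k‖ ^ 2) -
          (π * τ k.2 + π * ρ / 2) * ‖y k‖ ^ 2) := by
      refine Finset.sum_le_sum fun k _ => ?_
      by_cases hk : ((k.1 : ℤ) ≤ 0 ∨ ((k.1 : ℤ) = 1 ∧ 1 < τ k.2))
      · rw [hx k hk]; simp
      · push Not at hk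
        have h1 : 0 ≤ ((k.1 : ℤ) : ℝ) - τ k.2 := by
          by_cases h1 : (k.1 : ℤ) = 1
          · have := hk.2 h1; rw [h1]; push_cast; linarith
          · have h2 : (2:ℤ) ≤ k.1 := by omega
            have h3 : (2:ℝ) ≤ ((k.1 : ℤ) : ℝ) := by exact_mod_cast h2
            linarith [hl.lt_two k.2]
        have h2 := hgap k.2 k.1
        rw [abs_of_nonneg h1] at h2
        have h3 : 0 ≤ π * (((k.1 : ℤ) : ℝ) - τ k.2 - ρ) * ‖y k‖ ^ 2 := by
          have : 0 ≤ ((k.1 : ℤ) : ℝ) - τ k.2 - ρ := by linarith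
          positivity
        linarith
    rw [Finset.sum_sub_distrib] at this
    linarith
  refine le_trans ?_ hkey
  rw [div_mul_eq_mul_div, div_le_iff₀ (by positivity), mul_assoc]
  refine mul_le_mul_of_nonneg_left ?_ (by positivity)
  calc ‖x‖ ^ 2 ≤ ((‖A'‖ + 1) * ‖y‖) ^ 2 := by gcongr
    _ = _ := by ring

end CriticalPoint

/-! ### Critical points of the Galerkin approximations -/

section CriticalPointExists

variable {n N : ℕ} {K : (Fin n → ℂ) → ℝ} {Gr : (Fin n → ℂ) → Fin n → ℂ} {σ τ : Fin n → ℝ}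
  {L : (Fin n → ℂ) ≃L[ℝ] (Fin n → ℂ)}

/-- The Fourier modes on which the action is bounded above: frequency at most `0`, or frequency
`1` in a coordinate with `σ i > 1`. -/
abbrev NegMode (N : ℕ) (σ : Fin n → ℝ) : Type :=
  {k : Md N × Fin n // (k.1 : ℤ) ≤ 0 ∨ ((k.1 : ℤ) = 1 ∧ 1 < σ k.2)}

open Classical in
/-- Extension by zero. -/
def extL (N : ℕ) (σ : Fin n → ℝ) : (NegMode N σ → ℂ) →L[ℝ] GV n N :=
  LinearMap.toContinuousLinearMap
    { toFun := fun x => WithLp.toLp 2 fun k =>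
        if hk : (k.1 : ℤ) ≤ 0 ∨ ((k.1 : ℤ) = 1 ∧ 1 < σ k.2) then x ⟨k, hk⟩ else 0
      map_add' := fun x y => by
        ext k
        simp only [PiLp.add_apply, Pi.add_apply]
        split_ifs <;> simp
      map_smul' := fun r x => by
        ext k
        simp only [PiLp.smul_apply, Pi.smul_apply, RingHom.id_apply]
        split_ifs <;> simp }

open Classical in
theorem extL_apply (x : NegMode N σ → ℂ) (k : Md N × Fin n) : extL N σ x k =
    if hk : (k.1 : ℤ) ≤ 0 ∨ ((k.1 : ℤ) = 1 ∧ 1 < σ k.2) then x ⟨k, hk⟩ else 0 := rfl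

theorem extL_apply_mode (x : NegMode N σ → ℂ) (k : NegMode N σ) : extL N σ x k.1 = x k := by
  rw [extL_apply, dif_pos k.2]

theorem extL_apply_of_not (x : NegMode N σ → ℂ) (k : Md N × Fin n)
    (hk : ¬ ((k.1 : ℤ) ≤ 0 ∨ ((k.1 : ℤ) = 1 ∧ 1 < σ k.2))) : extL N σ x k = 0 := by
  rw [extL_apply, dif_neg hk]

theorem actF_extL_le (h : IsHam K Gr σ) :
    ∃ B : ℝ, ∀ x : NegMode N σ → ℂ, actF K (extL N σ x) ≤ B := by
  obtain ⟨C, hC⟩ := h.low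
  refine ⟨C, fun x => ?_⟩
  set c := extL N σ x with hc
  have h1 : ∫ t in (0:ℝ)..1, (π * ∑ i, (if 1 < σ i then (1:ℝ) else 0) * ‖loopL n N t c i‖ ^ 2 - C)
      ≤ ∫ t in (0:ℝ)..1, K (loopL n N t c) := by
    refine intervalIntegral.integral_mono_on zero_le_one ?_
      ((K_loop_continuous h c).intervalIntegrable _ _) fun t _ => ?_
    · refine Continuous.intervalIntegrable (Continuous.sub (continuous_const.mul
        (continuous_finsetSum _ fun i _ => ?_)) continuous_const) _ _
      have := (continuous_apply i).comp (loop_continuous c)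
      exact continuous_const.mul (this.norm.pow 2)
    · refine le_trans (le_of_eq ?_) (hC (loopL n N t c))
      simp
  rw [intervalIntegral.integral_sub, intervalIntegral.integral_const_mul,
    integral_sum_norm_sq_loop] at h1
  · simp only [intervalIntegral.integral_const, sub_zero, one_smul] at h1
    have h2 : ∑ k : Md N × Fin n, ((k.1 : ℤ) : ℝ) * ‖c k‖ ^ 2 ≤
        ∑ k : Md N × Fin n, (if 1 < σ k.2 then (1:ℝ) else 0) * ‖c k‖ ^ 2 := by
      refine Finset.sum_le_sum fun k _ => ?_
      by_cases hk : (k.1 : ℤ) ≤ 0 ∨ ((k.1 : ℤ) = 1 ∧ 1 < σ k.2)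
      · refine mul_le_mul_of_nonneg_right ?_ (by positivity)
        rcases hk with hk | hk
        · have : ((k.1 : ℤ) : ℝ) ≤ 0 := by exact_mod_cast hk
          split_ifs <;> linarith
        · rw [if_pos hk.2, hk.1]; simp
      · rw [hc, extL_apply_of_not x k hk]; simp
    have h3 := mul_le_mul_of_nonneg_left h2 Real.pi_pos.le
    unfold actF
    linarith
  · refine Continuous.intervalIntegrable (continuous_const.mul
        (continuous_finsetSum _ fun i _ => ?_)) _ _
    have := (continuous_apply i).comp (loop_continuous c)
    exact continuous_const.mul (this.norm.pow 2)
  · exact intervalIntegrable_const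

/-- A loop with coefficients in `NegMode` that is invariant under the half period shift has no
mode of frequency `1`, hence its action is nonpositive. -/
theorem actF_extL_fix (h : IsHam K Gr σ) (x : NegMode N σ → ℂ)
    (hx : ∀ k : NegMode N σ, sgnC k.1.1 • x k = x k) : actF K (extL N σ x) ≤ 0 := by
  have h1 : 0 ≤ ∫ t in (0:ℝ)..1, K (loopL n N t (extL N σ x)) :=
    intervalIntegral.integral_nonneg zero_le_one fun t _ => h.K_nonneg _
  have h2 : ∑ k : Md N × Fin n, ((k.1 : ℤ) : ℝ) * ‖extL N σ x k‖ ^ 2 ≤ 0 := by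
    refine Finset.sum_nonpos fun k _ => ?_
    by_cases hk : (k.1 : ℤ) ≤ 0 ∨ ((k.1 : ℤ) = 1 ∧ 1 < σ k.2)
    · rcases id hk with hk1 | hk1
      · have : ((k.1 : ℤ) : ℝ) ≤ 0 := by exact_mod_cast hk1
        exact mul_nonpos_of_nonpos_of_nonneg this (by positivity)
      · have h3 := hx ⟨k, hk⟩
        rw [extL_apply_mode x ⟨k, hk⟩]
        simp only [hk1.1, sgnC_one, neg_smul, one_smul] at h3
        have : x ⟨k, hk⟩ = 0 := by linear_combination (-1 / 2 : ℂ) * h3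
        rw [this]; simp
    · rw [extL_apply_of_not x k hk]; simp
  unfold actF
  have := mul_nonpos_of_nonneg_of_nonpos Real.pi_pos.le h2
  linarith

/-- The projection onto the modes `NegMode`, in the coordinates `L`, with the frequency `1`
modes permuted by `e` and the mode `(1, i₀)` left out. -/
def prL (N : ℕ) (σ : Fin n → ℝ) (L : (Fin n → ℂ) ≃L[ℝ] (Fin n → ℂ)) (e : Equiv.Perm (Fin n))
    (i₀ : Fin n) : GV n N →L[ℝ] (NegMode N σ → ℂ) :=
  ContinuousLinearMap.pi fun k =>
    (if (k.1.1 : ℤ) ≤ 0 then PiLp.proj 2 (𝕜 := ℝ) (fun _ : Md N × Fin n => ℂ) k.1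
      else if k.1.2 = i₀ then 0
      else PiLp.proj 2 (𝕜 := ℝ) (fun _ : Md N × Fin n => ℂ) (k.1.1, e.symm k.1.2)).comp
    (Lact (L.symm : (Fin n → ℂ) →L[ℝ] (Fin n → ℂ)))

/-- The Galerkin approximation of the action functional has a nontrivial critical point of
nonnegative action, provided `σ` has more entries above `1` than `τ`, as witnessed by the
permutation `e` and the spare index `i₀`. -/
theorem exists_crit (hN : 1 ≤ N) (h : IsHam K Gr σ) (hl : LinAt Gr L τ) (e : Equiv.Perm (Fin n))
    (i₀ : Fin n) (hi₀ : 1 < σ i₀) (he : ∀ r, 1 < τ r → e r ≠ i₀ ∧ 1 < σ (e r)) :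
    ∃ x : GV n N, x ≠ 0 ∧ actG Gr x = 0 ∧ 0 ≤ actF K x := by
  by_contra hcon
  push Not at hcon
  obtain ⟨Λ, hΛ0, hΛ⟩ := exists_lip_actG (N := N) h
  obtain ⟨κ, C, hκ, hcoer⟩ := exists_coercive_actG (N := N) h
  obtain ⟨B, hB⟩ := actF_extL_le (N := N) h
  obtain ⟨c, hc, r, hr, hpos⟩ := actF_pos (N := N) h hl
  let one : Md N := ⟨1, by simp only [Finset.mem_Icc]; omega⟩
  have hone : (one : ℤ) = 1 := rfl
  let k₀ : NegMode N σ := ⟨(one, i₀), Or.inr ⟨rfl, hi₀⟩⟩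
  let ιE : (NegMode N σ → ℂ) →L[ℝ] (NegMode N σ → ℂ) :=
    ContinuousLinearMap.pi fun k => sgnC k.1.1 •
      ContinuousLinearMap.proj (R := ℝ) (φ := fun _ : NegMode N σ => ℂ) k
  have hιE : ∀ x k, ιE x k = sgnC k.1.1 • x k := fun x k => rfl
  have hprι : ∀ x k, prL N σ L e i₀ (shiftV n N x) k = sgnC k.1.1 • prL N σ L e i₀ x k := by
    intro x k
    simp only [prL, ContinuousLinearMap.pi_apply, ContinuousLinearMap.comp_apply, Lact_shiftV]
    split_ifs
    · rfl
    · simp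
    · rfl
  refine no_linking (Φ := actF K) (G := actG Gr) (actF_hasFDerivAt h) (contDiff_actG h.hGr) hΛ0 hΛ
    (ιV := shiftV n N) norm_shiftV actG_shiftV (ιE := ιE) ?_ (j := extL N σ) ?_ ?_
    (p := prL N σ L e i₀) (fun x => funext fun k => hprι x k)
    (ℓ := Complex.reCLM.comp (ContinuousLinearMap.proj (R := ℝ) (φ := fun _ : NegMode N σ => ℂ) k₀))
    (v₀ := fun _ => 1) ?_ ?_ ?_ ?_ hκ hcoer ?_ hB ?_ hc hr ?_
  · intro x
    funext k
    rw [hιE, hιE, smul_smul, sgnC_mul_self, one_smul]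
  · intro x y hxy
    funext k
    rw [← extL_apply_mode x k, hxy, extL_apply_mode]
  · intro x
    ext k
    by_cases hk : (k.1 : ℤ) ≤ 0 ∨ ((k.1 : ℤ) = 1 ∧ 1 < σ k.2)
    · rw [extL_apply_mode _ ⟨k, hk⟩, shiftV, diagL_apply, extL_apply_mode _ ⟨k, hk⟩, hιE]
    · rw [shiftV, diagL_apply, extL_apply_of_not _ _ hk, extL_apply_of_not _ _ hk, smul_zero]
  · simp
  · intro x
    simp [prL, k₀, hone]
  · simp [actF, h.K_zero]
  · ext k
    simp [actG, h.Gr_zero, fc]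
  · intro x h1 h2
    by_contra hx
    exact absurd h2 (not_le.2 (hcon x hx h1))
  · intro x hx
    exact actF_extL_fix h x fun k => by rw [← hιE, hx]
  · intro x hx
    refine hpos x fun k hk => ?_
    rcases hk with hk | ⟨hk1, hk2⟩
    · have := congrFun hx ⟨k, Or.inl hk⟩
      simpa [prL, hk] using this
    · obtain ⟨h1, h2⟩ := he k.2 hk2
      have := congrFun hx ⟨(k.1, e k.2), Or.inr ⟨hk1, h2⟩⟩
      simpa [prL, hk1, h1] using this

end CriticalPointExists

/-! ### A priori estimates for critical points -/

section Apriori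

variable {n N : ℕ} {K : (Fin n → ℂ) → ℝ} {Gr : (Fin n → ℂ) → Fin n → ℂ} {σ τ : Fin n → ℝ}
  {L : (Fin n → ℂ) ≃L[ℝ] (Fin n → ℂ)}

theorem integral_norm_sq_loop_le (y : GV n N) :
    ∫ t in (0:ℝ)..1, ‖loopL n N t y‖ ^ 2 ≤ ‖y‖ ^ 2 := by
  have h1 := integral_sum_norm_sq_loop (fun _ => 1) y
  simp only [one_mul] at h1
  rw [PiLp.norm_sq_eq_of_L2, ← h1]
  refine intervalIntegral.integral_mono_on zero_le_one
    (((loop_continuous y).norm.pow 2).intervalIntegrable _ _) ?_ fun t _ => sq_norm_le_sum _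
  refine Continuous.intervalIntegrable (continuous_finsetSum _ fun i _ => ?_) _ _
  have := (continuous_apply i).comp (loop_continuous y)
  exact this.norm.pow 2

/-- Nonresonance at the origin: a critical point which stays close to the origin vanishes. -/
theorem crit_eq_zero_of_small (h : IsHam K Gr σ) (hl : LinAt Gr L τ) :
    ∃ δ > 0, ∀ (N : ℕ) (x : GV n N), actG Gr x = 0 → (∀ t, ‖loopL n N t x‖ ≤ δ) → x = 0 := by
  obtain ⟨ρ, hρ, hgap⟩ := exists_gap τ hl.nonres
  obtain ⟨δ, hδ, happ⟩ := hl.approx (π * ρ) (by positivity)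
  set nL : ℝ := ‖(L.symm : (Fin n → ℂ) →L[ℝ] (Fin n → ℂ))‖ with hnL
  refine ⟨δ / (nL + 1), by positivity, fun N x hx hsmall => ?_⟩
  set y : GV n N := Lact (L.symm : (Fin n → ℂ) →L[ℝ] (Fin n → ℂ)) x with hy
  have hLy : Lact (L : (Fin n → ℂ) →L[ℝ] (Fin n → ℂ)) y = x := Lact_Lact_symm L x
  have hloopx : ∀ t, loopL n N t x = L (loopL n N t y) := by
    intro t
    have h1 := loopL_Lact (L : (Fin n → ℂ) →L[ℝ] (Fin n → ℂ)) t y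
    rw [hLy] at h1
    exact h1
  have hloopy : ∀ t, ‖loopL n N t y‖ ≤ δ := by
    intro t
    rw [hy, loopL_Lact]
    calc _ ≤ nL * ‖loopL n N t x‖ := ContinuousLinearMap.le_opNorm _ _
      _ ≤ (nL + 1) * (δ / (nL + 1)) := by
          gcongr
          · linarith
          · exact hsmall t
      _ = δ := mul_div_cancel₀ δ (by positivity)
  set v : GV n N := diagL (fun k => SignType.sign (((k.1 : ℤ) : ℝ) - τ k.2) : _ → ℝ) y with hv
  have hvn : ‖v‖ ^ 2 ≤ ‖y‖ ^ 2 := by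
    rw [PiLp.norm_sq_eq_of_L2, PiLp.norm_sq_eq_of_L2]
    refine Finset.sum_le_sum fun k _ => ?_
    rw [hv, diagL_apply, norm_smul]
    refine pow_le_pow_left₀ (by positivity) ?_ 2
    refine mul_le_of_le_one_left (norm_nonneg _) ?_
    rcases SignType.sign (((k.1 : ℤ) : ℝ) - τ k.2) with _ | _ | _ <;> simp
  -- the weak form of the equation, tested against `L v`
  have hweak : ∑ k : Md N × Fin n, 2 * π * (((k.1 : ℤ) : ℝ) * inner ℝ (y k) (v k)) =
      ∫ t in (0:ℝ)..1, rpL (Gr (L (loopL n N t y))) (L (loopL n N t v)) := by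
    have hcont : Continuous fun t => Gr (loopL n N t x) :=
      h.hGr.continuous.comp (loop_continuous x)
    have h1 := integral_rp_loop hcont (Lact (L : (Fin n → ℂ) →L[ℝ] (Fin n → ℂ)) v)
    simp only [loopL_Lact, hloopx] at h1
    rw [show (∫ t in (0:ℝ)..1, rpL (Gr (L (loopL n N t y))) (L (loopL n N t v))) = _ from h1]
    have h2 := area_Lact_inner (L : (Fin n → ℂ) →L[ℝ] (Fin n → ℂ)) hl.symp y v
    rw [hLy] at h2
    rw [← Finset.mul_sum, ← h2, Finset.mul_sum]
    refine Finset.sum_congr rfl fun k _ => ?_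
    have h3 : actG Gr x k = 0 := by rw [hx]; rfl
    simp only [actG] at h3
    have h4 := sub_eq_zero.1 h3
    simp only [hloopx] at h4
    rw [← h4, ← Complex.real_smul, inner_smul_left]
    simp; ring
  have hlin : ∑ k : Md N × Fin n, 2 * π * (τ k.2 * inner ℝ (y k) (v k)) =
      ∫ t in (0:ℝ)..1, ∑ i, 2 * π * τ i * inner ℝ (loopL n N t y i) (loopL n N t v i) := by
    have hcont : Continuous fun t => (fun i => (2 * π * τ i : ℝ) • loopL n N t y i) :=
      continuous_pi fun i => by
        have h5 : Continuous fun t => loopL n N t y i :=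
          (continuous_apply i).comp (loop_continuous y)
        fun_prop
    have h1 := integral_rp_loop hcont v
    simp only [rpL_apply, inner_smul_left] at h1
    refine Eq.trans ?_ (h1.symm.trans ?_)
    · refine Finset.sum_congr rfl fun k _ => ?_
      have : fc (fun t => (2 * π * τ k.2 : ℝ) • loopL n N t y k.2) k.1 =
          (2 * π * τ k.2 : ℝ) • y k := by
        simp only [Complex.real_smul]
        rw [fc_const_mul, fc_loop]
      rw [this, inner_smul_left]; simp; ring
    · simp
  have hcy := loop_continuous y
  have hcv := loop_continuous v
  have hdiff : ∑ k : Md N × Fin n, 2 * π * ((((k.1 : ℤ) : ℝ) - τ k.2) * inner ℝ (y k) (v k)) ≤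
      π * ρ * ‖y‖ ^ 2 := by
    have h1 : ∑ k : Md N × Fin n, 2 * π * ((((k.1 : ℤ) : ℝ) - τ k.2) * inner ℝ (y k) (v k)) =
        ∫ t in (0:ℝ)..1, (rpL (Gr (L (loopL n N t y))) (L (loopL n N t v)) -
          ∑ i, 2 * π * τ i * inner ℝ (loopL n N t y i) (loopL n N t v i)) := by
      rw [intervalIntegral.integral_sub, ← hweak, ← hlin, ← Finset.sum_sub_distrib]
      · exact Finset.sum_congr rfl fun k _ => by ring
      · refine Continuous.intervalIntegrable ?_ _ _
        exact (rpL_continuous.comp (h.hGr.continuous.comp (L.continuous.comp hcy))).clm_apply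
          (L.continuous.comp hcv)
      · refine Continuous.intervalIntegrable (continuous_finsetSum _ fun i _ => ?_) _ _
        exact continuous_const.mul (((continuous_apply i).comp hcy).inner
          ((continuous_apply i).comp hcv))
    rw [h1]
    have h2 : ∫ t in (0:ℝ)..1, (rpL (Gr (L (loopL n N t y))) (L (loopL n N t v)) -
          ∑ i, 2 * π * τ i * inner ℝ (loopL n N t y i) (loopL n N t v i)) ≤
        ∫ t in (0:ℝ)..1, (π * ρ / 2 * ‖loopL n N t y‖ ^ 2 + π * ρ / 2 * ‖loopL n N t v‖ ^ 2) := by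
      refine intervalIntegral.integral_mono_on zero_le_one ?_ ?_ fun t _ => ?_
      · refine Continuous.intervalIntegrable (Continuous.sub ?_
          (continuous_finsetSum _ fun i _ => ?_)) _ _
        · exact (rpL_continuous.comp (h.hGr.continuous.comp (L.continuous.comp hcy))).clm_apply
            (L.continuous.comp hcv)
        · exact continuous_const.mul (((continuous_apply i).comp hcy).inner
            ((continuous_apply i).comp hcv))
      · exact Continuous.intervalIntegrable ((continuous_const.mul (hcy.norm.pow 2)).add
          (continuous_const.mul (hcv.norm.pow 2))) _ _
      · refine (le_abs_self _).trans ((happ _ (hloopy t) _).trans ?_)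
        have h3 : 0 ≤ π * ρ / 2 * (‖loopL n N t y‖ - ‖loopL n N t v‖) ^ 2 := by positivity
        nlinarith
    refine h2.trans ?_
    rw [intervalIntegral.integral_add, intervalIntegral.integral_const_mul,
      intervalIntegral.integral_const_mul]
    · have h3 := integral_norm_sq_loop_le y
      have h4 := (integral_norm_sq_loop_le v).trans hvn
      have h5 : 0 ≤ π * ρ / 2 := by positivity
      nlinarith
    · exact Continuous.intervalIntegrable (continuous_const.mul (hcy.norm.pow 2)) _ _
    · exact Continuous.intervalIntegrable (continuous_const.mul (hcv.norm.pow 2)) _ _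
  have hlow : 2 * π * ρ * ‖y‖ ^ 2 ≤
      ∑ k : Md N × Fin n, 2 * π * ((((k.1 : ℤ) : ℝ) - τ k.2) * inner ℝ (y k) (v k)) := by
    rw [PiLp.norm_sq_eq_of_L2, Finset.mul_sum]
    refine Finset.sum_le_sum fun k _ => ?_
    rw [hv, diagL_apply, inner_smul_right, real_inner_self_eq_norm_sq]
    have h1 : (((k.1 : ℤ) : ℝ) - τ k.2) * ((SignType.sign (((k.1 : ℤ) : ℝ) - τ k.2) : ℝ) * ‖y k‖ ^ 2)
        = |((k.1 : ℤ) : ℝ) - τ k.2| * ‖y k‖ ^ 2 := by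
      rw [← mul_assoc, mul_comm _ (SignType.sign _ : ℝ), sign_mul_self]
    rw [h1, mul_assoc]
    have h2 := mul_le_mul_of_nonneg_right (hgap k.2 k.1) (sq_nonneg ‖y k‖)
    exact mul_le_mul_of_nonneg_left h2 (by positivity)
  have hy0 : ‖y‖ ^ 2 = 0 := by
    have h0 : 0 ≤ ‖y‖ ^ 2 := by positivity
    have h1 : π * ρ * ‖y‖ ^ 2 ≤ 0 := by linarith
    have h2 : 0 < π * ρ := by positivity
    nlinarith
  have : y = 0 := by simpa using hy0
  rw [← hLy, this, map_zero]

/-- Bessel's inequality. -/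
theorem bessel {u : ℝ → Fin n → ℂ} (hu : Continuous u) {C : ℝ} (hC : ∀ t i, ‖u t i‖ ≤ C) :
    ∑ k : Md N × Fin n, ‖fc (fun t => u t k.2) k.1‖ ^ 2 ≤ n * C ^ 2 := by
  set v : GV n N := WithLp.toLp 2 fun k => fc (fun t => u t k.2) k.1 with hv
  have hcv := loop_continuous v
  have h1 := integral_rp_loop hu v
  have h2 := integral_sum_norm_sq_loop (fun _ => 1) v
  simp only [one_mul] at h2
  have hs : Continuous fun t => ∑ i, ‖loopL n N t v i‖ ^ 2 :=
    continuous_finsetSum _ fun i _ => ((continuous_apply i).comp hcv).norm.pow 2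
  have h3 : ∫ t in (0:ℝ)..1, rpL (u t) (loopL n N t v) ≤
      ∫ t in (0:ℝ)..1, (n * C ^ 2 / 2 + (1 / 2) * ∑ i, ‖loopL n N t v i‖ ^ 2) := by
    refine intervalIntegral.integral_mono_on zero_le_one ?_ ?_ fun t _ => ?_
    · exact ((rpL_continuous.comp hu).clm_apply hcv).intervalIntegrable _ _
    · exact (continuous_const.add (continuous_const.mul hs)).intervalIntegrable _ _
    · rw [rpL_apply, Finset.mul_sum]
      have : (n : ℝ) * C ^ 2 / 2 = ∑ _i : Fin n, C ^ 2 / 2 := by simp; ring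
      rw [this, ← Finset.sum_add_distrib]
      refine Finset.sum_le_sum fun i _ => ?_
      have h4 := real_inner_le_norm (u t i) (loopL n N t v i)
      have h5 := hC t i
      have h6 := norm_nonneg (u t i)
      nlinarith [sq_nonneg (‖u t i‖ - ‖loopL n N t v i‖)]
  have hintg : IntervalIntegrable (fun t => 1 / 2 * ∑ i, ‖loopL n N t v i‖ ^ 2) volume 0 1 :=
    (continuous_const.mul hs).intervalIntegrable _ _
  rw [intervalIntegral.integral_add (by simp) hintg, intervalIntegral.integral_const_mul, h2,
    h1] at h3
  simp only [hv, real_inner_self_eq_norm_sq, intervalIntegral.integral_const, sub_zero, one_smul]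
    at h3
  linarith

end Apriori

section Decay

variable {n N : ℕ} {K : (Fin n → ℂ) → ℝ} {Gr : (Fin n → ℂ) → Fin n → ℂ} {σ τ : Fin n → ℝ}

/-- The derivative of a trigonometric loop. -/
def dV (x : GV n N) : GV n N :=
  WithLp.toLp 2 fun k => (2 * π * (k.1 : ℤ) : ℝ) * Complex.I * x k

theorem hasDerivAt_loop (x : GV n N) (t : ℝ) :
    HasDerivAt (fun t => loopL n N t x) (loopL n N t (dV x)) t := by
  rw [hasDerivAt_pi]
  intro i
  simp only [loopL_apply]
  refine HasDerivAt.fun_sum fun m _ => ?_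
  have := (hasDerivAt_eC m t).mul_const (x (m, i))
  refine this.congr_deriv ?_
  simp only [dV]; push_cast; ring

theorem norm_dV_sq (x : GV n N) :
    ‖dV x‖ ^ 2 = 4 * π ^ 2 * ∑ k : Md N × Fin n, ((k.1 : ℤ) : ℝ) ^ 2 * ‖x k‖ ^ 2 := by
  rw [PiLp.norm_sq_eq_of_L2, Finset.mul_sum]
  refine Finset.sum_congr rfl fun k _ => ?_
  simp only [dV]
  rw [norm_mul, norm_mul, Complex.norm_I, Complex.norm_real, Real.norm_eq_abs, mul_one, mul_pow,
    sq_abs]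
  ring

/-- The Fourier coefficients of critical points decay quadratically, uniformly in the degree. -/
theorem crit_decay (h : IsHam K Gr σ) :
    ∃ C : ℝ, 0 ≤ C ∧ ∀ (N : ℕ) (x : GV n N), actG Gr x = 0 →
      ∀ k : Md N × Fin n, ‖x k‖ ≤ C / (1 + |((k.1 : ℤ) : ℝ)|) ^ 2 := by
  obtain ⟨CB₀, hCB₀⟩ := h.bdd
  obtain ⟨Λ₀, hΛ₀⟩ := h.lip
  obtain ⟨ρ, hρ, hgap⟩ := exists_gap σ h.nonres
  obtain ⟨CB, hCB0, hCB⟩ : ∃ CB : ℝ, 0 ≤ CB ∧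
      ∀ x i, ‖Gr x i - (2 * π * σ i : ℝ) • x i‖ ≤ CB :=
    ⟨|CB₀|, abs_nonneg _, fun x i => (hCB₀ x i).trans (le_abs_self _)⟩
  obtain ⟨Λ, hΛ0, hΛ⟩ : ∃ Λ : NNReal, 0 ≤ Λ ∧ LipschitzWith Λ Gr :=
    ⟨⟨|Λ₀|, abs_nonneg _⟩, zero_le, LipschitzWith.of_dist_le_mul fun x y => by
      rw [dist_eq_norm, dist_eq_norm]
      exact (hΛ₀ x y).trans (mul_le_mul_of_nonneg_right (le_abs_self _) (norm_nonneg _))⟩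
  set S : ℝ := ∑ i, |σ i| with hS
  have hS0 : 0 ≤ S := Finset.sum_nonneg fun _ _ => abs_nonneg _
  have hSi : ∀ i, |σ i| ≤ S := fun i =>
    Finset.single_le_sum (f := fun i => |σ i|) (fun _ _ => abs_nonneg _) (Finset.mem_univ i)
  set c₁ : ℝ := 1 + (1 + S) / ρ with hc₁
  have hc₁0 : 0 ≤ c₁ := by positivity
  have hA : ∀ (m : ℤ) i, 1 + |(m:ℝ)| ≤ c₁ * |(m:ℝ) - σ i| := by
    intro m i
    have h1 := hgap i m
    have h2 : |(m:ℝ)| ≤ |(m:ℝ) - σ i| + S := by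
      have := abs_sub_abs_le_abs_sub (m:ℝ) (σ i)
      linarith [hSi i]
    have h3 : 1 + S ≤ (1 + S) / ρ * |(m:ℝ) - σ i| := by
      rw [div_mul_eq_mul_div, le_div_iff₀ hρ]
      exact mul_le_mul_of_nonneg_left h1 (by positivity)
    rw [hc₁, add_mul]
    linarith
  set c₂ : ℝ := c₁ ^ 2 * (n * CB ^ 2) with hc₂
  set c₃ : ℝ := (1 + 4 * π ^ 2 * c₂) / 2 with hc₃
  set c₄ : ℝ := (Λ + 2 * π * S) * c₃ with hc₄
  have hc₂0 : 0 ≤ c₂ := by positivity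
  have hc₃0 : 0 ≤ c₃ := by positivity
  have hc₄0 : 0 ≤ c₄ := by positivity
  have hpi : 1 ≤ 2 * π := by linarith [Real.pi_gt_three]
  refine ⟨c₁ * (CB + c₄), by positivity, fun N x hx k => ?_⟩
  set b : ℝ → Fin n → ℂ := fun t i =>
    Gr (loopL n N t x) i - (2 * π * σ i : ℝ) • loopL n N t x i with hb
  have hbc : Continuous b := by
    refine continuous_pi fun i => ?_
    have h1 : Continuous fun t => loopL n N t x i := (continuous_apply i).comp (loop_continuous x)
    have h2 : Continuous fun t => Gr (loopL n N t x) i :=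
      (continuous_apply i).comp (h.hGr.continuous.comp (loop_continuous x))
    simp only [hb]
    have h3 : Continuous fun t => (2 * π * σ i : ℝ) • loopL n N t x i := by
      have := h1.const_smul (2 * π * σ i)
      exact this
    exact h2.sub h3
  have heq : ∀ k : Md N × Fin n, ‖fc (fun t => b t k.2) k.1‖ =
      2 * π * |((k.1 : ℤ) : ℝ) - σ k.2| * ‖x k‖ := by
    intro k
    have h1 : actG Gr x k = 0 := by rw [hx]; rfl
    rw [actG_apply_eq h] at h1
    rw [hb, ← sub_eq_zero.1 h1, norm_mul, Complex.norm_real, Real.norm_eq_abs, abs_mul,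
      abs_of_pos (by positivity : 0 < 2 * π)]
  have hbes : ∑ k : Md N × Fin n, ((k.1 : ℤ) : ℝ) ^ 2 * ‖x k‖ ^ 2 ≤ c₂ := by
    have h1 := bessel (N := N) hbc (fun t i => hCB (loopL n N t x) i)
    rw [hc₂]
    refine le_trans ?_ (mul_le_mul_of_nonneg_left h1 (by positivity))
    rw [Finset.mul_sum]
    refine Finset.sum_le_sum fun k _ => ?_
    rw [heq, ← sq_abs ((k.1 : ℤ) : ℝ), ← mul_pow, ← mul_pow]
    refine pow_le_pow_left₀ (by positivity) ?_ 2
    have h2 := hA k.1 k.2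
    have h3 : |((k.1 : ℤ) : ℝ)| ≤ c₁ * (2 * π * |((k.1 : ℤ) : ℝ) - σ k.2|) := by
      have : 0 ≤ c₁ * |((k.1 : ℤ) : ℝ) - σ k.2| := by positivity
      nlinarith
    have h4 := mul_le_mul_of_nonneg_right h3 (norm_nonneg (x k))
    linarith
  have hdc := loop_continuous (dV x)
  have hdint : ∫ t in (0:ℝ)..1, ‖loopL n N t (dV x)‖ ≤ c₃ := by
    have h1 : ∫ t in (0:ℝ)..1, ‖loopL n N t (dV x)‖ ≤
        ∫ t in (0:ℝ)..1, (1 / 2 + 1 / 2 * ‖loopL n N t (dV x)‖ ^ 2) := by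
      refine intervalIntegral.integral_mono_on zero_le_one (hdc.norm.intervalIntegrable _ _)
        ((continuous_const.add (continuous_const.mul (hdc.norm.pow 2))).intervalIntegrable _ _)
        fun t _ => ?_
      nlinarith [sq_nonneg (‖loopL n N t (dV x)‖ - 1)]
    have hintg : IntervalIntegrable (fun t => 1 / 2 * ‖loopL n N t (dV x)‖ ^ 2) volume 0 1 :=
      (continuous_const.mul (hdc.norm.pow 2)).intervalIntegrable _ _
    rw [intervalIntegral.integral_add (by simp) hintg, intervalIntegral.integral_const_mul] at h1
    simp only [intervalIntegral.integral_const, sub_zero, one_smul] at h1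
    have h2 := integral_norm_sq_loop_le (dV x)
    rw [norm_dV_sq] at h2
    have h3 : 4 * π ^ 2 * ∑ k : Md N × Fin n, ((k.1 : ℤ) : ℝ) ^ 2 * ‖x k‖ ^ 2 ≤
        4 * π ^ 2 * c₂ := mul_le_mul_of_nonneg_left hbes (by positivity)
    rw [hc₃]
    linarith
  set b' : ℝ → ℂ := fun t => fderiv ℝ Gr (loopL n N t x) (loopL n N t (dV x)) k.2 -
    (2 * π * σ k.2 : ℝ) • loopL n N t (dV x) k.2 with hb'
  have hbd : ∀ t, HasDerivAt (fun t => b t k.2) (b' t) t := by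
    intro t
    have h1 := hasDerivAt_loop x t
    have h2 := (h.hGr.differentiable one_ne_zero (loopL n N t x)).hasFDerivAt.comp_hasDerivAt t h1
    rw [hasDerivAt_pi] at h1 h2
    exact (h2 k.2).sub ((h1 k.2).const_smul (2 * π * σ k.2))
  have hb'c : Continuous b' := by
    have h1 : Continuous fun t => fderiv ℝ Gr (loopL n N t x) (loopL n N t (dV x)) :=
      ((h.hGr.continuous_fderiv one_ne_zero).comp (loop_continuous x)).clm_apply hdc
    have h2 : Continuous fun t => fderiv ℝ Gr (loopL n N t x) (loopL n N t (dV x)) k.2 :=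
      (continuous_apply k.2).comp h1
    have h3 : Continuous fun t => loopL n N t (dV x) k.2 := (continuous_apply k.2).comp hdc
    fun_prop
  have hb'n : ∀ t, ‖b' t‖ ≤ (Λ + 2 * π * S) * ‖loopL n N t (dV x)‖ := by
    intro t
    refine (norm_sub_le _ _).trans ?_
    rw [add_mul, norm_smul, Real.norm_eq_abs, abs_mul, abs_of_pos (by positivity : 0 < 2 * π)]
    refine add_le_add ?_ ?_
    · refine (norm_le_pi_norm _ k.2).trans ((ContinuousLinearMap.le_opNorm _ _).trans ?_)
      exact mul_le_mul_of_nonneg_right (norm_fderiv_le_of_lipschitz ℝ hΛ) (norm_nonneg _)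
    · have := hSi k.2
      have h3 := norm_le_pi_norm (loopL n N t (dV x)) k.2
      gcongr
  have hfb : fc b' k.1 = 2 * π * (k.1 : ℤ) * Complex.I * fc (fun t => b t k.2) k.1 := by
    refine fc_deriv hbd hb'c ?_ k.1
    have := loopL_add_one 0 x
    rw [zero_add] at this
    simp only [hb, this]
  have h4 : |((k.1 : ℤ) : ℝ)| * ‖fc (fun t => b t k.2) k.1‖ ≤ c₄ := by
    have hintg : IntervalIntegrable (fun t => (Λ + 2 * π * S) * ‖loopL n N t (dV x)‖) volume 0 1 :=
      (continuous_const.mul hdc.norm).intervalIntegrable _ _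
    have h5 : ‖fc b' k.1‖ ≤ c₄ := by
      refine (norm_fc_le _ _).trans ?_
      refine (intervalIntegral.integral_mono_on zero_le_one (hb'c.norm.intervalIntegrable _ _)
        hintg fun t _ => hb'n t).trans ?_
      rw [intervalIntegral.integral_const_mul]
      exact mul_le_mul_of_nonneg_left hdint (by positivity)
    rw [hfb, norm_mul, norm_mul, norm_mul, Complex.norm_I] at h5
    have e : ‖(2 * π : ℂ)‖ = 2 * π := by
      rw [show (2 * π : ℂ) = ((2 * π : ℝ) : ℂ) by push_cast; ring, Complex.norm_real,
        Real.norm_eq_abs, abs_of_pos (by positivity)]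
    rw [e, Complex.norm_intCast] at h5
    have : 0 ≤ |((k.1 : ℤ) : ℝ)| * ‖fc (fun t => b t k.2) k.1‖ := by positivity
    nlinarith
  have h5 : ‖fc (fun t => b t k.2) k.1‖ ≤ CB := norm_fc_le_of_le (fun t _ => hCB _ _) _
  rw [le_div_iff₀ (by positivity)]
  have h6 := hA k.1 k.2
  have h7 : (1 + |((k.1 : ℤ) : ℝ)|) * ‖x k‖ ≤ c₁ * ‖fc (fun t => b t k.2) k.1‖ := by
    rw [heq]
    have h8 := mul_le_mul_of_nonneg_right h6 (norm_nonneg (x k))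
    have h9 : 0 ≤ c₁ * |((k.1 : ℤ) : ℝ) - σ k.2| * ‖x k‖ := by positivity
    nlinarith
  calc ‖x k‖ * (1 + |((k.1 : ℤ) : ℝ)|) ^ 2
      = (1 + |((k.1 : ℤ) : ℝ)|) * ‖x k‖ * (1 + |((k.1 : ℤ) : ℝ)|) := by ring
    _ ≤ c₁ * ‖fc (fun t => b t k.2) k.1‖ * (1 + |((k.1 : ℤ) : ℝ)|) := by gcongr
    _ = c₁ * (‖fc (fun t => b t k.2) k.1‖ + |((k.1 : ℤ) : ℝ)| * ‖fc (fun t => b t k.2) k.1‖) := by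
        ring
    _ ≤ c₁ * (CB + c₄) := by gcongr

end Decay

/-! ### Passage to the limit -/

section Limit

open Filter Topology

variable {n N : ℕ} {K : (Fin n → ℂ) → ℝ} {Gr : (Fin n → ℂ) → Fin n → ℂ} {σ τ : Fin n → ℝ}
  {L : (Fin n → ℂ) ≃L[ℝ] (Fin n → ℂ)}

/-- The coefficients of a trigonometric loop, extended by zero to all frequencies. -/
def extV (x : GV n N) (p : ℤ × Fin n) : ℂ :=
  if h : p.1 ∈ Finset.Icc (-(N : ℤ)) N then x (⟨p.1, h⟩, p.2) else 0

theorem loopL_eq_tsum (x : GV n N) (t : ℝ) (i : Fin n) :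
    loopL n N t x i = ∑' m : ℤ, eC m t * extV x (m, i) := by
  rw [loopL_apply, tsum_eq_sum (s := Finset.Icc (-(N : ℤ)) N)]
  · rw [← Finset.sum_coe_sort (Finset.Icc (-(N : ℤ)) N) fun m => eC m t * extV x (m, i)]
    refine Finset.sum_congr rfl fun m _ => ?_
    simp only [extV]
    rw [dif_pos m.2]
  · intro m hm
    simp only [extV]
    rw [dif_neg hm, mul_zero]

theorem summable_decay (C : ℝ) : Summable fun m : ℤ => C / (1 + |(m : ℝ)|) ^ 2 := by
  have h1 : Summable fun m : ℤ => 1 / |(m : ℝ) + 1 / 2| ^ (2 : ℝ) :=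
    (Real.summable_one_div_int_add_rpow (1 / 2) 2).2 one_lt_two
  have h2 : Summable fun m : ℤ => 1 / (1 + |(m : ℝ)|) ^ 2 := by
    refine Summable.of_nonneg_of_le (fun m => by positivity) (fun m => ?_) h1
    have h3 : (m : ℝ) + 1 / 2 ≠ 0 := by
      intro h
      have : (2 * m + 1 : ℝ) = 0 := by linarith
      have h' : 2 * m + 1 = 0 := by exact_mod_cast this
      omega
    have h4 : 0 < |(m : ℝ) + 1 / 2| := abs_pos.2 h3
    rw [Real.rpow_two]
    refine one_div_le_one_div_of_le (by positivity) ?_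
    refine pow_le_pow_left₀ h4.le ?_ 2
    refine (abs_add_le _ _).trans ?_
    rw [abs_of_pos (by norm_num : (0:ℝ) < 1 / 2)]
    linarith
  refine (h2.mul_left C).congr fun m => ?_
  ring

theorem tendsto_fc {F : ℕ → ℝ → ℂ} {f : ℝ → ℂ} {B : ℝ} (hF : ∀ k, Continuous (F k))
    (hB : ∀ k t, ‖F k t‖ ≤ B) (hlim : ∀ t, Tendsto (fun k => F k t) atTop (𝓝 (f t))) (m : ℤ) :
    Tendsto (fun k => fc (F k) m) atTop (𝓝 (fc f m)) := by
  unfold fc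
  refine intervalIntegral.tendsto_integral_filter_of_dominated_convergence (fun _ => B) ?_ ?_ ?_ ?_
  · exact Eventually.of_forall fun k => ((eC_continuous _).mul (hF k)).aestronglyMeasurable
  · refine Eventually.of_forall fun k => Eventually.of_forall fun t _ => ?_
    rw [norm_mul, norm_eC, one_mul]; exact hB k t
  · simp
  · exact Eventually.of_forall fun t _ => (hlim t).const_mul _

/-- A continuous periodic loop with absolutely summable Fourier coefficients `c` solving
`2 π m c m = fc (G i) m` is an integral curve. -/
theorem ode_of_fc {c : ℤ → ℂ} {X G : ℝ → ℂ} (hs : Summable c)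
    (hX : ∀ t, X t = ∑' m : ℤ, eC m t * c m) (hG : Continuous G) (hper : ∀ t, G (t + 1) = G t)
    (heq : ∀ m : ℤ, ((2 * π * m : ℝ) : ℂ) * c m = fc G m) (t : ℝ) :
    HasDerivAt X (Complex.I * G t) t := by
  set y : ℝ → ℂ := fun t => X 0 + Complex.I * ∫ s in (0:ℝ)..t, G s with hy
  have hyd : ∀ t, HasDerivAt y (Complex.I * G t) t := fun t =>
    ((intervalIntegral.integral_hasDerivAt_right (hG.intervalIntegrable _ _)
      hG.aestronglyMeasurable.stronglyMeasurableAtFilter hG.continuousAt).const_mul _).const_add _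
  have hG0 : ∫ s in (0:ℝ)..1, G s = 0 := by
    have := heq 0
    simp only [fc, neg_zero, eC_zero, one_mul, Int.cast_zero, mul_zero, Complex.ofReal_zero,
      zero_mul] at this
    exact this.symm
  have hyper : ∀ t, y (t + 1) = y t := by
    intro t
    simp only [hy]
    rw [← intervalIntegral.integral_add_adjacent_intervals (b := t) (hG.intervalIntegrable _ _)
      (hG.intervalIntegrable _ _)]
    have : ∫ s in t..t + 1, G s = ∫ s in (0:ℝ)..0 + 1, G s :=
      Function.Periodic.intervalIntegral_add_eq (T := 1) hper t 0
    rw [this, zero_add, hG0, add_zero]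
  have hyc : Continuous y := continuous_iff_continuousAt.2 fun t => (hyd t).continuousAt
  have hfy : ∀ m : ℤ, m ≠ 0 → fc y m = c m := by
    intro m hm
    have h1 := fc_deriv hyd (continuous_const.mul hG) (by simpa using hyper 0) m
    rw [fc_const_mul, ← heq] at h1
    have h2 : (2 * π * m * Complex.I : ℂ) ≠ 0 := by
      simp [Real.pi_ne_zero, hm]
    apply mul_left_cancel₀ h2
    rw [← h1]; push_cast; ring
  set d := fc y 0 - c 0 with hd
  have hsplit : ∀ m, fc y m = c m + if m = 0 then d else 0 := by
    intro m
    by_cases hm : m = 0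
    · subst hm; simp [hd]
    · rw [hfy m hm, if_neg hm, add_zero]
  have hss : Summable fun m : ℤ => if m = 0 then d else 0 :=
    (hasSum_ite_eq (0:ℤ) d).summable
  have hsy : Summable (fc y) := (hs.add hss).congr fun m => (hsplit m).symm
  have hyX : ∀ t, y t = X t + d := by
    intro t
    have h1 := hasSum_fc hyc hyper hsy t
    have hs' : Summable fun m : ℤ => eC m t * c m := by
      refine Summable.of_norm ?_
      simp only [norm_mul, norm_eC, one_mul]
      exact hs.norm
    have h2 : HasSum (fun m : ℤ => eC m t * c m + if m = 0 then d else 0) (X t + d) := by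
      refine HasSum.add ?_ (hasSum_ite_eq (0:ℤ) d)
      rw [hX]; exact hs'.hasSum
    refine h1.unique (h2.congr_fun ?_)
    intro m
    rw [hsplit]
    by_cases hm : m = 0
    · subst hm; simp [eC_zero]
    · simp [hm, mul_comm]
  have hd0 : d = 0 := by
    have h1 := hyX 0
    simp only [hy, intervalIntegral.integral_same, mul_zero, add_zero] at h1
    exact (add_eq_left.1 h1.symm)
  have : y = X := by ext t; rw [hyX, hd0, add_zero]
  rw [← this]
  exact hyd t

theorem actF_eq_of_crit (h : IsHam K Gr σ) (x : GV n N) (hx : actG Gr x = 0) :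
    actF K x = ∫ t in (0:ℝ)..1,
      (1 / 2 * rpL (Gr (loopL n N t x)) (loopL n N t x) - K (loopL n N t x)) := by
  have hc := loop_continuous x
  have hGc : Continuous fun t => Gr (loopL n N t x) := h.hGr.continuous.comp hc
  have hKc : Continuous fun t => K (loopL n N t x) :=
    (continuous_iff_continuousAt.2 fun x => (h.hK x).continuousAt).comp hc
  have hrc : Continuous fun t => rpL (Gr (loopL n N t x)) (loopL n N t x) :=
    (rpL_continuous.comp hGc).clm_apply hc
  have hintg : IntervalIntegrable (fun t => 1 / 2 * rpL (Gr (loopL n N t x)) (loopL n N t x))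
    volume 0 1 := (continuous_const.mul hrc).intervalIntegrable _ _
  rw [intervalIntegral.integral_sub hintg (hKc.intervalIntegrable _ _),
    intervalIntegral.integral_const_mul, integral_rp_loop hGc, actF]
  congr 1
  rw [Finset.mul_sum, Finset.mul_sum]
  refine Finset.sum_congr rfl fun k _ => ?_
  have h1 : actG Gr x k = 0 := by rw [hx]; rfl
  have h2 : fc (fun t => Gr (loopL n N t x) k.2) k.1 = (2 * π * (k.1 : ℤ) : ℝ) • x k := by
    rw [Complex.real_smul]; exact (sub_eq_zero.1 h1).symm
  rw [h2, real_inner_smul_left, real_inner_self_eq_norm_sq]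
  ring

/-- A Hamiltonian with the prescribed behaviour at the origin and at infinity has a nonzero
periodic orbit of nonnegative action, obtained as a limit of Galerkin critical points. Stated by
contradiction: `horb` says that there is no such orbit. -/
theorem no_ham (h : IsHam K Gr σ) (hl : LinAt Gr L τ) (e : Equiv.Perm (Fin n)) (i₀ : Fin n)
    (hi₀ : 1 < σ i₀) (he : ∀ r, 1 < τ r → e r ≠ i₀ ∧ 1 < σ (e r))
    (horb : ∀ X : ℝ → Fin n → ℂ, (∀ t, HasDerivAt X (fun i => Complex.I * Gr (X t) i) t) →
      (∀ t, X (t + 1) = X t) →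
      0 ≤ ∫ t in (0:ℝ)..1, (1 / 2 * rpL (Gr (X t)) (X t) - K (X t)) → ∀ t, X t = 0) : False := by
  choose x hx0 hxG hxF using fun N : ℕ => exists_crit (N := N + 1) (by omega) h hl e i₀ hi₀ he
  obtain ⟨C, hC0, hC⟩ := crit_decay h
  have hwsum := summable_decay C
  set w : ℤ → ℝ := fun m => C / (1 + |(m : ℝ)|) ^ 2 with hw
  have hw0 : ∀ m, 0 ≤ w m := fun m => by positivity
  have hc : ∀ N p, ‖extV (x N) p‖ ≤ w p.1 := by
    intro N p
    unfold extV
    split_ifs with hp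
    · exact hC _ (x N) (hxG N) (⟨p.1, hp⟩, p.2)
    · rw [norm_zero]; exact hw0 _
  obtain ⟨c, hcmem, φ, hφ, hlim⟩ := (isCompact_univ_pi fun p : ℤ × Fin n =>
    isCompact_closedBall (0:ℂ) (w p.1)).tendsto_subseq (x := fun N => extV (x N))
    (fun N p _ => by rw [mem_closedBall_zero_iff]; exact hc N p)
  have hcw : ∀ p, ‖c p‖ ≤ w p.1 := fun p => by
    have := hcmem p (mem_univ _); rwa [mem_closedBall_zero_iff] at this
  rw [tendsto_pi_nhds] at hlim
  have hlim : ∀ p, Tendsto (fun k => extV (x (φ k)) p) atTop (𝓝 (c p)) := hlim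
  have hcs : ∀ i, Summable fun m => c (m, i) := fun i =>
    Summable.of_norm (Summable.of_nonneg_of_le (fun _ => norm_nonneg _) (fun m => hcw (m, i)) hwsum)
  have hxs : ∀ N i, Summable fun m => ‖extV (x N) (m, i)‖ := fun N i =>
    Summable.of_nonneg_of_le (fun _ => norm_nonneg _) (fun m => hc N (m, i)) hwsum
  set Z : ℕ → ℝ → Fin n → ℂ := fun k t => loopL n _ t (x (φ k)) with hZ
  have hZc : ∀ k, Continuous (Z k) := fun k => loop_continuous _
  set X : ℝ → Fin n → ℂ := fun t i => ∑' m : ℤ, eC m t * c (m, i) with hX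
  have hZX : ∀ t, Tendsto (fun k => Z k t) atTop (𝓝 (X t)) := by
    intro t
    rw [tendsto_pi_nhds]
    intro i
    simp only [hZ, hX, loopL_eq_tsum]
    refine tendsto_tsum_of_dominated_convergence hwsum (fun m => (hlim (m, i)).const_mul _) ?_
    refine Eventually.of_forall fun k m => ?_
    rw [norm_mul, norm_eC, one_mul]; exact hc _ (m, i)
  have hXc : Continuous X := by
    refine continuous_pi fun i => ?_
    refine continuous_tsum (fun m => (eC_continuous m).mul continuous_const) hwsum fun m t => ?_
    rw [norm_mul, norm_eC, one_mul]; exact hcw (m, i)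
  have hZi : ∀ k t i, ‖Z k t i‖ ≤ ∑' m, ‖extV (x (φ k)) (m, i)‖ := by
    intro k t i
    simp only [hZ, loopL_eq_tsum]
    have h1 : (fun m => ‖eC m t * extV (x (φ k)) (m, i)‖) = fun m => ‖extV (x (φ k)) (m, i)‖ := by
      ext m; rw [norm_mul, norm_eC, one_mul]
    refine (norm_tsum_le_tsum_norm ?_).trans_eq ?_
    · rw [h1]; exact hxs _ i
    · rw [h1]
  set W : ℝ := ∑' m, w m with hW
  have hW0 : 0 ≤ W := tsum_nonneg hw0
  have hZW : ∀ k t, ‖Z k t‖ ≤ W := fun k t => (pi_norm_le_iff_of_nonneg hW0).2 fun i =>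
    (hZi k t i).trans ((hxs _ i).tsum_le_tsum (fun m => hc _ (m, i)) hwsum)
  have hXW : ∀ t, ‖X t‖ ≤ W := fun t =>
    le_of_tendsto (hZX t).norm (Eventually.of_forall fun k => hZW k t)
  have hXper : ∀ t, X (t + 1) = X t := fun t => by
    ext i; simp only [hX, eC_add_one]
  have hGc := h.hGr.continuous
  have hKc : Continuous K := continuous_iff_continuousAt.2 fun x => (h.hK x).continuousAt
  obtain ⟨B, hB⟩ := (isCompact_closedBall (0 : Fin n → ℂ) W).exists_bound_of_continuousOn
    hGc.continuousOn
  have heq : ∀ i (m : ℤ), ((2 * π * m : ℝ) : ℂ) * c (m, i) = fc (fun t => Gr (X t) i) m := by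
    intro i m
    have h1 : Tendsto (fun k => fc (fun t => Gr (Z k t) i) m) atTop
        (𝓝 (fc (fun t => Gr (X t) i) m)) := by
      refine tendsto_fc (B := B) (fun k => (continuous_apply i).comp (hGc.comp (hZc k))) ?_ ?_ m
      · intro k t
        exact (norm_le_pi_norm _ i).trans (hB _ (by rw [mem_closedBall_zero_iff]; exact hZW k t))
      · intro t
        exact ((continuous_apply i).comp hGc).continuousAt.tendsto.comp (hZX t)
    have h2 : Tendsto (fun k => ((2 * π * m : ℝ) : ℂ) * extV (x (φ k)) (m, i)) atTop
        (𝓝 (((2 * π * m : ℝ) : ℂ) * c (m, i))) := (hlim (m, i)).const_mul _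
    refine tendsto_nhds_unique (h2.congr' ?_) h1
    filter_upwards [eventually_ge_atTop m.natAbs] with k hk
    have hk' := hφ.id_le k
    simp only [id] at hk'
    have hm : m ∈ Finset.Icc (-((φ k + 1 : ℕ) : ℤ)) ((φ k + 1 : ℕ) : ℤ) := by
      rw [Finset.mem_Icc]; omega
    have h3 : actG Gr (x (φ k)) (⟨m, hm⟩, i) = 0 := by rw [hxG]; rfl
    simp only [extV]
    rw [dif_pos hm]
    exact sub_eq_zero.1 h3
  have hode : ∀ t, HasDerivAt X (fun i => Complex.I * Gr (X t) i) t := by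
    intro t
    rw [hasDerivAt_pi]
    intro i
    exact ode_of_fc (hcs i) (fun t => rfl) ((continuous_apply i).comp (hGc.comp hXc))
      (fun t => by simp only [Function.comp_apply, hXper]) (heq i) t
  have hactc : Continuous fun z : Fin n → ℂ => 1 / 2 * rpL (Gr z) z - K z :=
    (continuous_const.mul ((rpL_continuous.comp hGc).clm_apply continuous_id)).sub hKc
  obtain ⟨B', hB'⟩ := (isCompact_closedBall (0 : Fin n → ℂ) W).exists_bound_of_continuousOn
    hactc.continuousOn
  have hact : 0 ≤ ∫ t in (0:ℝ)..1, (1 / 2 * rpL (Gr (X t)) (X t) - K (X t)) := by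
    have h1 : Tendsto (fun k => ∫ t in (0:ℝ)..1, (1 / 2 * rpL (Gr (Z k t)) (Z k t) - K (Z k t)))
        atTop (𝓝 (∫ t in (0:ℝ)..1, (1 / 2 * rpL (Gr (X t)) (X t) - K (X t)))) := by
      refine intervalIntegral.tendsto_integral_filter_of_dominated_convergence
        (fun _ => B') ?_ ?_ ?_ ?_
      · exact Eventually.of_forall fun k => (hactc.comp (hZc k)).aestronglyMeasurable
      · refine Eventually.of_forall fun k => Eventually.of_forall fun t _ => ?_
        exact hB' _ (by rw [mem_closedBall_zero_iff]; exact hZW k t)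
      · simp
      · exact Eventually.of_forall fun t _ => hactc.continuousAt.tendsto.comp (hZX t)
    refine ge_of_tendsto h1 (Eventually.of_forall fun k => ?_)
    have := hxF (φ k)
    rwa [actF_eq_of_crit h _ (hxG _)] at this
  have hX0 := horb X hode hXper hact
  have hc0 : ∀ p, c p = 0 := by
    rintro ⟨m, i⟩
    have hne : ∀ m : ℤ, m ≠ 0 → c (m, i) = 0 := by
      intro m hm
      have h1 := heq i m
      have h2 : (fun t => Gr (X t) i) = fun _ => 0 := by
        ext t; rw [hX0, h.Gr_zero]; rfl
      rw [h2] at h1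
      simp only [fc, mul_zero, intervalIntegral.integral_zero] at h1
      refine (mul_eq_zero.1 h1).resolve_left ?_
      have : (2 * π * m : ℝ) ≠ 0 := by
        have : (m : ℝ) ≠ 0 := by exact_mod_cast hm
        positivity
      exact_mod_cast this
    by_cases hm : m = 0
    · subst hm
      have h1 : X 0 i = 0 := by rw [hX0]; rfl
      simp only [hX] at h1
      rw [tsum_eq_single 0 fun m hm => by rw [hne m hm, mul_zero]] at h1
      simpa [eC_zero] using h1
    · exact hne m hm
  obtain ⟨δ, hδ, hsmall⟩ := crit_eq_zero_of_small h hl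
  have hev : ∀ᶠ k in atTop, ∀ i, ∑' m, ‖extV (x (φ k)) (m, i)‖ ≤ δ := by
    rw [eventually_all]
    intro i
    have h1 : Tendsto (fun k => ∑' m, ‖extV (x (φ k)) (m, i)‖) atTop (𝓝 (∑' m, ‖c (m, i)‖)) := by
      refine tendsto_tsum_of_dominated_convergence hwsum (fun m => (hlim (m, i)).norm) ?_
      refine Eventually.of_forall fun k m => ?_
      rw [norm_norm]; exact hc _ (m, i)
    simp only [hc0, norm_zero, tsum_zero] at h1
    exact h1.eventually (eventually_le_nhds hδ)
  obtain ⟨k, hk⟩ := hev.exists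
  exact hx0 (φ k) (hsmall _ _ (hxG _) fun t =>
    (pi_norm_le_iff_of_nonneg hδ.le).2 fun i => (hZi k t i).trans (hk i))

end Limit

/-! ### Profile functions -/

section Profiles

open scoped ContDiff

/-- The antiderivative of `h` vanishing at `0`. -/
def prim (h : ℝ → ℝ) (t : ℝ) : ℝ := ∫ s in (0:ℝ)..t, h s

theorem hasDerivAt_prim {h : ℝ → ℝ} (hc : Continuous h) (t : ℝ) : HasDerivAt (prim h) (h t) t :=
  intervalIntegral.integral_hasDerivAt_right (hc.intervalIntegrable _ _)
      hc.aestronglyMeasurable.stronglyMeasurableAtFilter hc.continuousAt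

theorem contDiff_prim {h : ℝ → ℝ} (hc : ContDiff ℝ ∞ h) : ContDiff ℝ 2 (prim h) := by
  have h1 : ContDiff ℝ ∞ (prim h) := by
    rw [contDiff_infty_iff_deriv]
    refine ⟨fun t => (hasDerivAt_prim hc.continuous t).differentiableAt, ?_⟩
    have : deriv (prim h) = h := by
      ext t; exact (hasDerivAt_prim hc.continuous t).deriv
    rwa [this]
  exact h1.of_le ENat.LEInfty.out

/-- The inner profile: slope `s₀` near `0`, constant equal to `m` from `β < 1` on. Of concavity
only `act` and `act_eq` are recorded: the action `t * f' t - f t` of an orbit at level `t` is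
nonpositive, and it vanishes only where the slope is `s₀`. -/
structure InnerProf (s₀ m : ℝ) (f f' : ℝ → ℝ) (α β : ℝ) : Prop where
  α_pos : 0 < α
  β_lt : β < 1
  smooth : ContDiff ℝ 2 f
  deriv : ∀ t, HasDerivAt f (f' t) t
  near : ∀ t ≤ α, f t = s₀ * t
  far : ∀ t, β ≤ t → f t = m
  nonneg : ∀ t, 0 ≤ t → 0 ≤ f t
  le : ∀ t, f t ≤ m
  act : ∀ t, 0 ≤ t → t * f' t ≤ f t
  act_eq : ∀ t, 0 ≤ t → t * f' t = f t → f' t = s₀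

theorem exists_innerProf {s s₀ : ℝ} (hs : 0 < s) (hss : s < s₀) :
    ∃ (m : ℝ) (f f' : ℝ → ℝ) (α β : ℝ), s < m ∧ InnerProf s₀ m f f' α β := by
  obtain ⟨α, hα1, hα2⟩ : ∃ α, s / s₀ < α ∧ α < 1 :=
    exists_between ((div_lt_one (hs.trans hss)).2 hss)
  obtain ⟨β, hβ1, hβ2⟩ := exists_between hα2
  have hs0 : 0 < s₀ := hs.trans hss
  have hα0 : 0 < α := (div_pos hs hs0).trans hα1
  set h : ℝ → ℝ := fun t => s₀ * Real.smoothTransition ((β - t) / (β - α)) with hh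
  have hβα : 0 < β - α := by linarith
  have hcd : ContDiff ℝ ∞ h := by
    refine contDiff_const.mul (Real.smoothTransition.contDiff.comp ?_)
    fun_prop
  have hc := hcd.continuous
  have hintg : ∀ a b, IntervalIntegrable h volume a b := fun a b => hc.intervalIntegrable _ _
  have hnear : ∀ t ≤ α, h t = s₀ := by
    intro t ht
    simp only [hh]
    rw [Real.smoothTransition.one_of_one_le, mul_one]
    rw [le_div_iff₀ hβα]; linarith
  have hfar : ∀ t, β ≤ t → h t = 0 := by
    intro t ht
    simp only [hh]
    rw [Real.smoothTransition.zero_of_nonpos, mul_zero]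
    exact div_nonpos_of_nonpos_of_nonneg (by linarith) hβα.le
  have hnn : ∀ t, 0 ≤ h t := fun t => mul_nonneg hs0.le (Real.smoothTransition.nonneg _)
  have hanti : Antitone h := by
    intro x y hxy
    refine mul_le_mul_of_nonneg_left (Real.smoothTransition.monotone ?_) hs0.le
    gcongr
  have hle : ∀ t, h t ≤ s₀ := fun t => by
    have := Real.smoothTransition.le_one ((β - t) / (β - α))
    simp only [hh]; nlinarith
  have hmono : Monotone (prim h) := by
    refine monotone_of_hasDerivAt_nonneg (hasDerivAt_prim hc) hnn
  have hnear' : ∀ t ≤ α, prim h t = s₀ * t := by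
    intro t ht
    have : prim h t = ∫ s in (0:ℝ)..t, s₀ := by
      refine intervalIntegral.integral_congr fun s hs => ?_
      refine hnear s (hs.2.trans ?_)
      exact max_le hα0.le ht
    rw [this]; simp [mul_comm]
  have hfar' : ∀ t, β ≤ t → prim h t = prim h β := by
    intro t ht
    have : prim h t = prim h β + ∫ s in β..t, h s :=
      (intervalIntegral.integral_add_adjacent_intervals (hintg _ _) (hintg _ _)).symm
    rw [this]
    have h0 : ∫ s in β..t, h s = ∫ s in β..t, 0 := by
      refine intervalIntegral.integral_congr fun s hs => ?_
      rw [uIcc_of_le ht] at hs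
      exact hfar s hs.1
    rw [h0]; simp
  refine ⟨prim h β, prim h, h, α, β, ?_, hα0, hβ2, contDiff_prim hcd, hasDerivAt_prim hc, hnear',
    hfar', ?_, ?_, ?_, ?_⟩
  · have h1 := hmono hβ1.le
    rw [hnear' α le_rfl] at h1
    refine lt_of_lt_of_le ?_ h1
    rw [div_lt_iff₀ hs0] at hα1
    linarith
  · intro t ht
    have := hmono ht
    rwa [show prim h 0 = 0 by simp [prim]] at this
  · intro t
    rcases le_total t β with ht | ht
    · exact hmono ht
    · exact (hfar' t ht).le
  · intro t ht
    have : ∫ s in (0:ℝ)..t, h t ≤ prim h t :=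
      intervalIntegral.integral_mono_on ht (by simp) (hintg _ _) fun s hs => hanti hs.2
    simpa using this
  · intro t ht heq
    by_cases htα : t ≤ α
    · exact hnear t htα
    push Not at htα
    have h1 : prim h t = s₀ * α + ∫ s in α..t, h s := by
      rw [← hnear' α le_rfl]
      exact (intervalIntegral.integral_add_adjacent_intervals (hintg _ _) (hintg _ _)).symm
    have h2 : ∫ s in α..t, h t ≤ ∫ s in α..t, h s :=
      intervalIntegral.integral_mono_on htα.le (by simp) (hintg _ _) fun s hs => hanti hs.2
    simp only [intervalIntegral.integral_const, smul_eq_mul] at h2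
    rw [h1] at heq
    have h3 := hle t
    refine le_antisymm h3 ?_
    have : s₀ * α ≤ α * h t := by nlinarith
    nlinarith

/-- The outer profile: zero up to `1`, then positive, with slope `s` from `R` on. The field `act`
says that the action of an orbit at level `t > 1` is negative once `m` has been subtracted. -/
structure OuterProf (s m : ℝ) (g g' : ℝ → ℝ) (R : ℝ) : Prop where
  smooth : ContDiff ℝ 2 g
  smooth' : ContDiff ℝ 1 g'
  deriv : ∀ t, HasDerivAt g (g' t) t
  near : ∀ t ≤ 1, g t = 0
  near' : ∀ t ≤ 1, g' t = 0
  far' : ∀ t, R ≤ t → g' t = s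
  pos : ∀ t, 1 < t → 0 < g t
  low : ∀ t, s * (t - R) ≤ g t
  act : ∀ t, 1 < t → t * g' t - g t < m

theorem exists_outerProf {s m : ℝ} (hs : 0 < s) (hsm : s < m) :
    ∃ (g g' : ℝ → ℝ) (R : ℝ), OuterProf s m g g' R := by
  obtain ⟨R, hR1, hR2⟩ : ∃ R, 1 < R ∧ R < m / s := exists_between ((one_lt_div hs).2 hsm)
  have hRm : s * R < m := by rw [lt_div_iff₀ hs] at hR2; linarith
  set h : ℝ → ℝ := fun t => s * Real.smoothTransition ((t - 1) / (R - 1)) with hh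
  have hR : 0 < R - 1 := by linarith
  have hcd : ContDiff ℝ ∞ h := by
    refine contDiff_const.mul (Real.smoothTransition.contDiff.comp ?_)
    fun_prop
  have hc := hcd.continuous
  have hintg : ∀ a b, IntervalIntegrable h volume a b := fun a b => hc.intervalIntegrable _ _
  have hnear : ∀ t ≤ 1, h t = 0 := by
    intro t ht
    simp only [hh]
    rw [Real.smoothTransition.zero_of_nonpos, mul_zero]
    exact div_nonpos_of_nonpos_of_nonneg (by linarith) hR.le
  have hfar : ∀ t, R ≤ t → h t = s := by
    intro t ht
    simp only [hh]
    rw [Real.smoothTransition.one_of_one_le, mul_one]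
    rw [le_div_iff₀ hR]; linarith
  have hpos : ∀ t, 1 < t → 0 < h t := fun t ht =>
    mul_pos hs (Real.smoothTransition.pos_of_pos (div_pos (by linarith) hR))
  have hnn : ∀ t, 0 ≤ h t := fun t => mul_nonneg hs.le (Real.smoothTransition.nonneg _)
  have hle : ∀ t, h t ≤ s := fun t => by
    have := Real.smoothTransition.le_one ((t - 1) / (R - 1))
    simp only [hh]; nlinarith
  have hmono : Monotone (prim h) := monotone_of_hasDerivAt_nonneg (hasDerivAt_prim hc) hnn
  have h0 : prim h 0 = 0 := by simp [prim]
  have hnear' : ∀ t ≤ 1, prim h t = 0 := by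
    intro t ht
    have : prim h t = ∫ s in (0:ℝ)..t, 0 := by
      refine intervalIntegral.integral_congr fun s hs => ?_
      exact hnear s (hs.2.trans (max_le zero_le_one ht))
    rw [this]; simp
  have hlow : ∀ t, s * (t - R) ≤ prim h t := by
    intro t
    rcases le_total t R with ht | ht
    · have h2 : s * (t - R) ≤ 0 := mul_nonpos_of_nonneg_of_nonpos hs.le (by linarith)
      refine h2.trans ?_
      rcases le_total t 1 with h1 | h1
      · rw [hnear' t h1]
      · rw [← h0]; exact hmono (by linarith)
    · have h1 : prim h t = prim h R + ∫ u in R..t, h u :=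
        (intervalIntegral.integral_add_adjacent_intervals (hintg _ _) (hintg _ _)).symm
      have h2 : ∫ u in R..t, h u = ∫ u in R..t, s := by
        refine intervalIntegral.integral_congr fun u hu => ?_
        rw [uIcc_of_le ht] at hu
        exact hfar u hu.1
      have h3 : 0 ≤ prim h R := by rw [← h0]; exact hmono (by linarith)
      rw [h1, h2]
      simp only [intervalIntegral.integral_const, smul_eq_mul]
      linarith
  refine ⟨prim h, h, R, contDiff_prim hcd, hcd.of_le (by exact_mod_cast le_top),
    hasDerivAt_prim hc, hnear', hnear, hfar, ?_, hlow, ?_⟩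
  · intro t ht
    have h1 : prim h t = prim h 1 + ∫ u in (1:ℝ)..t, h u :=
        (intervalIntegral.integral_add_adjacent_intervals (hintg _ _) (hintg _ _)).symm
    rw [h1, hnear' 1 le_rfl, zero_add]
    exact intervalIntegral.intervalIntegral_pos_of_pos_on (hintg _ _) (fun u hu => hpos u hu.1) ht
  · intro t ht
    refine lt_of_le_of_lt ?_ hRm
    rcases le_total t R with htR | htR
    · have h1 : 0 ≤ prim h t := by rw [← h0]; exact hmono (by linarith)
      have h2 := hle t
      nlinarith [hnn t]
    · have := hlow t
      rw [hfar t htR]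
      linarith

end Profiles

/-! ### The quadratic form of an ellipsoid and its gradient -/

section Gradient

variable {n : ℕ}

/-- The quadratic form defining the ellipsoid `E(b)`. -/
def qE (b : Fin n → ℝ) (z : Fin n → ℂ) : ℝ := ∑ i, π * ‖z i‖ ^ 2 / b i

/-- The gradient of `qE b`. -/
def gq (b : Fin n → ℝ) (z : Fin n → ℂ) : Fin n → ℂ := fun i => (2 * π / b i : ℝ) • z i

theorem hasFDerivAt_qE (b : Fin n → ℝ) (z : Fin n → ℂ) :
    HasFDerivAt (qE b) (rpL (gq b z)) z := by
  have h1 : ∀ i, HasFDerivAt (fun z : Fin n → ℂ => π * ‖z i‖ ^ 2 / b i)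
      ((2 * π / b i : ℝ) • (innerSL ℝ (z i)).comp
        (ContinuousLinearMap.proj (R := ℝ) (φ := fun _ : Fin n => ℂ) i)) z := by
    intro i
    have h2 : HasFDerivAt (fun z : Fin n → ℂ => z i)
      (ContinuousLinearMap.proj (R := ℝ) (φ := fun _ : Fin n => ℂ) i) z := hasFDerivAt_apply i z
    have h3 := (h2.norm_sq).const_mul (π / b i)
    refine (h3.congr_fderiv ?_).congr_of_eventuallyEq (Filter.Eventually.of_forall fun z => ?_)
    · ext v; simp; ring
    · simp only; ring
  have := HasFDerivAt.fun_sum (u := Finset.univ) fun i _ => h1 i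
  refine this.congr_fderiv ?_
  ext v
  rw [rpL_apply]
  simp [gq]
  exact Finset.sum_congr rfl fun i _ => by ring

theorem contDiff_qE (b : Fin n → ℝ) {k : WithTop ℕ∞} : ContDiff ℝ k (qE b) := by
  unfold qE
  refine ContDiff.sum fun i _ => ?_
  refine ContDiff.div_const (contDiff_const.mul ?_) _
  exact (contDiff_apply ℝ ℂ i).norm_sq ℝ

theorem qE_nonneg {b : Fin n → ℝ} (hb : ∀ i, 0 < b i) (z : Fin n → ℂ) : 0 ≤ qE b z :=
  Finset.sum_nonneg fun i _ => by have := hb i; positivity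

theorem qE_zero (b : Fin n → ℝ) : qE b 0 = 0 := by simp [qE]

theorem rpL_gq_self (b : Fin n → ℝ) (z : Fin n → ℂ) : rpL (gq b z) z = 2 * qE b z := by
  rw [rpL_apply, qE, Finset.mul_sum]
  refine Finset.sum_congr rfl fun i _ => ?_
  simp only [gq]
  rw [real_inner_smul_left, real_inner_self_eq_norm_sq]
  ring

theorem isCompact_qE_le {b : Fin n → ℝ} (hb : ∀ i, 0 < b i) (p : Fin n → ℂ) (R : ℝ) :
    IsCompact {z | qE b (z + p) ≤ R} := by
  have hcl : ∀ p, IsClosed {z | qE b (z + p) ≤ R} := fun p => isClosed_le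
    ((contDiff_qE b (k := 0)).continuous.comp (continuous_id.add continuous_const))
    continuous_const
  have hc0 : IsCompact {z | qE b z ≤ R} := by
    have h1 : IsCompact (Set.univ.pi fun i => Metric.closedBall (0:ℂ) (√(R * b i / π))) :=
      isCompact_univ_pi fun i => isCompact_closedBall _ _
    refine h1.of_isClosed_subset (by simpa using hcl 0) fun z hz i _ => ?_
    rw [mem_closedBall_zero_iff]
    refine Real.le_sqrt_of_sq_le ?_
    have h2 : π * ‖z i‖ ^ 2 / b i ≤ qE b z :=
      Finset.single_le_sum (f := fun i => π * ‖z i‖ ^ 2 / b i)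
        (fun i _ => by have := hb i; positivity) (Finset.mem_univ i)
    have h3 := h2.trans hz
    rw [div_le_iff₀ (hb i)] at h3
    rw [le_div_iff₀ Real.pi_pos]; linarith
  have h2 : {z | qE b (z + p) ≤ R} = (Homeomorph.addRight p) ⁻¹' {z | qE b z ≤ R} := by
    ext z; simp
  rw [h2]
  exact (Homeomorph.isCompact_preimage _).2 hc0

/-- The gradient of a function with differential `ℓ`, for the real inner product on `ℂⁿ`. -/
def gradC : ((Fin n → ℂ) →L[ℝ] ℝ) →L[ℝ] (Fin n → ℂ) :=
  ContinuousLinearMap.pi fun i =>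
    (ContinuousLinearMap.apply ℝ ℝ (Pi.single i (1:ℂ) : Fin n → ℂ)).smulRight (1:ℂ) +
    (ContinuousLinearMap.apply ℝ ℝ (Pi.single i Complex.I : Fin n → ℂ)).smulRight Complex.I

theorem rpL_gradC (ℓ : (Fin n → ℂ) →L[ℝ] ℝ) : rpL (gradC ℓ) = ℓ := by
  ext v
  have hv : v = ∑ i, ((v i).re • (Pi.single i (1:ℂ) : Fin n → ℂ) +
      (v i).im • (Pi.single i Complex.I : Fin n → ℂ)) := by
    funext j
    rw [Finset.sum_apply, Finset.sum_eq_single j]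
    · simp [Complex.re_add_im]
    · intro i _ hij; simp [hij.symm]
    · simp
  conv_rhs => rw [hv]
  rw [rpL_apply, map_sum]
  refine Finset.sum_congr rfl fun i _ => ?_
  rw [map_add, map_smul, map_smul]
  simp [gradC, Complex.inner]

theorem stdSymp_mulI_left (u w : Fin n → ℂ) :
    stdSymp n (fun i => Complex.I * u i) w = -rpL u w := by
  rw [rpL_apply, stdSymp, ← Finset.sum_neg_distrib]
  refine Finset.sum_congr rfl fun i _ => ?_
  simp [Complex.inner]
  ring

theorem stdSymp_mulI_right_self (u : Fin n → ℂ) :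
    stdSymp n u (fun i => Complex.I * u i) = ∑ i, ‖u i‖ ^ 2 := by
  rw [stdSymp]
  refine Finset.sum_congr rfl fun i _ => ?_
  rw [Complex.sq_norm, Complex.normSq_apply]
  simp

theorem eq_zero_of_stdSymp {u : Fin n → ℂ} (h : ∀ w, stdSymp n u w = 0) : u = 0 := by
  have h1 := h (fun i => Complex.I * u i)
  rw [stdSymp_mulI_right_self, Finset.sum_eq_zero_iff_of_nonneg (fun i _ => by positivity)] at h1
  funext i
  simpa using h1 i (Finset.mem_univ i)

theorem stdSymp_sub_left (u v w : Fin n → ℂ) :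
    stdSymp n (u - v) w = stdSymp n u w - stdSymp n v w := by
  simp only [stdSymp, ← Finset.sum_sub_distrib]
  refine Finset.sum_congr rfl fun i _ => ?_
  simp; ring

theorem rpL_injective {u v : Fin n → ℂ} (h : ∀ w, rpL u w = rpL v w) : u = v := by
  have h1 : ∀ w, rpL (u - v) w = 0 := by
    intro w
    have := h w
    rw [rpL_apply, rpL_apply] at this
    rw [rpL_apply]
    simp only [Pi.sub_apply, inner_sub_left, Finset.sum_sub_distrib]
    linarith
  have h2 := h1 (u - v)
  rw [rpL_apply] at h2
  simp only [real_inner_self_eq_norm_sq] at h2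
  rw [Finset.sum_eq_zero_iff_of_nonneg (fun i _ => by positivity)] at h2
  rw [← sub_eq_zero]
  funext i
  simpa using h2 i (Finset.mem_univ i)

/-- A linear map preserving the symplectic form is invertible. -/
def sympEquiv (A : (Fin n → ℂ) →L[ℝ] (Fin n → ℂ))
    (hA : ∀ v w, stdSymp n (A v) (A w) = stdSymp n v w) : (Fin n → ℂ) ≃L[ℝ] (Fin n → ℂ) :=
  (LinearEquiv.ofInjectiveEndo (A : (Fin n → ℂ) →ₗ[ℝ] (Fin n → ℂ)) (by
    rw [injective_iff_map_eq_zero]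
    intro v hv
    refine eq_zero_of_stdSymp fun w => ?_
    rw [← hA]
    have : A v = 0 := hv
    rw [this]; simp [stdSymp])).toContinuousLinearEquiv

theorem sympEquiv_coe (A : (Fin n → ℂ) →L[ℝ] (Fin n → ℂ))
    (hA : ∀ v w, stdSymp n (A v) (A w) = stdSymp n v w) :
    (sympEquiv A hA : (Fin n → ℂ) →L[ℝ] (Fin n → ℂ)) = A := by
  ext v : 1; rfl

theorem sympEquiv_apply (A : (Fin n → ℂ) →L[ℝ] (Fin n → ℂ))
    (hA : ∀ v w, stdSymp n (A v) (A w) = stdSymp n v w) (v) : sympEquiv A hA v = A v := rfl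

end Gradient

/-! ### The Hamiltonian of an embedding -/

section Hamiltonian

open Filter Topology

variable {n : ℕ} {b b' : Fin n → ℝ} {p : Fin n → ℂ} {ψ : (Fin n → ℂ) → Fin n → ℂ}
  {s s₀ m : ℝ} {f f' g g' : ℝ → ℝ} {α β R : ℝ}

/-- A symplectic embedding of the open ellipsoid of `b` into the closed ellipsoid of `b'`
translated by `-p`, normalized to fix the origin. -/
structure IsEmb (b b' : Fin n → ℝ) (p : Fin n → ℂ) (ψ : (Fin n → ℂ) → Fin n → ℂ) : Prop where
  pos : ∀ i, 0 < b i
  pos' : ∀ i, 0 < b' i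
  smooth : ∀ z, qE b z < 1 → ContDiffAt ℝ 2 ψ z
  inj : InjOn ψ {z | qE b z < 1}
  maps : ∀ z, qE b z < 1 → qE b' (ψ z + p) ≤ 1
  symp : ∀ z, qE b z < 1 → ∀ v w, stdSymp n (fderiv ℝ ψ z v) (fderiv ℝ ψ z w) = stdSymp n v w
  zero : ψ 0 = 0

open Classical in
/-- The function equal to `f ∘ qE b ∘ ψ⁻¹` on the image of `ψ` and to `m` elsewhere. -/
def innerF (b : Fin n → ℝ) (ψ : (Fin n → ℂ) → Fin n → ℂ) (f : ℝ → ℝ) (m : ℝ)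
    (x : Fin n → ℂ) : ℝ :=
  if x ∈ ψ '' {z | qE b z < 1} then f (qE b (Function.invFunOn ψ {z | qE b z < 1} x)) else m

theorem innerF_apply (hψ : IsEmb b b' p ψ) {z : Fin n → ℂ} (hz : qE b z < 1) :
    innerF b ψ f m (ψ z) = f (qE b z) := by
  rw [innerF, if_pos (mem_image_of_mem ψ hz), hψ.inj.leftInvOn_invFunOn hz]

theorem innerF_of_notMem (hf : InnerProf s₀ m f f' α β) {x : Fin n → ℂ} (hψ : IsEmb b b' p ψ)
    (hx : x ∉ ψ '' {z | qE b z ≤ β}) : innerF b ψ f m x = m := by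
  by_cases h : x ∈ ψ '' {z | qE b z < 1}
  · obtain ⟨z, hz, rfl⟩ := h
    rw [innerF_apply hψ hz]
    refine hf.far _ ?_
    by_contra hlt
    push Not at hlt
    exact hx ⟨z, hlt.le, rfl⟩
  · rw [innerF, if_neg h]

theorem innerF_le (hf : InnerProf s₀ m f f' α β) (x : Fin n → ℂ) : innerF b ψ f m x ≤ m := by
  unfold innerF
  split_ifs
  · exact hf.le _
  · exact le_rfl

theorem innerF_nonneg (hf : InnerProf s₀ m f f' α β) (hψ : IsEmb b b' p ψ) (hm : 0 ≤ m)
    (x : Fin n → ℂ) : 0 ≤ innerF b ψ f m x := by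
  unfold innerF
  split_ifs
  · exact hf.nonneg _ (qE_nonneg hψ.pos _)
  · exact hm

theorem isClosed_image_inner (hf : InnerProf s₀ m f f' α β) (hψ : IsEmb b b' p ψ) :
    IsClosed (ψ '' {z | qE b z ≤ β}) := by
  have h1 : IsCompact {z | qE b z ≤ β} := by simpa using isCompact_qE_le hψ.pos 0 β
  refine (h1.image_of_continuousOn fun z hz => ?_).isClosed
  have hz' : qE b z ≤ β := hz
  exact (hψ.smooth z (hz'.trans_lt hf.β_lt)).continuousAt.continuousWithinAt

theorem innerF_eventually (hf : InnerProf s₀ m f f' α β) (hψ : IsEmb b b' p ψ) {x : Fin n → ℂ}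
    (hx : x ∉ ψ '' {z | qE b z ≤ β}) : innerF b ψ f m =ᶠ[𝓝 x] fun _ => m := by
  filter_upwards [(isClosed_image_inner hf hψ).isOpen_compl.mem_nhds hx] with y hy
  exact innerF_of_notMem hf hψ hy

/-- The local inverse of an embedding, given by the inverse function theorem. -/
theorem IsEmb.exists_local_inverse (hψ : IsEmb b b' p ψ) {z : Fin n → ℂ} (hz : qE b z < 1) :
    ∃ G : (Fin n → ℂ) → Fin n → ℂ, ContDiffAt ℝ 2 G (ψ z) ∧ G (ψ z) = z ∧
      ∀ᶠ y in 𝓝 (ψ z), qE b (G y) < 1 ∧ ψ (G y) = y := by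
  have hd : HasFDerivAt ψ
      (sympEquiv (fderiv ℝ ψ z) (hψ.symp z hz) : (Fin n → ℂ) →L[ℝ] (Fin n → ℂ)) z := by
    rw [sympEquiv_coe]
    exact ((hψ.smooth z hz).differentiableAt two_ne_zero).hasFDerivAt
  have hsm := hψ.smooth z hz
  have h1 := hsm.to_localInverse hd two_ne_zero
  have h2 : hsm.localInverse hd two_ne_zero (ψ z) = z := hsm.localInverse_apply_image hd two_ne_zero
  refine ⟨hsm.localInverse hd two_ne_zero, h1, h2, ?_⟩
  have h3 : ∀ᶠ y in 𝓝 (ψ z), qE b (hsm.localInverse hd two_ne_zero y) < 1 := by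
    have hc : ContinuousAt (fun y => qE b (hsm.localInverse hd two_ne_zero y)) (ψ z) :=
      (contDiff_qE b (k := 0)).continuous.continuousAt.comp h1.continuousAt
    refine hc.eventually_lt continuousAt_const ?_
    rw [h2]; exact hz
  have h4 : ∀ᶠ y in 𝓝 (ψ z), ψ (hsm.localInverse hd two_ne_zero y) = y :=
    (hsm.hasStrictFDerivAt' hd two_ne_zero).eventually_right_inverse
  exact h3.and h4

theorem contDiff_innerF (hf : InnerProf s₀ m f f' α β) (hψ : IsEmb b b' p ψ) :
    ContDiff ℝ 2 (innerF b ψ f m) := by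
  rw [contDiff_iff_contDiffAt]
  intro x
  by_cases hx : x ∈ ψ '' {z | qE b z ≤ β}
  · obtain ⟨z, hz, rfl⟩ := hx
    have hz' : qE b z ≤ β := hz
    obtain ⟨G, hG, hG0, hev⟩ := hψ.exists_local_inverse (hz'.trans_lt hf.β_lt)
    have h1 : ContDiffAt ℝ 2 (fun y => f (qE b (G y))) (ψ z) :=
      hf.smooth.contDiffAt.comp _ ((contDiff_qE b).contDiffAt.comp _ hG)
    refine h1.congr_of_eventuallyEq ?_
    filter_upwards [hev] with y hy
    conv_lhs => rw [← hy.2]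
    exact innerF_apply hψ hy.1
  · exact contDiffAt_const.congr_of_eventuallyEq (innerF_eventually hf hψ hx)

/-- The Hamiltonian: an inner bump transported by `ψ`, plus an outer quadratic growth. -/
def hamK (b b' : Fin n → ℝ) (p : Fin n → ℂ) (ψ : (Fin n → ℂ) → Fin n → ℂ) (f g : ℝ → ℝ) (m : ℝ)
    (x : Fin n → ℂ) : ℝ := innerF b ψ f m x + g (qE b' (x + p))

/-- The gradient of `hamK`. -/
def hamG (b b' : Fin n → ℝ) (p : Fin n → ℂ) (ψ : (Fin n → ℂ) → Fin n → ℂ) (f g' : ℝ → ℝ) (m : ℝ)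
    (x : Fin n → ℂ) : Fin n → ℂ :=
  gradC (fderiv ℝ (innerF b ψ f m) x) + g' (qE b' (x + p)) • gq b' (x + p)

theorem rpL_add (u v : Fin n → ℂ) : rpL (u + v) = rpL u + rpL v := by
  ext w
  rw [_root_.add_apply, rpL_apply, rpL_apply, rpL_apply, ← Finset.sum_add_distrib]
  simp only [Pi.add_apply, inner_add_left]

theorem rpL_smul (r : ℝ) (u : Fin n → ℂ) : rpL (r • u) = r • rpL u := by
  ext w
  rw [_root_.smul_apply, rpL_apply, rpL_apply, smul_eq_mul, Finset.mul_sum]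
  simp only [Pi.smul_apply, real_inner_smul_left]

theorem hasFDerivAt_outer (hg : OuterProf s m g g' R) (x : Fin n → ℂ) :
    HasFDerivAt (fun x => g (qE b' (x + p))) (rpL (g' (qE b' (x + p)) • gq b' (x + p))) x := by
  rw [rpL_smul]
  have h1 : HasFDerivAt (fun x => qE b' (x + p)) (rpL (gq b' (x + p))) x := by
    have := (hasFDerivAt_qE b' (x + p)).comp x ((hasFDerivAt_id x).add_const p)
    exact this
  exact (hg.deriv _).comp_hasFDerivAt x h1

theorem hasFDerivAt_hamK (hf : InnerProf s₀ m f f' α β) (hg : OuterProf s m g g' R)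
    (hψ : IsEmb b b' p ψ) (x : Fin n → ℂ) :
    HasFDerivAt (hamK b b' p ψ f g m) (rpL (hamG b b' p ψ f g' m x)) x := by
  rw [hamG, rpL_add, rpL_gradC]
  exact ((contDiff_innerF hf hψ).differentiable two_ne_zero x).hasFDerivAt.add
    (hasFDerivAt_outer hg x)

theorem contDiff_gq (b : Fin n → ℝ) {k : WithTop ℕ∞} : ContDiff ℝ k (gq b) := by
  rw [contDiff_pi]
  intro i
  unfold gq
  exact (contDiff_apply ℝ ℂ i).const_smul (2 * π / b i)

theorem contDiff_add_p {k : WithTop ℕ∞} : ContDiff ℝ k (fun x : Fin n → ℂ => x + p) :=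
  contDiff_id.add contDiff_const

/-- The gradient minus its linear part at infinity. -/
def hamH (b b' : Fin n → ℝ) (p : Fin n → ℂ) (ψ : (Fin n → ℂ) → Fin n → ℂ) (f g' : ℝ → ℝ) (m s : ℝ)
    (x : Fin n → ℂ) : Fin n → ℂ :=
  gradC (fderiv ℝ (innerF b ψ f m) x) + (g' (qE b' (x + p)) - s) • gq b' (x + p)

theorem contDiff_hamH (hf : InnerProf s₀ m f f' α β) (hg : OuterProf s m g g' R)
    (hψ : IsEmb b b' p ψ) : ContDiff ℝ 1 (hamH b b' p ψ f g' m s) := by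
  unfold hamH
  refine ContDiff.add (gradC.contDiff.comp ?_) (ContDiff.fun_smul ?_ ?_)
  · exact (contDiff_innerF hf hψ).fderiv_right (by norm_num)
  · exact (hg.smooth'.comp ((contDiff_qE b').comp contDiff_add_p)).sub contDiff_const
  · exact (contDiff_gq b').comp contDiff_add_p

theorem hamG_eq (x : Fin n → ℂ) :
    hamG b b' p ψ f g' m x = hamH b b' p ψ f g' m s x + s • gq b' (x + p) := by
  rw [hamG, hamH, sub_smul]; abel

theorem qE_of_mem_inner (hf : InnerProf s₀ m f f' α β) (hψ : IsEmb b b' p ψ) {x : Fin n → ℂ}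
    (hx : x ∈ ψ '' {z | qE b z ≤ β}) : qE b' (x + p) ≤ 1 := by
  obtain ⟨z, hz, rfl⟩ := hx
  have hz' : qE b z ≤ β := hz
  exact hψ.maps z (hz'.trans_lt hf.β_lt)

theorem fderiv_innerF_of_outer (hf : InnerProf s₀ m f f' α β) (hψ : IsEmb b b' p ψ)
    {x : Fin n → ℂ} (hx : 1 < qE b' (x + p)) : fderiv ℝ (innerF b ψ f m) x = 0 := by
  have h1 : x ∉ ψ '' {z | qE b z ≤ β} := fun h => hx.not_ge (qE_of_mem_inner hf hψ h)
  rw [(innerF_eventually hf hψ h1).fderiv_eq]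
  simp

theorem hamH_hasCompactSupport (hf : InnerProf s₀ m f f' α β) (hg : OuterProf s m g g' R)
    (hψ : IsEmb b b' p ψ) : HasCompactSupport (hamH b b' p ψ f g' m s) := by
  refine HasCompactSupport.intro (isCompact_qE_le hψ.pos' p (max R 1)) fun x hx => ?_
  have hx' : max R 1 < qE b' (x + p) := by simpa using hx
  have h1 := (le_max_left R 1).trans hx'.le
  have h2 := (le_max_right R 1).trans_lt hx'
  rw [hamH, fderiv_innerF_of_outer hf hψ h2, hg.far' _ h1]
  simp

/-- At infinity the Hamiltonian of an embedding is the quadratic form with frequencies `s / b' i`,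
up to a translation and a constant. -/
theorem isHam (hs : 0 < s) (hsm : s < m) (hf : InnerProf s₀ m f f' α β)
    (hg : OuterProf s m g g' R) (hψ : IsEmb b b' p ψ) (hres : ∀ i (k : ℤ), s / b' i ≠ k) :
    IsHam (hamK b b' p ψ f g m) (hamG b b' p ψ f g' m) fun i => s / b' i := by
  have hHc := contDiff_hamH hf hg hψ
  have hHs := hamH_hasCompactSupport hf hg hψ
  have hg0 : ∀ t, 0 ≤ g t := fun t => by
    rcases le_or_gt t 1 with h | h
    · rw [hg.near t h]
    · exact (hg.pos t h).le
  have hGeq : hamG b b' p ψ f g' m = fun x => hamH b b' p ψ f g' m s x + s • gq b' (x + p) := by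
    ext1 x; exact hamG_eq x
  have hlin : ContDiff ℝ 1 fun x : Fin n → ℂ => s • gq b' (x + p) :=
    ContDiff.fun_smul contDiff_const ((contDiff_gq b').comp contDiff_add_p)
  have h01 : qE b (0 : Fin n → ℂ) < 1 := by rw [qE_zero]; exact one_pos
  refine ⟨hasFDerivAt_hamK hf hg hψ, ?_, ?_, ?_, ?_, ?_, hres, ?_⟩
  · rw [hGeq]; exact hHc.add hlin
  · have h1 := innerF_apply (f := f) (m := m) hψ h01
    have h2 := hψ.maps 0 h01
    rw [hψ.zero] at h1 h2
    rw [hamK, h1, qE_zero, hf.near 0 hf.α_pos.le, mul_zero, hg.near _ h2, add_zero]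
  · intro x
    exact add_nonneg (innerF_nonneg hf hψ (hs.trans hsm).le x) (hg0 _)
  · obtain ⟨B, hB⟩ := hHs.exists_bound_of_continuous hHc.continuous
    refine ⟨B + ‖s • gq b' p‖, fun x i => ?_⟩
    have h1 : hamG b b' p ψ f g' m x i - (2 * π * (s / b' i) : ℝ) • x i =
        hamH b b' p ψ f g' m s x i + (s • gq b' p) i := by
      rw [hamG_eq (s := s)]
      simp only [gq, Pi.add_apply, Pi.smul_apply, Complex.real_smul]
      push_cast
      ring
    rw [h1]
    refine (norm_add_le _ _).trans (add_le_add ?_ (norm_le_pi_norm _ i))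
    exact (norm_le_pi_norm _ i).trans (hB x)
  · obtain ⟨Λ, hΛ⟩ := hHc.lipschitzWith_of_hasCompactSupport hHs one_ne_zero
    refine ⟨Λ + s * ∑ i, |2 * π / b' i|, fun x y => ?_⟩
    have h1 : hamG b b' p ψ f g' m x - hamG b b' p ψ f g' m y =
        (hamH b b' p ψ f g' m s x - hamH b b' p ψ f g' m s y) + s • gq b' (x - y) := by
      rw [hamG_eq (s := s), hamG_eq (s := s)]
      ext i
      simp only [gq, Pi.add_apply, Pi.smul_apply, Complex.real_smul, Pi.sub_apply]
      ring
    rw [h1, add_mul]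
    refine (norm_add_le _ _).trans (add_le_add ?_ ?_)
    · have := hΛ.dist_le_mul x y
      rwa [dist_eq_norm, dist_eq_norm] at this
    · rw [norm_smul, Real.norm_of_nonneg hs.le, mul_assoc]
      refine mul_le_mul_of_nonneg_left ?_ hs.le
      have h0 : 0 ≤ ∑ i, |2 * π / b' i| := Finset.sum_nonneg fun _ _ => abs_nonneg _
      refine (pi_norm_le_iff_of_nonneg (by positivity)).2 fun i => ?_
      simp only [gq]
      rw [norm_smul, Real.norm_eq_abs]
      refine mul_le_mul ?_ (norm_le_pi_norm _ i) (norm_nonneg _) h0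
      exact Finset.single_le_sum (f := fun i => |2 * π / b' i|) (fun _ _ => abs_nonneg _)
        (Finset.mem_univ i)
  · refine ⟨∑ i, (if 1 < s / b' i then π * ((s / b' i) / (s / b' i - 1)) * ‖p i‖ ^ 2 else 0) + s * R,
      fun x => ?_⟩
    have h1 : s * (qE b' (x + p) - R) ≤ hamK b b' p ψ f g m x := by
      have := hg.low (qE b' (x + p))
      have h2 := innerF_nonneg hf hψ (hs.trans hsm).le x
      unfold hamK; linarith
    refine le_trans ?_ h1
    have h3 : π * ∑ i, (if 1 < s / b' i then ‖x i‖ ^ 2 else 0) ≤ s * qE b' (x + p) +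
        ∑ i, (if 1 < s / b' i then π * ((s / b' i) / (s / b' i - 1)) * ‖p i‖ ^ 2 else 0) := by
      rw [qE, Finset.mul_sum, Finset.mul_sum, ← Finset.sum_add_distrib]
      refine Finset.sum_le_sum fun i _ => ?_
      have hbi := hψ.pos' i
      split_ifs with h
      · have e1 : s * (π * ‖(x + p) i‖ ^ 2 / b' i) = π * ((s / b' i) * ‖(x + p) i‖ ^ 2) := by ring
        rw [e1, mul_assoc π, ← mul_add]
        refine mul_le_mul_of_nonneg_left ?_ Real.pi_pos.le
        set r := s / b' i
        have hx : ‖x i‖ ≤ ‖(x + p) i‖ + ‖p i‖ := by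
          have := norm_sub_le ((x + p) i) (p i)
          simpa using this
        have h5 : ‖x i‖ ^ 2 ≤ (‖(x + p) i‖ + ‖p i‖) ^ 2 := pow_le_pow_left₀ (norm_nonneg _) hx 2
        refine h5.trans ?_
        have hr : 0 < r - 1 := by linarith
        have key : r * ‖(x + p) i‖ ^ 2 + r / (r - 1) * ‖p i‖ ^ 2 - (‖(x + p) i‖ + ‖p i‖) ^ 2 =
            ((r - 1) * ‖(x + p) i‖ - ‖p i‖) ^ 2 / (r - 1) := by
          field_simp
          ring
        have : 0 ≤ ((r - 1) * ‖(x + p) i‖ - ‖p i‖) ^ 2 / (r - 1) := by positivity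
        linarith
      · have : 0 ≤ s * (π * ‖(x + p) i‖ ^ 2 / b' i) := by positivity
        simpa using this
    linarith

end Hamiltonian

/-! ### The linearization at the origin -/

section Linearization

open Filter Topology

variable {n : ℕ} {b b' : Fin n → ℝ} {p : Fin n → ℂ} {ψ : (Fin n → ℂ) → Fin n → ℂ}
  {s s₀ m : ℝ} {f f' g g' : ℝ → ℝ} {α β R : ℝ}

theorem abs_rpL_le (u v : Fin n → ℂ) : |rpL u v| ≤ n * ‖u‖ * ‖v‖ := by
  rw [rpL_apply]
  calc |∑ i, inner ℝ (u i) (v i)| ≤ ∑ i, |inner ℝ (u i) (v i)| := Finset.abs_sum_le_sum_abs _ _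
    _ ≤ ∑ _i : Fin n, ‖u‖ * ‖v‖ := Finset.sum_le_sum fun i _ =>
        (abs_real_inner_le_norm _ _).trans
          (mul_le_mul (norm_le_pi_norm u i) (norm_le_pi_norm v i) (norm_nonneg _) (norm_nonneg _))
    _ = n * ‖u‖ * ‖v‖ := by simp; ring

theorem eventually_qE_lt (b : Fin n → ℝ) {z : Fin n → ℂ} {r : ℝ} (hz : qE b z < r) :
    ∀ᶠ y in 𝓝 z, qE b y < r :=
  (contDiff_qE b (k := 0)).continuous.continuousAt.eventually (gt_mem_nhds hz)

/-- The differential of the inner Hamiltonian in the coordinates given by the embedding. -/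
theorem fderiv_innerF_apply (hf : InnerProf s₀ m f f' α β) (hψ : IsEmb b b' p ψ)
    {z : Fin n → ℂ} (hz : qE b z < 1) (v : Fin n → ℂ) :
    fderiv ℝ (innerF b ψ f m) (ψ z) (fderiv ℝ ψ z v) = f' (qE b z) * rpL (gq b z) v := by
  have h1 : HasFDerivAt (innerF b ψ f m) (fderiv ℝ (innerF b ψ f m) (ψ z)) (ψ z) :=
    ((contDiff_innerF hf hψ).differentiable two_ne_zero _).hasFDerivAt
  have h2 : HasFDerivAt ψ (fderiv ℝ ψ z) z :=
    ((hψ.smooth z hz).differentiableAt two_ne_zero).hasFDerivAt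
  have h3 := h1.comp z h2
  have h4 : HasFDerivAt (f ∘ qE b) (f' (qE b z) • rpL (gq b z)) z :=
    (hf.deriv (qE b z)).comp_hasFDerivAt z (hasFDerivAt_qE b z)
  have h5 : (innerF b ψ f m ∘ ψ) =ᶠ[𝓝 z] (f ∘ qE b) := by
    filter_upwards [eventually_qE_lt b hz] with y hy
    exact innerF_apply hψ hy
  have h6 := (h4.congr_of_eventuallyEq h5).unique h3
  have h7 := congrArg (fun ℓ : (Fin n → ℂ) →L[ℝ] ℝ => ℓ v) h6
  simpa using h7.symm

theorem hamG_of_le (hg : OuterProf s m g g' R) {x : Fin n → ℂ} (hx : qE b' (x + p) ≤ 1) :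
    hamG b b' p ψ f g' m x = gradC (fderiv ℝ (innerF b ψ f m) x) := by
  rw [hamG, hg.near' _ hx, zero_smul, add_zero]

theorem InnerProf.deriv_near (hf : InnerProf s₀ m f f' α β) {t : ℝ} (ht : t < α) : f' t = s₀ := by
  have h1 : HasDerivAt (fun t => s₀ * t) s₀ t := by
    simpa using (hasDerivAt_id t).const_mul s₀
  refine (hf.deriv t).unique (h1.congr_of_eventuallyEq ?_)
  filter_upwards [gt_mem_nhds ht] with r hr
  exact hf.near r (le_of_lt hr)

/-- At the origin, in the coordinates given by the differential of the embedding, the Hamiltonian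
is quadratic with frequencies `s₀ / b i`. -/
theorem linAt (hs : 0 < s) (hsm : s < m) (hf : InnerProf s₀ m f f' α β)
    (hg : OuterProf s m g g' R) (hψ : IsEmb b b' p ψ) (hres : ∀ i (k : ℤ), s / b' i ≠ k)
    (hres₀ : ∀ i (k : ℤ), s₀ / b i ≠ k) (hlt : ∀ i, s₀ / b i < 2) :
    LinAt (hamG b b' p ψ f g' m)
      (sympEquiv (fderiv ℝ ψ 0) (hψ.symp 0 (by rw [qE_zero]; exact one_pos)))
      (fun i => s₀ / b i) := by
  have h0 : qE b (0 : Fin n → ℂ) < 1 := by rw [qE_zero]; exact one_pos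
  have H := isHam hs hsm hf hg hψ hres
  refine ⟨hψ.symp 0 h0, ?_, hres₀, hlt⟩
  intro ε hε
  set A := fderiv ℝ ψ 0 with hA
  set Gr := hamG b b' p ψ f g' m with hGr
  obtain ⟨Λ₀, hΛ₀⟩ := H.lip
  set Λ := max Λ₀ 0 with hΛdef
  have hΛ0 : 0 ≤ Λ := le_max_right _ _
  have hΛ : ∀ x y, ‖Gr x - Gr y‖ ≤ Λ * ‖x - y‖ := fun x y =>
    (hΛ₀ x y).trans (mul_le_mul_of_nonneg_right (le_max_left _ _) (norm_nonneg _))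
  set C : ℝ := n * Λ * (‖A‖ + 1) + 1 with hC
  have hC0 : 0 < C := by positivity
  set η : ℝ := min 1 (ε / (2 * C)) with hη
  have hη0 : 0 < η := lt_min one_pos (by positivity)
  have hη1 : η ≤ 1 := min_le_left _ _
  have hη2 : 2 * C * η ≤ ε := by
    have : η ≤ ε / (2 * C) := min_le_right _ _
    rw [le_div_iff₀ (by positivity)] at this
    linarith
  have e1 : ∀ᶠ y in 𝓝 (0 : Fin n → ℂ), ‖ψ y - A y‖ ≤ η * ‖y‖ := by
    have hd : HasFDerivAt ψ A 0 := ((hψ.smooth 0 h0).differentiableAt two_ne_zero).hasFDerivAt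
    have := hd.isLittleO.def hη0
    simpa [hψ.zero] using this
  have e2 : ∀ᶠ y in 𝓝 (0 : Fin n → ℂ), ‖A - fderiv ℝ ψ y‖ ≤ η := by
    have hc : ContinuousAt (fderiv ℝ ψ) 0 :=
      ((hψ.smooth 0 h0).fderiv_right (m := 1) (by norm_num)).continuousAt
    have := Metric.continuousAt_iff'.1 hc η hη0
    filter_upwards [this] with y hy
    rw [dist_comm, dist_eq_norm] at hy
    exact hy.le
  have e3 : ∀ᶠ y in 𝓝 (0 : Fin n → ℂ), qE b y < min α 1 :=
    eventually_qE_lt b (by rw [qE_zero]; exact lt_min hf.α_pos one_pos)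
  obtain ⟨δ, hδ, hball⟩ := Metric.eventually_nhds_iff.1 (e1.and (e2.and e3))
  refine ⟨δ / 2, by positivity, fun y hy v => ?_⟩
  obtain ⟨k1, k2, k3⟩ := hball (y := y) (by rw [dist_zero_right]; linarith)
  have ky1 : qE b y < 1 := k3.trans_le (min_le_right _ _)
  have kyα : qE b y < α := k3.trans_le (min_le_left _ _)
  have hexact : rpL (Gr (ψ y)) (fderiv ℝ ψ y v)
      = ∑ i, 2 * π * (s₀ / b i) * inner ℝ (y i) (v i) := by
    rw [hGr, hamG_of_le hg (hψ.maps y ky1), rpL_gradC, fderiv_innerF_apply hf hψ ky1,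
      hf.deriv_near kyα, rpL_apply, Finset.mul_sum]
    refine Finset.sum_congr rfl fun i _ => ?_
    simp only [gq]
    rw [real_inner_smul_left]; ring
  rw [sympEquiv_apply, sympEquiv_apply, ← hexact]
  have hsplit : rpL (Gr (A y)) (A v) - rpL (Gr (ψ y)) (fderiv ℝ ψ y v)
      = rpL (Gr (A y) - Gr (ψ y)) (A v) + rpL (Gr (ψ y)) ((A - fderiv ℝ ψ y) v) := by
    rw [_root_.sub_apply, map_sub, sub_eq_add_neg (Gr (A y)), rpL_add, ← neg_one_smul ℝ (Gr (ψ y)),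
      rpL_smul]
    simp; ring
  rw [hsplit]
  have q1 : ‖Gr (A y) - Gr (ψ y)‖ ≤ Λ * (η * ‖y‖) := by
    refine (hΛ _ _).trans (mul_le_mul_of_nonneg_left ?_ hΛ0)
    rw [norm_sub_rev]; exact k1
  have q2 : ‖Gr (ψ y)‖ ≤ Λ * ((‖A‖ + 1) * ‖y‖) := by
    have := hΛ (ψ y) 0
    rw [H.Gr_zero, sub_zero, sub_zero] at this
    refine this.trans (mul_le_mul_of_nonneg_left ?_ hΛ0)
    calc ‖ψ y‖ = ‖(ψ y - A y) + A y‖ := by rw [sub_add_cancel]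
      _ ≤ η * ‖y‖ + ‖A‖ * ‖y‖ := (norm_add_le _ _).trans (add_le_add k1 (A.le_opNorm y))
      _ ≤ _ := by nlinarith [norm_nonneg y]
  have q3 : ‖(A - fderiv ℝ ψ y) v‖ ≤ η * ‖v‖ :=
    ((A - fderiv ℝ ψ y).le_opNorm v).trans (mul_le_mul_of_nonneg_right k2 (norm_nonneg _))
  have q4 : |rpL (Gr (A y) - Gr (ψ y)) (A v)| ≤ n * (Λ * (η * ‖y‖)) * (‖A‖ * ‖v‖) := by
    refine (abs_rpL_le _ _).trans ?_
    have := A.le_opNorm v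
    gcongr
  have q5 : |rpL (Gr (ψ y)) ((A - fderiv ℝ ψ y) v)|
      ≤ n * (Λ * ((‖A‖ + 1) * ‖y‖)) * (η * ‖v‖) := by
    refine (abs_rpL_le _ _).trans ?_
    gcongr
  calc |rpL (Gr (A y) - Gr (ψ y)) (A v) + rpL (Gr (ψ y)) ((A - fderiv ℝ ψ y) v)|
      ≤ n * (Λ * (η * ‖y‖)) * (‖A‖ * ‖v‖) + n * (Λ * ((‖A‖ + 1) * ‖y‖)) * (η * ‖v‖) :=
        (abs_add_le _ _).trans (add_le_add q4 q5)
    _ = (n * Λ * ‖A‖ + n * Λ * (‖A‖ + 1)) * η * (‖y‖ * ‖v‖) := by ring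
    _ ≤ (2 * C * η) * (‖y‖ * ‖v‖) := by
        have : 0 ≤ (n:ℝ) * Λ := by positivity
        have h5 : n * Λ * ‖A‖ + n * Λ * (‖A‖ + 1) ≤ 2 * C := by rw [hC]; nlinarith [norm_nonneg A]
        gcongr
    _ ≤ ε * (‖y‖ * ‖v‖) := by gcongr
    _ = ε * ‖y‖ * ‖v‖ := by ring

end Linearization

/-! ### Periodic orbits of the Hamiltonian -/

section Orbits

open Filter Topology

variable {n : ℕ} {b b' : Fin n → ℝ} {p : Fin n → ℂ} {ψ : (Fin n → ℂ) → Fin n → ℂ}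
  {s s₀ m : ℝ} {f f' g g' : ℝ → ℝ} {α β R : ℝ}

theorem rpL_mulI_self (u : Fin n → ℂ) : rpL u (fun i => Complex.I * u i) = 0 := by
  rw [rpL_apply]
  refine Finset.sum_eq_zero fun i _ => ?_
  simp [Complex.inner]; ring

theorem rpL_mulI_mulI (u v : Fin n → ℂ) :
    rpL (fun i => Complex.I * u i) (fun i => Complex.I * v i) = rpL v u := by
  rw [rpL_apply, rpL_apply]
  refine Finset.sum_congr rfl fun i _ => ?_
  simp [Complex.inner]; ring

theorem rpL_mulI_left (u v : Fin n → ℂ) :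
    rpL (fun i => Complex.I * u i) v = stdSymp n u v := by
  rw [rpL_apply, stdSymp]
  refine Finset.sum_congr rfl fun i _ => ?_
  simp [Complex.inner]; ring

theorem stdSymp_antisymm (u v : Fin n → ℂ) : stdSymp n u v = -stdSymp n v u := by
  rw [stdSymp, stdSymp, ← Finset.sum_neg_distrib]
  refine Finset.sum_congr rfl fun i _ => ?_
  simp; ring

/-- The standard symplectic form as a continuous bilinear map. -/
def sympL : (Fin n → ℂ) →L[ℝ] (Fin n → ℂ) →L[ℝ] ℝ :=
  LinearMap.toContinuousLinearMap
    { toFun := fun u => rpL (fun i => Complex.I * u i)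
      map_add' := fun u v => by
        rw [← rpL_add]; congr 1; funext i; simp [mul_add]
      map_smul' := fun r u => by
        rw [RingHom.id_apply, ← rpL_smul]; congr 1; funext i; simp; ring }

theorem sympL_apply (u v : Fin n → ℂ) : sympL u v = stdSymp n u v := rpL_mulI_left u v

theorem convex_qE_lt {b : Fin n → ℝ} (hb : ∀ i, 0 < b i) : Convex ℝ {z | qE b z < 1} := by
  intro x hx y hy c d hc hd hcd
  have hx' : qE b x < 1 := hx
  have hy' : qE b y < 1 := hy
  have h : qE b (c • x + d • y) ≤ c * qE b x + d * qE b y := by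
    rw [qE, qE, qE, Finset.mul_sum, Finset.mul_sum, ← Finset.sum_add_distrib]
    refine Finset.sum_le_sum fun i _ => ?_
    have h1 : ‖(c • x + d • y) i‖ ≤ c * ‖x i‖ + d * ‖y i‖ := by
      refine (norm_add_le _ _).trans_eq ?_
      simp [abs_of_nonneg hc, abs_of_nonneg hd]
    have h2 : ‖(c • x + d • y) i‖ ^ 2 ≤ c * ‖x i‖ ^ 2 + d * ‖y i‖ ^ 2 := by
      have h3 : ‖(c • x + d • y) i‖ ^ 2 ≤ (c * ‖x i‖ + d * ‖y i‖) ^ 2 := by gcongr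
      have hd' : d = 1 - c := by linarith
      subst hd'
      nlinarith [mul_nonneg (mul_nonneg hc hd) (sq_nonneg (‖x i‖ - ‖y i‖))]
    have := hb i
    calc π * ‖(c • x + d • y) i‖ ^ 2 / b i
        ≤ π * (c * ‖x i‖ ^ 2 + d * ‖y i‖ ^ 2) / b i := by gcongr
      _ = _ := by ring
  show qE b (c • x + d • y) < 1
  rcases hc.eq_or_lt with h0 | h0
  · have : d = 1 := by linarith
    subst this; subst h0
    linarith
  · nlinarith

/-- A symplectic embedding of an ellipsoid changes the standard primitive of the symplectic form
by an exact form. -/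
theorem IsEmb.exists_primitive (hψ : IsEmb b b' p ψ) :
    ∃ h : (Fin n → ℂ) → ℝ, ∀ z : Fin n → ℂ, qE b z < 1 →
      HasFDerivAt h ((sympL (ψ z)).comp (fderiv ℝ ψ z) - sympL z) z := by
  have hopen : IsOpen {z | qE b z < 1} :=
    isOpen_lt (contDiff_qE b (k := 0)).continuous continuous_const
  have hd : ∀ z, qE b z < 1 → HasFDerivAt ψ (fderiv ℝ ψ z) z := fun z hz =>
    ((hψ.smooth z hz).differentiableAt two_ne_zero).hasFDerivAt
  have hdd : ∀ z, qE b z < 1 → HasFDerivAt (fderiv ℝ ψ) (fderiv ℝ (fderiv ℝ ψ) z) z := fun z hz =>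
    (((hψ.smooth z hz).fderiv_right (m := 1) (by norm_num)).differentiableAt one_ne_zero).hasFDerivAt
  have hω : ∀ z : Fin n → ℂ, qE b z < 1 →
      ∃ D : (Fin n → ℂ) →L[ℝ] (Fin n → ℂ) →L[ℝ] ℝ, HasFDerivAt
      (fun z : Fin n → ℂ => (sympL (ψ z)).comp (fderiv ℝ ψ z) - sympL z) D z ∧
      ∀ x y, D x y = sympL (ψ z) (fderiv ℝ (fderiv ℝ ψ) z x y) := by
    intro z hz
    have h1 : HasFDerivAt (fun z => sympL (ψ z)) (sympL.comp (fderiv ℝ ψ z)) z :=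
      sympL.hasFDerivAt.comp z (hd z hz)
    have h2 := (h1.clm_comp (hdd z hz)).sub (sympL (n := n)).hasFDerivAt
    refine ⟨_, h2, fun x y => ?_⟩
    have h3 : sympL (fderiv ℝ ψ z x) (fderiv ℝ ψ z y) = sympL x y := by
      rw [sympL_apply, sympL_apply, hψ.symp z hz]
    simp [h3]
  refine (convex_qE_lt hψ.pos).exists_forall_hasFDerivAt_of_fderiv_symmetric hopen ?_ ?_
  · intro z hz
    obtain ⟨D, hD, -⟩ := hω z hz
    exact hD.differentiableAt.differentiableWithinAt
  · intro z hz x y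
    obtain ⟨D, hD, hDD⟩ := hω z hz
    rw [hD.fderiv, hDD, hDD]
    have hsym : IsSymmSndFDerivAt ℝ ψ z :=
      (hψ.smooth z hz).isSymmSndFDerivAt (by simp)
    rw [hsym x y]

theorem integral_deriv_periodic {c c' : ℝ → ℝ} (hc : ∀ t, HasDerivAt c (c' t) t)
    (hc' : Continuous c') (hper : c 1 = c 0) : ∫ t in (0:ℝ)..1, c' t = 0 := by
  rw [intervalIntegral.integral_eq_sub_of_hasDerivAt (fun t _ => hc t)
    (hc'.intervalIntegrable 0 1), hper, sub_self]

theorem OuterProf.nonneg (hg : OuterProf s m g g' R) (t : ℝ) : 0 ≤ g t := by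
  rcases le_or_gt t 1 with h | h
  · rw [hg.near t h]
  · exact (hg.pos t h).le

variable {X : ℝ → Fin n → ℂ}

theorem hamG_of_gt (hf : InnerProf s₀ m f f' α β) (hψ : IsEmb b b' p ψ) {x : Fin n → ℂ}
    (hx : 1 < qE b' (x + p)) :
    hamG b b' p ψ f g' m x = g' (qE b' (x + p)) • gq b' (x + p) := by
  rw [hamG, fderiv_innerF_of_outer hf hψ hx, map_zero, zero_add]

/-- The outer part of the Hamiltonian is a first integral. -/
theorem outer_const (hf : InnerProf s₀ m f f' α β) (hg : OuterProf s m g g' R)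
    (hψ : IsEmb b b' p ψ)
    (hX : ∀ t, HasDerivAt X (fun i => Complex.I * hamG b b' p ψ f g' m (X t) i) t) (t : ℝ) :
    g (qE b' (X t + p)) = g (qE b' (X 0 + p)) := by
  have hd : ∀ t, HasDerivAt (fun t => g (qE b' (X t + p))) 0 t := by
    intro t
    have h1 := (hasFDerivAt_outer (b' := b') (p := p) hg (X t)).comp_hasDerivAt t (hX t)
    refine h1.congr_deriv ?_
    rcases le_or_gt (qE b' (X t + p)) 1 with h | h
    · rw [hg.near' _ h, zero_smul, rpL_apply]; simp
    · rw [hamG_of_gt hf hψ h, rpL_mulI_self]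
  exact is_const_of_deriv_eq_zero (fun t => (hd t).differentiableAt) (fun t => (hd t).deriv) t 0

/-- The inner part of the Hamiltonian is a first integral. -/
theorem inner_const (hf : InnerProf s₀ m f f' α β) (hg : OuterProf s m g g' R)
    (hψ : IsEmb b b' p ψ)
    (hX : ∀ t, HasDerivAt X (fun i => Complex.I * hamG b b' p ψ f g' m (X t) i) t) (t : ℝ) :
    innerF b ψ f m (X t) = innerF b ψ f m (X 0) := by
  have hd : ∀ t, HasDerivAt (fun t => innerF b ψ f m (X t)) 0 t := by
    intro t
    have h0 : HasFDerivAt (innerF b ψ f m) (fderiv ℝ (innerF b ψ f m) (X t)) (X t) :=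
      ((contDiff_innerF hf hψ).differentiable two_ne_zero _).hasFDerivAt
    have h1 := h0.comp_hasDerivAt t (hX t)
    refine h1.congr_deriv ?_
    rcases le_or_gt (qE b' (X t + p)) 1 with h | h
    · rw [hamG_of_le hg h]
      have := rpL_mulI_self (gradC (fderiv ℝ (innerF b ψ f m) (X t)))
      rwa [rpL_gradC] at this
    · rw [fderiv_innerF_of_outer hf hψ h]; simp
  exact is_const_of_deriv_eq_zero (fun t => (hd t).differentiableAt) (fun t => (hd t).deriv) t 0

/-- Periodic orbits outside the target ellipsoid have negative action. -/
theorem action_neg_of_outer (hGrc : Continuous (hamG b b' p ψ f g' m))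
    (hf : InnerProf s₀ m f f' α β) (hg : OuterProf s m g g' R)
    (hψ : IsEmb b b' p ψ)
    (hX : ∀ t, HasDerivAt X (fun i => Complex.I * hamG b b' p ψ f g' m (X t) i) t)
    (hper : ∀ t, X (t + 1) = X t) (hout : ∀ t, 1 < qE b' (X t + p)) :
    ∫ t in (0:ℝ)..1, (1 / 2 * rpL (hamG b b' p ψ f g' m (X t)) (X t)
      - hamK b b' p ψ f g m (X t)) < 0 := by
  have hXc : Continuous X := continuous_iff_continuousAt.2 fun t => (hX t).continuousAt
  have hqc : Continuous fun t => qE b' (X t + p) :=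
    (contDiff_qE b' (k := 0)).continuous.comp (hXc.add continuous_const)
  set φ : ℝ → ℝ := fun t => m - (qE b' (X t + p) * g' (qE b' (X t + p)) - g (qE b' (X t + p)))
    with hφ
  have hφc : Continuous φ := continuous_const.sub ((hqc.mul (hg.smooth'.continuous.comp hqc)).sub
    (hg.smooth.continuous.comp hqc))
  have hφpos : ∀ t, 0 < φ t := fun t => sub_pos.2 (hg.act _ (hout t))
  have hcc : Continuous fun t => rpL (hamG b b' p ψ f g' m (X t)) p := by
    have := (rpL_continuous (n := n)).comp (hGrc.comp hXc)
    exact this.clm_apply continuous_const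
  have hc0 : ∫ t in (0:ℝ)..1, rpL (hamG b b' p ψ f g' m (X t)) p = 0 := by
    refine integral_deriv_periodic (c := fun t => rpL (fun i => Complex.I * p i) (X t)) ?_ hcc ?_
    · intro t
      have := (rpL (fun i => Complex.I * p i)).hasFDerivAt.comp_hasDerivAt t (hX t)
      rw [rpL_mulI_mulI] at this
      exact this
    · have := hper 0
      rw [zero_add] at this
      simp only [this]
  have heq : ∀ t, 1 / 2 * rpL (hamG b b' p ψ f g' m (X t)) (X t) - hamK b b' p ψ f g m (X t)
      = -φ t - 1 / 2 * rpL (hamG b b' p ψ f g' m (X t)) p := by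
    intro t
    have h1 : innerF b ψ f m (X t) = m :=
      innerF_of_notMem hf hψ fun h => (hout t).not_ge (qE_of_mem_inner hf hψ h)
    have h2 : rpL (gq b' (X t + p)) (X t) = 2 * qE b' (X t + p) - rpL (gq b' (X t + p)) p := by
      rw [← rpL_gq_self, map_add]; ring
    rw [hamK, h1, hamG_of_gt hf hψ (hout t), rpL_smul, hφ]
    simp only [_root_.smul_apply, smul_eq_mul, h2]
    ring
  simp only [heq]
  have hi1 : IntervalIntegrable (fun t => -φ t) volume 0 1 := hφc.neg.intervalIntegrable 0 1
  have hi2 : IntervalIntegrable (fun t => 1 / 2 * rpL (hamG b b' p ψ f g' m (X t)) p) volume 0 1 :=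
    (hcc.const_mul (1 / 2)).intervalIntegrable 0 1
  rw [intervalIntegral.integral_sub hi1 hi2, intervalIntegral.integral_neg,
    intervalIntegral.integral_const_mul, hc0]
  have := intervalIntegral.intervalIntegral_pos_of_pos (hφc.intervalIntegrable 0 1) hφpos one_pos
  linarith

/-- Orbits meeting the support of the inner Hamiltonian, in the coordinates of the embedding. -/
theorem exists_lift (hf : InnerProf s₀ m f f' α β) (hg : OuterProf s m g g' R)
    (hψ : IsEmb b b' p ψ)
    (hX : ∀ t, HasDerivAt X (fun i => Complex.I * hamG b b' p ψ f g' m (X t) i) t)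
    (hper : ∀ t, X (t + 1) = X t) (hin : ∀ t, X t ∈ ψ '' {z | qE b z ≤ β}) :
    ∃ Y : ℝ → Fin n → ℂ, (∀ t, qE b (Y t) < 1) ∧ (∀ t, ψ (Y t) = X t) ∧
      (∀ t, Y (t + 1) = Y t) ∧
      (∀ t, HasDerivAt Y (fun i => Complex.I * (f' (qE b (Y t)) • gq b (Y t)) i) t) ∧
      ∀ t, fderiv ℝ ψ (Y t) (fun i => Complex.I * (f' (qE b (Y t)) • gq b (Y t)) i) =
        fun i => Complex.I * hamG b b' p ψ f g' m (X t) i := by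
  choose Y hY hYX using hin
  have hY1 : ∀ t, qE b (Y t) < 1 := fun t => lt_of_le_of_lt (hY t) hf.β_lt
  have hXc : Continuous X := continuous_iff_continuousAt.2 fun t => (hX t).continuousAt
  have hdiff : ∀ t, ∃ V, HasDerivAt Y V t := by
    intro t
    obtain ⟨G, hG1, hG2, hG3⟩ := hψ.exists_local_inverse (hY1 t)
    rw [hYX] at hG1 hG2 hG3
    have h1 : HasFDerivAt G (fderiv ℝ G (X t)) (X t) :=
      (hG1.differentiableAt two_ne_zero).hasFDerivAt
    refine ⟨_, (h1.comp_hasDerivAt t (hX t)).congr_of_eventuallyEq ?_⟩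
    filter_upwards [hXc.continuousAt.eventually hG3] with r hr
    exact hψ.inj (hY1 r) hr.1 (by rw [hYX]; exact hr.2.symm)
  have key : ∀ t V, HasDerivAt Y V t →
      fderiv ℝ ψ (Y t) V = fun i => Complex.I * hamG b b' p ψ f g' m (X t) i := by
    intro t V hV
    have h1 : HasFDerivAt ψ (fderiv ℝ ψ (Y t)) (Y t) :=
      ((hψ.smooth _ (hY1 t)).differentiableAt two_ne_zero).hasFDerivAt
    have h2 := h1.comp_hasDerivAt t hV
    have h3 : ψ ∘ Y = X := funext hYX
    rw [h3] at h2
    exact h2.unique (hX t)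
  have hderiv : ∀ t, HasDerivAt Y (fun i => Complex.I * (f' (qE b (Y t)) • gq b (Y t)) i) t := by
    intro t
    obtain ⟨V, hV⟩ := hdiff t
    refine hV.congr_deriv ?_
    rw [← sub_eq_zero]
    refine eq_zero_of_stdSymp fun w => ?_
    rw [stdSymp_sub_left, ← hψ.symp _ (hY1 t), key t V hV, stdSymp_mulI_left, stdSymp_mulI_left,
      hamG_of_le hg (by rw [← hYX]; exact hψ.maps _ (hY1 t)), rpL_gradC, ← hYX t,
      fderiv_innerF_apply hf hψ (hY1 t), rpL_smul]
    simp
  refine ⟨Y, hY1, hYX, fun t => ?_, hderiv, fun t => key t _ (hderiv t)⟩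
  exact hψ.inj (hY1 _) (hY1 _) (by rw [hYX, hYX, hper])

/-- A linear oscillator at a nonresonant frequency has no nonzero `1`-periodic orbit. -/
theorem osc_eq_zero {y : ℝ → ℂ} {ν : ℝ} (hν : ∀ k : ℤ, ν ≠ k)
    (hy : ∀ t, HasDerivAt y (Complex.I * ((2 * π * ν : ℝ) • y t)) t) (hper : y 1 = y 0) (t : ℝ) :
    y t = 0 := by
  set c : ℂ := 2 * π * ν * Complex.I with hc
  have hE : ∀ t : ℝ, HasDerivAt (fun t : ℝ => Complex.exp (-(c * t))) (-c * Complex.exp (-(c * t))) t := by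
    intro t
    have h1 : HasDerivAt (fun t : ℝ => -(c * (t:ℂ))) (-c) t := by
      have := (Complex.ofRealCLM.hasDerivAt (x := t)).const_mul (-c)
      simpa using this
    have := h1.cexp
    rwa [mul_comm] at this
  have hd : ∀ t, HasDerivAt (fun t : ℝ => Complex.exp (-(c * t)) * y t) 0 t := by
    intro t
    refine ((hE t).mul (hy t)).congr_deriv ?_
    rw [Complex.real_smul, hc]
    push_cast
    ring
  have hconst : ∀ t : ℝ, Complex.exp (-(c * t)) * y t = y 0 := by
    intro t
    have := is_const_of_deriv_eq_zero (fun t => (hd t).differentiableAt) (fun t => (hd t).deriv) t 0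
    simpa using this
  have h1 := hconst 1
  rw [hper] at h1
  have h2 : y 0 = 0 := by
    by_contra h0
    have h3 : Complex.exp (-(c * ((1:ℝ):ℂ))) = 1 := by
      have : (Complex.exp (-(c * ((1:ℝ):ℂ))) - 1) * y 0 = 0 := by rw [sub_mul, h1]; ring
      rcases mul_eq_zero.1 this with h | h
      · exact sub_eq_zero.1 h
      · exact absurd h h0
    obtain ⟨k, hk⟩ := Complex.exp_eq_one_iff.1 h3
    have h4 : (2 * π * Complex.I : ℂ) * (-ν) = (2 * π * Complex.I) * k := by
      rw [hc] at hk
      push_cast at hk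
      linear_combination hk
    have h5 := mul_left_cancel₀ Complex.two_pi_I_ne_zero h4
    have h6 : -ν = (k:ℝ) := by exact_mod_cast h5
    refine hν (-k) ?_
    push_cast; linarith
  have h3 := hconst t
  rw [h2] at h3
  rcases mul_eq_zero.1 h3 with h | h
  · exact absurd h (Complex.exp_ne_zero _)
  · exact h

/-- Periodic orbits of nonnegative action are trivial. -/
theorem orbit_trivial (hs : 0 < s) (hsm : s < m) (hf : InnerProf s₀ m f f' α β)
    (hg : OuterProf s m g g' R) (hψ : IsEmb b b' p ψ) (hres : ∀ i (k : ℤ), s / b' i ≠ k)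
    (hres₀ : ∀ i (k : ℤ), s₀ / b i ≠ k)
    (hX : ∀ t, HasDerivAt X (fun i => Complex.I * hamG b b' p ψ f g' m (X t) i) t)
    (hper : ∀ t, X (t + 1) = X t)
    (hact : 0 ≤ ∫ t in (0:ℝ)..1, (1 / 2 * rpL (hamG b b' p ψ f g' m (X t)) (X t)
      - hamK b b' p ψ f g m (X t))) : ∀ t, X t = 0 := by
  have H := isHam hs hsm hf hg hψ hres
  have hGrc := H.hGr.continuous
  have hXc : Continuous X := continuous_iff_continuousAt.2 fun t => (hX t).continuousAt
  have hog := outer_const hf hg hψ hX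
  have hif := inner_const hf hg hψ hX
  have hle : ∀ t, qE b' (X t + p) ≤ 1 := by
    rcases (hg.nonneg (qE b' (X 0 + p))).eq_or_lt with h0 | h0
    · intro t
      by_contra! hgt
      have := hg.pos _ hgt
      rw [hog t, ← h0] at this
      exact lt_irrefl _ this
    · exfalso
      refine hact.not_gt (action_neg_of_outer hGrc hf hg hψ hX hper fun t => ?_)
      by_contra! hle
      have := hg.near _ hle
      rw [hog t] at this
      exact h0.ne' this
  have hK : ∀ t, hamK b b' p ψ f g m (X t) = innerF b ψ f m (X 0) := fun t => by
    rw [hamK, hif t, hg.near _ (hle t), add_zero]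
  by_cases hm : innerF b ψ f m (X 0) = m
  · exfalso
    have hG0 : ∀ t, hamG b b' p ψ f g' m (X t) = 0 := by
      intro t
      have hmax : IsLocalMax (innerF b ψ f m) (X t) := Eventually.of_forall fun y => by
        rw [hif t, hm]; exact innerF_le hf y
      rw [hamG_of_le hg (hle t), hmax.fderiv_eq_zero, map_zero]
    have : ∀ t, 1 / 2 * rpL (hamG b b' p ψ f g' m (X t)) (X t) - hamK b b' p ψ f g m (X t) = -m := by
      intro t
      rw [hG0, hK, hm, rpL_apply]; simp
    simp only [this] at hact
    rw [intervalIntegral.integral_const] at hact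
    simp at hact
    linarith
  have hin : ∀ t, X t ∈ ψ '' {z | qE b z ≤ β} := fun t => by
    by_contra h
    exact hm (by rw [← hif t]; exact innerF_of_notMem hf hψ h)
  obtain ⟨Y, hY1, hYX, hYper, hY, hYX'⟩ := exists_lift hf hg hψ hX hper hin
  have hYc : Continuous Y := continuous_iff_continuousAt.2 fun t => (hY t).continuousAt
  have hq : ∀ t, qE b (Y t) = qE b (Y 0) := by
    have hd : ∀ t, HasDerivAt (fun t => qE b (Y t)) 0 t := by
      intro t
      refine ((hasFDerivAt_qE b (Y t)).comp_hasDerivAt t (hY t)).congr_deriv ?_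
      by_cases h : f' (qE b (Y t)) = 0
      · rw [h, zero_smul]
        simp only [Pi.zero_apply, mul_zero]
        exact map_zero _
      · have h1 := rpL_mulI_self (f' (qE b (Y t)) • gq b (Y t))
        rw [rpL_smul, _root_.smul_apply] at h1
        rcases smul_eq_zero.1 h1 with h2 | h2
        · exact absurd h2 h
        · exact h2
    intro t
    exact is_const_of_deriv_eq_zero (fun t => (hd t).differentiableAt) (fun t => (hd t).deriv) t 0
  set c := qE b (Y 0) with hc
  obtain ⟨h, hh⟩ := hψ.exists_primitive
  -- the derivative of the primitive along the orbit compares the two actions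
  have hhd : ∀ t, HasDerivAt (fun t => h (Y t))
      (rpL (hamG b b' p ψ f g' m (X t)) (X t) - 2 * (c * f' c)) t := by
    intro t
    refine ((hh (Y t) (hY1 t)).comp_hasDerivAt t (hY t)).congr_deriv ?_
    rw [_root_.sub_apply, ContinuousLinearMap.comp_apply, hYX', hYX, sympL_apply, sympL_apply,
      stdSymp_antisymm, stdSymp_mulI_left, stdSymp_antisymm (Y t), stdSymp_mulI_left, rpL_smul,
      _root_.smul_apply, rpL_gq_self, hq t, smul_eq_mul]
    ring
  have hcc : Continuous fun t => rpL (hamG b b' p ψ f g' m (X t)) (X t) := by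
    have := (rpL_continuous (n := n)).comp (hGrc.comp hXc)
    exact this.clm_apply hXc
  have hint0 := integral_deriv_periodic hhd (hcc.sub continuous_const)
    (by have := hYper 0; rw [zero_add] at this; simp only [this])
  have hF0 : innerF b ψ f m (X 0) = f c := by rw [← hYX, innerF_apply hψ (hY1 0)]
  have hact2 : ∫ t in (0:ℝ)..1, (1 / 2 * rpL (hamG b b' p ψ f g' m (X t)) (X t)
      - hamK b b' p ψ f g m (X t)) = c * f' c - f c := by
    have heq : ∀ t, 1 / 2 * rpL (hamG b b' p ψ f g' m (X t)) (X t) - hamK b b' p ψ f g m (X t)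
        = 1 / 2 * (rpL (hamG b b' p ψ f g' m (X t)) (X t) - 2 * (c * f' c)) + (c * f' c - f c) := by
      intro t
      rw [hK, hF0]; ring
    simp only [heq]
    have hi1 : IntervalIntegrable (fun t => 1 / 2 * (rpL (hamG b b' p ψ f g' m (X t)) (X t)
        - 2 * (c * f' c))) volume 0 1 :=
      ((hcc.sub continuous_const).const_mul (1 / 2)).intervalIntegrable 0 1
    rw [intervalIntegral.integral_add hi1 intervalIntegrable_const,
      intervalIntegral.integral_const_mul, hint0, intervalIntegral.integral_const]
    simp
  rw [hact2] at hact
  have hc0 : 0 ≤ c := qE_nonneg hψ.pos _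
  have hfs : f' c = s₀ := hf.act_eq c hc0 (le_antisymm (hf.act c hc0) (by linarith))
  have hY0 : ∀ t, Y t = 0 := by
    intro t
    funext i
    refine osc_eq_zero (y := fun t => Y t i) (hres₀ i) ?_ ?_ t
    · intro t
      refine (hasDerivAt_pi.1 (hY t) i).congr_deriv ?_
      rw [hq t, hfs]
      simp [gq]
      ring
    · have := hYper 0
      rw [zero_add] at this
      simp only [this]
  intro t
  rw [← hYX, hY0, hψ.zero]

end Orbits

/-! ### Obstructions to embeddings of ellipsoids -/

section Obstruction

open Filter Topology

variable {n : ℕ} {b b' : Fin n → ℝ}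

theorem isOpen_qE_lt (b : Fin n → ℝ) : IsOpen {z | qE b z < 1} :=
  isOpen_lt (contDiff_qE b (k := 0)).continuous continuous_const

theorem qE_lt_subset_interior (b : Fin n → ℝ) : {z | qE b z < 1} ⊆ interior (ellipsoid b) :=
  interior_maximal (fun z hz => by have h : qE b z < 1 := hz; exact h.le) (isOpen_qE_lt b)

/-- The embedding restricted to the open ellipsoid, translated so that the origin is fixed. -/
theorem SympEmb.isEmb (hb : ∀ i, 0 < b i) (hb' : ∀ i, 0 < b' i)
    (h : SympEmb n (ellipsoid b) (ellipsoid b')) : ∃ p ψ, IsEmb b b' p ψ := by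
  obtain ⟨φ, hinj, hmaps, hsm, hsy⟩ := h
  have hsub := qE_lt_subset_interior b
  refine ⟨φ 0, fun z => φ z - φ 0, hb, hb', ?_, ?_, ?_, ?_, by simp⟩
  · intro z hz
    have h1 : ContDiffAt ℝ (⊤ : ℕ∞) φ z :=
      (hsm z (hsub hz)).contDiffAt (isOpen_interior.mem_nhds (hsub hz))
    exact (h1.of_le ENat.LEInfty.out).sub contDiffAt_const
  · intro x hx y hy hxy
    exact hinj (interior_subset (hsub hx)) (interior_subset (hsub hy)) (by simpa using hxy)
  · intro z hz
    have := hmaps (mem_image_of_mem φ (interior_subset (hsub hz)))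
    rw [sub_add_cancel]
    exact this
  · intro z hz v w
    rw [fderiv_sub_const]
    exact hsy z (hsub hz) v w

/-- The obstruction: an embedding between ellipsoids whose Hamiltonian has more negative
directions at infinity than at the origin cannot exist. -/
theorem no_sympEmb (hb : ∀ i, 0 < b i) (hb' : ∀ i, 0 < b' i) {s s₀ : ℝ} (hs : 0 < s) (hss : s < s₀)
    (hres : ∀ i (k : ℤ), s / b' i ≠ k) (hres₀ : ∀ i (k : ℤ), s₀ / b i ≠ k)
    (hlt : ∀ i, s₀ / b i < 2) (e : Equiv.Perm (Fin n)) (i₀ : Fin n) (hi₀ : b' i₀ < s)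
    (he : ∀ r, b r < s₀ → e r ≠ i₀ ∧ b' (e r) < s) :
    ¬ SympEmb n (ellipsoid b) (ellipsoid b') := by
  intro hemb
  obtain ⟨p, ψ, hψ⟩ := hemb.isEmb hb hb'
  obtain ⟨m, f, f', α, β, hsm, hf⟩ := exists_innerProf hs hss
  obtain ⟨g, g', R, hg⟩ := exists_outerProf hs hsm
  have H := isHam hs hsm hf hg hψ hres
  have hl := linAt hs hsm hf hg hψ hres hres₀ hlt
  refine no_ham H hl e i₀ ((one_lt_div (hb' i₀)).2 hi₀) (fun r hr => ?_) ?_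
  · obtain ⟨h1, h2⟩ := he r ((one_lt_div (hb r)).1 hr)
    exact ⟨h1, (one_lt_div (hb' _)).2 h2⟩
  · intro X hX hper hact
    exact orbit_trivial hs hsm hf hg hψ hres hres₀ hX hper hact

/-- A nonempty open interval contains a number that is not an integer multiple of any of
finitely many given reals. -/
theorem exists_nonres (c : Fin n → ℝ) {x y : ℝ} (hxy : x < y) (hc : ∀ i, 0 < c i) :
    ∃ s, x < s ∧ s < y ∧ ∀ i (k : ℤ), s / c i ≠ k := by
  have hcount : (⋃ i : Fin n, range fun k : ℤ => (k:ℝ) * c i).Countable :=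
    countable_iUnion fun i => countable_range _
  have hex : ∃ s ∈ Ioo x y, s ∉ ⋃ i : Fin n, range fun k : ℤ => (k:ℝ) * c i := by
    by_contra! hcon
    exact Cardinal.Real.Ioo_countable_iff.not.2 hxy.not_ge (hcount.mono fun s hs => hcon s hs)
  obtain ⟨s, hs, hs'⟩ := hex
  refine ⟨s, hs.1, hs.2, fun i k hk => hs' ?_⟩
  rw [div_eq_iff (hc i).ne'] at hk
  exact mem_iUnion.2 ⟨i, k, hk.symm⟩

/-- Gromov nonsqueezing for ellipsoids. -/
theorem nonsqueezing (hb : ∀ i, 0 < b i) (hb' : ∀ i, 0 < b' i) {c : ℝ} (hc : ∀ i, c ≤ b i)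
    {i₀ : Fin n} (h : b' i₀ < c) : ¬ SympEmb n (ellipsoid b) (ellipsoid b') := by
  obtain ⟨s₀, h1, h2, h3⟩ := exists_nonres b h hb
  obtain ⟨s, h4, h5, h6⟩ := exists_nonres b' h1 hb'
  refine no_sympEmb hb hb' ((hb' i₀).trans h4) h5 h6 h3 (fun i => ?_) (Equiv.refl _) i₀ h4
    (fun r hr => ?_)
  · rw [div_lt_iff₀ (hb i)]
    linarith [hc i, hb i]
  · exact absurd (h2.trans_le (hc r)) hr.not_gt

/-- The second obstruction: if all but one of the axes of the source are at least `c`, and the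
remaining one at least `c / 2`, then the target cannot have two axes smaller than `c`. -/
theorem second_obstruction (hb : ∀ i, 0 < b i) (hb' : ∀ i, 0 < b' i) {c : ℝ} {i₀ : Fin n}
    (hc : ∀ i, i ≠ i₀ → c ≤ b i) (hc₀ : c ≤ 2 * b i₀) {i₁ i₂ : Fin n} (hne : i₁ ≠ i₂)
    (h₁ : b' i₁ < c) (h₂ : b' i₂ < c) : ¬ SympEmb n (ellipsoid b) (ellipsoid b') := by
  obtain ⟨s₀, h1, h2, h3⟩ := exists_nonres b (max_lt h₁ h₂) hb
  obtain ⟨s, h4, h5, h6⟩ := exists_nonres b' h1 hb'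
  have k1 : b' i₁ < s := (le_max_left _ _).trans_lt h4
  have k2 : b' i₂ < s := (le_max_right _ _).trans_lt h4
  refine no_sympEmb hb hb' ((hb' i₁).trans k1) h5 h6 h3 (fun i => ?_) (Equiv.swap i₀ i₁) i₂ k2
    (fun r hr => ?_)
  · rw [div_lt_iff₀ (hb i)]
    by_cases hi : i = i₀
    · subst hi; linarith
    · linarith [hc i hi, hb i]
  · have hr0 : r = i₀ := by
      by_contra hr0
      exact absurd (h2.trans_le (hc r hr0)) hr.not_gt
    subst hr0
    rw [Equiv.swap_apply_left]
    exact ⟨hne, k1⟩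

end Obstruction

/-! ### Embedding the ellipsoid `E(A, 2A, …, 2A)` into a polydisk -/

section Strip

/-- The area `π|z|²`. -/
def areaT (z : ℂ) : ℝ := π * (z.re ^ 2 + z.im ^ 2)

/-- The smoothed half-area `π|z|²/2 + δ`. -/
def stripK (δ : ℝ) (z : ℂ) : ℝ := areaT z / 2 + δ

/-- The scaling factor `√(π|z|²/4 + δ)`. -/
def stripW (δ : ℝ) (z : ℂ) : ℝ := √(areaT z / 4 + δ)

/-- The first auxiliary coordinate of the strip map. -/
def stripC (δ : ℝ) (z : ℂ) : ℝ := √π * z.re * stripW δ z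

/-- The second auxiliary coordinate of the strip map. -/
def stripS (δ : ℝ) (z : ℂ) : ℝ := √π * z.im * stripW δ z * (stripK δ z)⁻¹

/-- An area-preserving embedding of the plane into the strip `|y| < 1/2`, sending the disk of area
`t` into `|x| ≤ t/2 + δ`. -/
def strip (δ : ℝ) (z : ℂ) : ℂ :=
  ⟨stripC δ z * (√(1 - stripS δ z ^ 2))⁻¹, Real.arcsin (stripS δ z) / π⟩

variable {δ : ℝ}

theorem areaT_nonneg (z : ℂ) : 0 ≤ areaT z := by unfold areaT; positivity

theorem stripK_pos (hδ : 0 < δ) (z : ℂ) : 0 < stripK δ z := by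
  have := areaT_nonneg z; unfold stripK; positivity

theorem stripW_pos (hδ : 0 < δ) (z : ℂ) : 0 < stripW δ z := by
  have := areaT_nonneg z; unfold stripW; positivity

theorem stripW_sq (hδ : 0 < δ) (z : ℂ) : stripW δ z ^ 2 = areaT z / 4 + δ := by
  have := areaT_nonneg z; unfold stripW; exact Real.sq_sqrt (by positivity)

theorem strip_rel (hδ : 0 < δ) (z : ℂ) :
    (1 - stripS δ z ^ 2) * stripK δ z ^ 2 = stripC δ z ^ 2 + δ ^ 2 := by
  have h1 := (stripK_pos hδ z).ne'
  have h2 := stripW_sq hδ z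
  have h3 : stripS δ z * stripK δ z = √π * z.im * stripW δ z := by
    unfold stripS; field_simp
  have h4 : √π ^ 2 = π := Real.sq_sqrt Real.pi_pos.le
  have h5 : (1 - stripS δ z ^ 2) * stripK δ z ^ 2
      = stripK δ z ^ 2 - (stripS δ z * stripK δ z) ^ 2 := by ring
  rw [h5, h3, stripC, mul_pow, mul_pow, mul_pow, mul_pow, h2, h4, stripK, areaT]
  ring

theorem one_sub_stripS_sq_pos (hδ : 0 < δ) (z : ℂ) : 0 < 1 - stripS δ z ^ 2 := by
  have h1 := stripK_pos hδ z
  have h2 := strip_rel hδ z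
  by_contra! h
  nlinarith [sq_nonneg (stripC δ z), mul_nonneg (neg_nonneg.2 h) (sq_nonneg (stripK δ z)),
    pow_pos hδ 2]

theorem stripS_gt (hδ : 0 < δ) (z : ℂ) : -1 < stripS δ z := by
  nlinarith [one_sub_stripS_sq_pos hδ z]

theorem stripS_lt (hδ : 0 < δ) (z : ℂ) : stripS δ z < 1 := by
  nlinarith [one_sub_stripS_sq_pos hδ z]

theorem abs_strip_im_lt (hδ : 0 < δ) (z : ℂ) : |(strip δ z).im| < 1 / 2 := by
  have h1 : Real.arcsin (stripS δ z) < π / 2 := Real.arcsin_lt_pi_div_two.2 (stripS_lt hδ z)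
  have h2 : -(π / 2) < Real.arcsin (stripS δ z) := Real.neg_pi_div_two_lt_arcsin.2 (stripS_gt hδ z)
  have hp := Real.pi_pos
  show |Real.arcsin (stripS δ z) / π| < 1 / 2
  rw [abs_lt, lt_div_iff₀ hp, div_lt_iff₀ hp]
  constructor <;> linarith

theorem abs_strip_re_le (hδ : 0 < δ) (z : ℂ) : |(strip δ z).re| ≤ areaT z / 2 + δ := by
  show |stripC δ z * (√(1 - stripS δ z ^ 2))⁻¹| ≤ stripK δ z
  have h0 := one_sub_stripS_sq_pos hδ z
  refine abs_le_of_sq_le_sq ?_ (stripK_pos hδ z).le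
  rw [mul_pow, inv_pow, Real.sq_sqrt h0.le, ← div_eq_mul_inv, div_le_iff₀ h0]
  nlinarith [strip_rel hδ z, sq_nonneg δ]

theorem strip_injective (hδ : 0 < δ) : Function.Injective (strip δ) := by
  intro z z' h
  have hre := congrArg Complex.re h
  have him := congrArg Complex.im h
  simp only [strip] at hre him
  have hS : stripS δ z = stripS δ z' := by
    have h1 : Real.arcsin (stripS δ z) = Real.arcsin (stripS δ z') := by
      have := Real.pi_pos.ne'
      field_simp at him
      exact him
    exact Real.injOn_arcsin ⟨(stripS_gt hδ z).le, (stripS_lt hδ z).le⟩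
      ⟨(stripS_gt hδ z').le, (stripS_lt hδ z').le⟩ h1
  have h0 := one_sub_stripS_sq_pos hδ z'
  have hC : stripC δ z = stripC δ z' := by
    rw [hS] at hre
    exact mul_right_cancel₀ (inv_ne_zero (Real.sqrt_pos.2 h0).ne') hre
  have hK : stripK δ z = stripK δ z' := by
    have h1 := strip_rel hδ z
    have h2 := strip_rel hδ z'
    rw [hS, hC, ← h2] at h1
    exact (sq_eq_sq₀ (stripK_pos hδ z).le (stripK_pos hδ z').le).1 (mul_left_cancel₀ h0.ne' h1)
  have hT : areaT z = areaT z' := by unfold stripK at hK; linarith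
  have hW : stripW δ z = stripW δ z' := by unfold stripW; rw [hT]
  have hw := (stripW_pos hδ z').ne'
  have hpi : √π ≠ 0 := (Real.sqrt_pos.2 Real.pi_pos).ne'
  apply Complex.ext
  · unfold stripC at hC
    rw [hW] at hC
    exact mul_left_cancel₀ hpi (mul_right_cancel₀ hw hC)
  · unfold stripS at hS
    rw [hW, hK] at hS
    exact mul_left_cancel₀ hpi (mul_right_cancel₀ hw
      (mul_right_cancel₀ (inv_ne_zero (stripK_pos hδ z').ne') hS))

theorem contDiff_areaT {k : WithTop ℕ∞} : ContDiff ℝ k areaT := by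
  unfold areaT
  exact contDiff_const.mul ((Complex.reCLM.contDiff.pow 2).add (Complex.imCLM.contDiff.pow 2))

theorem contDiff_stripW (hδ : 0 < δ) {k : WithTop ℕ∞} : ContDiff ℝ k (stripW δ) := by
  unfold stripW
  refine ContDiff.sqrt ((contDiff_areaT.div_const 4).add contDiff_const) fun z => ?_
  have := areaT_nonneg z
  positivity

theorem contDiff_stripC (hδ : 0 < δ) {k : WithTop ℕ∞} : ContDiff ℝ k (stripC δ) := by
  unfold stripC
  exact (contDiff_const.mul Complex.reCLM.contDiff).mul (contDiff_stripW hδ)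

theorem contDiff_stripS (hδ : 0 < δ) {k : WithTop ℕ∞} : ContDiff ℝ k (stripS δ) := by
  unfold stripS
  refine ((contDiff_const.mul Complex.imCLM.contDiff).mul (contDiff_stripW hδ)).mul
    (ContDiff.inv ?_ fun z => (stripK_pos hδ z).ne')
  unfold stripK
  exact (contDiff_areaT.div_const 2).add contDiff_const

theorem contDiff_strip (hδ : 0 < δ) {k : WithTop ℕ∞} : ContDiff ℝ k (strip δ) := by
  have h1 : ContDiff ℝ k fun z => stripC δ z * (√(1 - stripS δ z ^ 2))⁻¹ := by
    refine (contDiff_stripC hδ).mul (ContDiff.inv (ContDiff.sqrt ?_ fun z => ?_) fun z => ?_)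
    · exact contDiff_const.sub ((contDiff_stripS hδ).pow 2)
    · exact (one_sub_stripS_sq_pos hδ z).ne'
    · exact (Real.sqrt_pos.2 (one_sub_stripS_sq_pos hδ z)).ne'
  have h2 : ContDiff ℝ k fun z => Real.arcsin (stripS δ z) / π := by
    refine ContDiff.div_const (contDiff_iff_contDiffAt.2 fun z => ?_) _
    exact (Real.contDiffAt_arcsin (stripS_gt hδ z).ne' (stripS_lt hδ z).ne).comp z
      (contDiff_stripS hδ).contDiffAt
  have h3 : strip δ = fun z => Complex.equivRealProdCLM.symm
      (stripC δ z * (√(1 - stripS δ z ^ 2))⁻¹, Real.arcsin (stripS δ z) / π) := by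
    funext z; apply Complex.ext <;> simp [strip]
  rw [h3]
  exact Complex.equivRealProdCLM.symm.contDiff.comp (h1.prodMk h2)

/-- The Jacobian of the auxiliary coordinates. -/
theorem stripCS_jacobian (hδ : 0 < δ) (z : ℂ) : ∃ DC DS : ℂ →L[ℝ] ℝ,
    HasFDerivAt (stripC δ) DC z ∧ HasFDerivAt (stripS δ) DS z ∧
    ∀ v w, DC v * DS w - DC w * DS v
      = π * (1 - stripS δ z ^ 2) * (v.re * w.im - v.im * w.re) := by
  have hre : HasFDerivAt (fun z : ℂ => z.re) Complex.reCLM z := Complex.reCLM.hasFDerivAt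
  have him : HasFDerivAt (fun z : ℂ => z.im) Complex.imCLM z := Complex.imCLM.hasFDerivAt
  have hT : HasFDerivAt areaT ((2 * π * z.re) • Complex.reCLM + (2 * π * z.im) • Complex.imCLM) z := by
    have := ((hre.pow 2).add (him.pow 2)).const_mul π
    refine this.congr_fderiv ?_
    ext v; simp; ring
  have hk := stripK_pos hδ z
  have hw := stripW_pos hδ z
  have hK : HasFDerivAt (stripK δ) ((1 / 2 : ℝ) • ((2 * π * z.re) • Complex.reCLM + (2 * π * z.im) • Complex.imCLM)) z := by
    have := (hT.const_mul (1 / 2 : ℝ)).add_const δ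
    refine this.congr_of_eventuallyEq (Filter.Eventually.of_forall fun y => ?_)
    simp only [stripK]; ring
  have hW : HasFDerivAt (stripW δ) ((1 / (8 * stripW δ z)) • ((2 * π * z.re) • Complex.reCLM + (2 * π * z.im) • Complex.imCLM)) z := by
    have h1 := (hT.const_mul (1 / 4 : ℝ)).add_const δ
    have h2 : HasFDerivAt (fun z => areaT z / 4 + δ) ((1 / 4 : ℝ) • ((2 * π * z.re) • Complex.reCLM + (2 * π * z.im) • Complex.imCLM)) z := by
      refine h1.congr_of_eventuallyEq (Filter.Eventually.of_forall fun y => ?_)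
      simp only; ring
    have h3 := h2.sqrt (by have := areaT_nonneg z; positivity)
    refine h3.congr_fderiv ?_
    rw [smul_smul]
    congr 1
    show 1 / (2 * stripW δ z) * (1 / 4) = _
    field_simp; norm_num
  have hKi := (hasDerivAt_inv hk.ne').comp_hasFDerivAt z hK
  have hC := (hre.const_mul (√π)).mul hW
  have hS := ((him.const_mul (√π)).mul hW).mul hKi
  refine ⟨_, _, hC, hS, fun v w => ?_⟩
  have hp : √π ^ 2 = π := Real.sq_sqrt Real.pi_pos.le
  have hp0 : √π ≠ 0 := (Real.sqrt_pos.2 Real.pi_pos).ne'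
  have hww := stripW_sq hδ z
  have hkk : stripK δ z = areaT z / 2 + δ := rfl
  simp [stripS]
  rw [areaT] at hww hkk
  generalize stripW δ z = W at *
  generalize stripK δ z = k at *
  generalize √π = q at *
  obtain rfl : δ = W ^ 2 - π * (z.re ^ 2 + z.im ^ 2) / 4 := by linarith
  obtain rfl : k = W ^ 2 + π * (z.re ^ 2 + z.im ^ 2) / 4 := by linarith
  rw [← hp] at *
  have hk' := hk.ne'
  have hw' := hw.ne'
  field_simp
  ring

/-- The strip map preserves area. -/
theorem strip_symp (hδ : 0 < δ) (z : ℂ) : ∃ D : ℂ →L[ℝ] ℂ, HasFDerivAt (strip δ) D z ∧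
    ∀ v w, (starRingEnd ℂ (D v) * D w).im = (starRingEnd ℂ v * w).im := by
  obtain ⟨DC, DS, hC, hS, hj⟩ := stripCS_jacobian hδ z
  have h0 := one_sub_stripS_sq_pos hδ z
  have hr := Real.sqrt_pos.2 h0
  have hA : HasFDerivAt (fun z => Real.arcsin (stripS δ z))
      ((1 / √(1 - stripS δ z ^ 2)) • DS) z :=
    (Real.hasDerivAt_arcsin (stripS_gt hδ z).ne' (stripS_lt hδ z).ne).comp_hasFDerivAt z hS
  have hy := hA.const_mul (1 / π)
  have hQ : ∃ κ : ℝ, HasFDerivAt (fun z => (√(1 - stripS δ z ^ 2))⁻¹) (κ • DS) z := by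
    have h1 : HasDerivAt (fun s : ℝ => 1 - s ^ 2) (-(2 * stripS δ z)) (stripS δ z) := by
      have := (hasDerivAt_pow 2 (stripS δ z)).const_sub 1
      simpa using this
    have h2 := (h1.sqrt h0.ne').inv hr.ne'
    exact ⟨_, h2.comp_hasFDerivAt z hS⟩
  obtain ⟨κ, hQ⟩ := hQ
  have hx := hC.mul hQ
  have hD := (Complex.equivRealProdCLM.symm.toContinuousLinearMap).hasFDerivAt.comp z (hx.prodMk hy)
  refine ⟨_, hD.congr_of_eventuallyEq (Filter.Eventually.of_forall fun y => ?_), fun v w => ?_⟩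
  · apply Complex.ext <;> simp [strip]
    ring
  · have hjv := hj v w
    have hsq := Real.sq_sqrt h0.le
    have hpi := Real.pi_pos.ne'
    simp
    generalize √(1 - stripS δ z ^ 2) = r at *
    rw [← hsq] at hjv
    have hr' := hr.ne'
    field_simp
    linear_combination hjv

end Strip

/-! ### Action-angle coordinates and the shear -/

section ToPolydisk

open Filter Topology

/-- Action-angle coordinates: `r + iθ` is sent to the point of area `r` and angle `2πθ`. -/
def polar (w : ℂ) : ℂ := (√(w.re / π) : ℝ) * Complex.exp ((2 * π * w.im : ℝ) * Complex.I)

theorem norm_polar (w : ℂ) : ‖polar w‖ = √(w.re / π) := by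
  rw [polar, norm_mul, Complex.norm_exp_ofReal_mul_I, mul_one, Complex.norm_real,
    Real.norm_of_nonneg (Real.sqrt_nonneg _)]

theorem area_polar {w : ℂ} (hw : 0 < w.re) : π * ‖polar w‖ ^ 2 = w.re := by
  rw [norm_polar, Real.sq_sqrt (by positivity)]
  field_simp

theorem polar_inj {w w' : ℂ} (hw : 0 < w.re) (hw' : 0 < w'.re) (h : polar w = polar w') :
    w.re = w'.re ∧ ∃ k : ℤ, w.im = w'.im + k := by
  have hre : w.re = w'.re := by rw [← area_polar hw, ← area_polar hw', h]
  refine ⟨hre, ?_⟩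
  unfold polar at h
  rw [hre] at h
  have hne : ((√(w'.re / π) : ℝ) : ℂ) ≠ 0 := by
    have : 0 < √(w'.re / π) := Real.sqrt_pos.2 (by positivity)
    exact_mod_cast this.ne'
  obtain ⟨k, hk⟩ := Complex.exp_eq_exp_iff_exists_int.1 (mul_left_cancel₀ hne h)
  refine ⟨k, ?_⟩
  have h1 : (2 * π * Complex.I : ℂ) * (w.im : ℂ) = (2 * π * Complex.I) * (w'.im + k) := by
    push_cast at hk
    linear_combination hk
  have h2 := mul_left_cancel₀ Complex.two_pi_I_ne_zero h1
  exact_mod_cast h2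

theorem contDiffAt_polar {w : ℂ} (hw : 0 < w.re) {k : WithTop ℕ∞} : ContDiffAt ℝ k polar w := by
  unfold polar
  refine ContDiffAt.mul (Complex.ofRealCLM.contDiff.contDiffAt.comp w ?_)
    (ContDiffAt.cexp (ContDiffAt.mul (Complex.ofRealCLM.contDiff.contDiffAt.comp w ?_)
      contDiffAt_const))
  · exact (Complex.reCLM.contDiff.contDiffAt.div_const π).sqrt (by
      have := Real.pi_pos
      show w.re / π ≠ 0
      positivity)
  · exact contDiffAt_const.mul Complex.imCLM.contDiff.contDiffAt

theorem polar_symp {z : ℂ} (hz : 0 < z.re) : ∃ D : ℂ →L[ℝ] ℂ, HasFDerivAt polar D z ∧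
    ∀ v w, (starRingEnd ℂ (D v) * D w).im = (starRingEnd ℂ v * w).im := by
  have hre : HasFDerivAt (fun z : ℂ => z.re) Complex.reCLM z := Complex.reCLM.hasFDerivAt
  have him : HasFDerivAt (fun z : ℂ => z.im) Complex.imCLM z := Complex.imCLM.hasFDerivAt
  have hpi := Real.pi_pos
  have hrho := ((hre.const_mul (1 / π)).sqrt (by positivity))
  have h1 := Complex.ofRealCLM.hasFDerivAt.comp z hrho
  have h2 := ((Complex.ofRealCLM.hasFDerivAt.comp z (him.const_mul (2 * π))).mul_const
    Complex.I).cexp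
  have h3 := h1.mul h2
  refine ⟨_, h3.congr_of_eventuallyEq (Eventually.of_forall fun y => ?_), fun v w => ?_⟩
  · simp only [polar, Pi.mul_apply, Function.comp_apply, Complex.ofRealCLM_apply]
    rw [show 1 / π * y.re = y.re / π by ring]
  · have hr : 0 < √(1 / π * z.re) := Real.sqrt_pos.2 (by positivity)
    have hrs : √(1 / π * z.re) ^ 2 = 1 / π * z.re := Real.sq_sqrt (by positivity)
    have hE : (Complex.exp ((2 * π * z.im : ℝ) * Complex.I)).re ^ 2
        + (Complex.exp ((2 * π * z.im : ℝ) * Complex.I)).im ^ 2 = 1 := by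
      rw [Complex.exp_ofReal_mul_I_re, Complex.exp_ofReal_mul_I_im]
      exact Real.cos_sq_add_sin_sq _
    simp only [Function.comp_apply, Complex.ofRealCLM_apply, _root_.add_apply, _root_.smul_apply,
      ContinuousLinearMap.comp_apply, Complex.reCLM_apply, Complex.imCLM_apply, smul_eq_mul,
      Complex.real_smul]
    generalize Complex.exp ((2 * π * z.im : ℝ) * Complex.I) = E at *
    generalize √(1 / π * z.re) = r at *
    simp
    have hr' := hr.ne'
    field_simp
    linear_combination 4 * r ^ 2 * π ^ 2 * (v.re * w.im - v.im * w.re) * hE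

variable {n : ℕ}

/-- A coordinatewise area-preserving map preserves the symplectic form. -/
theorem pi_symp {φ : ℂ → ℂ} {x : Fin n → ℂ} (h : ∀ i, ∃ D : ℂ →L[ℝ] ℂ, HasFDerivAt φ D (x i) ∧
      ∀ v w, (starRingEnd ℂ (D v) * D w).im = (starRingEnd ℂ v * w).im) :
    ∃ D : (Fin n → ℂ) →L[ℝ] (Fin n → ℂ), HasFDerivAt (fun y : Fin n → ℂ => fun i => φ (y i)) D x ∧
      ∀ v w, stdSymp n (D v) (D w) = stdSymp n v w := by
  choose D hD hs using h
  refine ⟨ContinuousLinearMap.pi fun i => (D i).comp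
    (ContinuousLinearMap.proj (R := ℝ) (φ := fun _ : Fin n => ℂ) i), ?_, fun v w => ?_⟩
  · rw [hasFDerivAt_pi]
    intro i
    exact (hD i).comp x (hasFDerivAt_apply i x)
  · unfold stdSymp
    refine Finset.sum_congr rfl fun i _ => ?_
    simpa using hs i (v i) (w i)

variable {N : ℕ}

/-- The shear of `(ℝ × ℝ)^(N+1)` given by a linear map on positions and its inverse transpose on
momenta. -/
def shear : (Fin (N + 1) → ℂ) →L[ℝ] (Fin (N + 1) → ℂ) :=
  LinearMap.toContinuousLinearMap
    { toFun := fun x => Fin.cons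
        ⟨(x 0).re - 1 / 2 * ∑ j : Fin N, (x j.succ).re,
          (x 0).im - ∑ j : Fin N, ((x j.succ).im + (x 0).im / 2)⟩
        (fun j => ⟨(x 0).re - 1 / 2 * ∑ j : Fin N, (x j.succ).re + (x j.succ).re,
          (x j.succ).im + (x 0).im / 2⟩)
      map_add' := fun x y => by
        funext i
        refine Fin.cases ?_ (fun j => ?_) i
        · apply Complex.ext <;> simp [Finset.sum_add_distrib] <;> ring
        · apply Complex.ext <;> simp [Finset.sum_add_distrib] <;> ring
      map_smul' := fun r x => by
        funext i
        refine Fin.cases ?_ (fun j => ?_) i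
        · apply Complex.ext <;> simp [Finset.sum_add_distrib, ← Finset.mul_sum]
          · ring
          · rw [mul_sub, mul_add, Finset.mul_sum]; ring
        · apply Complex.ext <;> simp [Finset.sum_add_distrib, ← Finset.mul_sum] <;> ring }

theorem shear_zero (x : Fin (N + 1) → ℂ) :
    shear x 0 = ⟨(x 0).re - 1 / 2 * ∑ j : Fin N, (x j.succ).re,
      (x 0).im - ∑ j : Fin N, ((x j.succ).im + (x 0).im / 2)⟩ := rfl

theorem shear_succ (x : Fin (N + 1) → ℂ) (j : Fin N) :
    shear x j.succ = ⟨(x 0).re - 1 / 2 * ∑ j : Fin N, (x j.succ).re + (x j.succ).re,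
      (x j.succ).im + (x 0).im / 2⟩ := rfl

theorem stdSymp_eq (v w : Fin n → ℂ) :
    stdSymp n v w = ∑ i, ((v i).re * (w i).im - (v i).im * (w i).re) := by
  unfold stdSymp
  refine Finset.sum_congr rfl fun i _ => ?_
  simp; ring

theorem shear_symp (v w : Fin (N + 1) → ℂ) :
    stdSymp (N + 1) (shear v) (shear w) = stdSymp (N + 1) v w := by
  rw [stdSymp_eq, stdSymp_eq, Fin.sum_univ_succ, Fin.sum_univ_succ, shear_zero, shear_zero]
  simp only [shear_succ]
  simp only [Finset.sum_add_distrib, Finset.sum_sub_distrib, add_mul, mul_add, ← Finset.mul_sum,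
    ← Finset.sum_mul, sub_mul, mul_sub, Finset.sum_const, Finset.card_univ, Fintype.card_fin,
    nsmul_eq_mul, ← Finset.sum_div, mul_div_assoc, div_mul_eq_mul_div]
  ring

end ToPolydisk

section ToPolydiskEmb

open Filter Topology

variable {N : ℕ} {A δ : ℝ}

/-- Action-angle coordinates of the embedding into the polydisk. -/
def polyPre (A δ : ℝ) (x : Fin (N + 1) → ℂ) : Fin (N + 1) → ℂ :=
  shear (fun i => strip δ (x i)) + fun _ => ((A / 2 + (N + 3) / 2 * δ : ℝ) : ℂ)

/-- The embedding of `E(A, 2A, …, 2A)` into the polydisk. -/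
def polyEmb (A δ : ℝ) (x : Fin (N + 1) → ℂ) : Fin (N + 1) → ℂ :=
  fun i => polar (polyPre A δ x i)

theorem areaT_eq (z : ℂ) : areaT z = π * ‖z‖ ^ 2 := by
  rw [areaT, Complex.sq_norm, Complex.normSq_apply]; ring

theorem area_of_mem (hA : 0 < A) {x : Fin (N + 1) → ℂ}
    (hx : x ∈ ellipsoid (Fin.cons A fun _ => 2 * A : Fin (N + 1) → ℝ)) :
    areaT (x 0) + 1 / 2 * ∑ j : Fin N, areaT (x j.succ) ≤ A := by
  have h : ∑ i, π * ‖x i‖ ^ 2 / (Fin.cons A fun _ => 2 * A : Fin (N + 1) → ℝ) i ≤ 1 := hx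
  rw [Fin.sum_univ_succ] at h
  simp only [Fin.cons_zero, Fin.cons_succ, ← areaT_eq] at h
  rw [← Finset.sum_div] at h
  have h2 : areaT (x 0) / A + (∑ j : Fin N, areaT (x j.succ)) / (2 * A)
      = (areaT (x 0) + 1 / 2 * ∑ j : Fin N, areaT (x j.succ)) / A := by
    field_simp
  rw [h2, div_le_one hA] at h
  exact h

theorem abs_shear_re_le (x : Fin (N + 1) → ℂ) (i : Fin (N + 1)) :
    |(shear x i).re| ≤ |(x 0).re| + 1 / 2 * ∑ j : Fin N, |(x j.succ).re| := by
  refine Fin.cases ?_ (fun j => ?_) i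
  · rw [shear_zero]
    refine (abs_sub _ _).trans ?_
    rw [abs_mul, abs_of_pos (by norm_num : (0:ℝ) < 1 / 2)]
    have := Finset.abs_sum_le_sum_abs (fun j : Fin N => (x j.succ).re) Finset.univ
    linarith
  · rw [shear_succ]
    have h1 : (x 0).re - 1 / 2 * ∑ j : Fin N, (x j.succ).re + (x j.succ).re
        = (x 0).re + ∑ k : Fin N, ((if k = j then 1 else 0) - 1 / 2) * (x k.succ).re := by
      simp only [sub_mul, Finset.sum_sub_distrib, ← Finset.mul_sum, ite_mul, one_mul, zero_mul,
        Finset.sum_ite_eq', Finset.mem_univ, if_true]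
      ring
    simp only [h1]
    refine (abs_add_le _ _).trans (add_le_add le_rfl ?_)
    rw [Finset.mul_sum]
    refine (Finset.abs_sum_le_sum_abs _ _).trans (Finset.sum_le_sum fun k _ => ?_)
    rw [abs_mul]
    refine mul_le_mul_of_nonneg_right ?_ (abs_nonneg _)
    split_ifs <;> norm_num

theorem polyPre_re_mem (hδ : 0 < δ) (hA : 0 < A) {x : Fin (N + 1) → ℂ}
    (hx : x ∈ ellipsoid (Fin.cons A fun _ => 2 * A : Fin (N + 1) → ℝ)) (i : Fin (N + 1)) :
    0 < (polyPre A δ x i).re ∧ (polyPre A δ x i).re ≤ A + (N + 3) * δ := by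
  have h1 := abs_shear_re_le (fun i => strip δ (x i)) i
  have h2 := abs_strip_re_le hδ (x 0)
  have h3 : ∑ j : Fin N, |(strip δ (x j.succ)).re| ≤ ∑ j : Fin N, (areaT (x j.succ) / 2 + δ) :=
    Finset.sum_le_sum fun j _ => abs_strip_re_le hδ (x j.succ)
  rw [Finset.sum_add_distrib, ← Finset.sum_div] at h3
  simp only [Finset.sum_const, Finset.card_univ, Fintype.card_fin, nsmul_eq_mul] at h3
  have h4 := area_of_mem hA hx
  have h5 : (polyPre A δ x i).re = (shear (fun i => strip δ (x i)) i).re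
      + (A / 2 + (N + 3) / 2 * δ) := by
    simp only [polyPre, Pi.add_apply, Complex.add_re, Complex.ofReal_re]
  have h6 : |(shear (fun i => strip δ (x i)) i).re| ≤ A / 2 + (1 + N / 2) * δ := by
    refine h1.trans ?_
    linarith
  rw [abs_le] at h6
  rw [h5]
  constructor <;> nlinarith [h6.1, h6.2]

theorem eq_of_int_diff {y y' : ℝ} (hy : |y| < 1 / 2) (hy' : |y'| < 1 / 2) {k : ℤ}
    (h : y = y' + k) : y = y' := by
  rw [abs_lt] at hy hy'
  have h1 : (k:ℝ) < 1 := by linarith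
  have h2 : (-1:ℝ) < k := by linarith
  have h3 : k < 1 := by exact_mod_cast h1
  have h4 : -1 < k := by exact_mod_cast h2
  have : k = 0 := by omega
  rw [h, this]; simp

theorem polyEmb_injOn (hδ : 0 < δ) (hA : 0 < A) :
    InjOn (polyEmb A δ) (ellipsoid (Fin.cons A fun _ => 2 * A : Fin (N + 1) → ℝ)) := by
  intro x hx x' hx' h
  have hp : ∀ i, (polyPre A δ x i).re = (polyPre A δ x' i).re ∧
      ∃ k : ℤ, (polyPre A δ x i).im = (polyPre A δ x' i).im + k := fun i =>
    polar_inj (polyPre_re_mem hδ hA hx i).1 (polyPre_re_mem hδ hA hx' i).1 (congrFun h i)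
  have hre : ∀ i, (shear (fun i => strip δ (x i)) i).re
      = (shear (fun i => strip δ (x' i)) i).re := fun i => by
    simpa [polyPre] using (hp i).1
  have him : ∀ i, ∃ k : ℤ, (shear (fun i => strip δ (x i)) i).im
      = (shear (fun i => strip δ (x' i)) i).im + k := fun i => by
    simpa [polyPre] using (hp i).2
  choose k hk using him
  have hX0 := hre 0
  rw [shear_zero, shear_zero] at hX0
  have hXj : ∀ j : Fin N, (strip δ (x j.succ)).re = (strip δ (x' j.succ)).re := by
    intro j
    have := hre j.succ
    rw [shear_succ, shear_succ] at this
    simp only at this hX0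
    linarith
  simp only [hXj] at hX0
  have hX0' : (strip δ (x 0)).re = (strip δ (x' 0)).re := by linarith
  have hk0 := hk 0
  rw [shear_zero, shear_zero] at hk0
  have hkj : ∀ j : Fin N, (strip δ (x j.succ)).im + (strip δ (x 0)).im / 2
      = (strip δ (x' j.succ)).im + (strip δ (x' 0)).im / 2 + k j.succ := by
    intro j
    have := hk j.succ
    rwa [shear_succ, shear_succ] at this
  have hy0 : (strip δ (x 0)).im = (strip δ (x' 0)).im := by
    refine eq_of_int_diff (abs_strip_im_lt hδ _) (abs_strip_im_lt hδ _)
      (k := k 0 + ∑ j : Fin N, k j.succ) ?_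
    simp only [hkj] at hk0
    rw [Finset.sum_add_distrib (g := fun j : Fin N => (k j.succ : ℝ))] at hk0
    push_cast
    linarith
  have hyj : ∀ j : Fin N, (strip δ (x j.succ)).im = (strip δ (x' j.succ)).im := by
    intro j
    refine eq_of_int_diff (abs_strip_im_lt hδ _) (abs_strip_im_lt hδ _) (k := k j.succ) ?_
    have := hkj j
    rw [hy0] at this
    linarith
  funext i
  apply strip_injective hδ
  refine Fin.cases ?_ (fun j => ?_) i
  · exact Complex.ext hX0' hy0
  · exact Complex.ext (hXj j) (hyj j)

theorem contDiff_polyPre (hδ : 0 < δ) {k : WithTop ℕ∞} :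
    ContDiff ℝ k (polyPre A δ : (Fin (N + 1) → ℂ) → _) := by
  unfold polyPre
  refine ContDiff.add (shear.contDiff.comp ?_) contDiff_const
  exact contDiff_pi.2 fun i => (contDiff_strip hδ).comp (contDiff_apply ℝ ℂ i)

/-- The composition of the strip map in each coordinate, the linear shear and action-angle
coordinates embeds `E(A, 2A, …, 2A)` into every polydisk with all areas larger than `A`. -/
theorem sympEmb_polydisk (hA : 0 < A) {a : Fin (N + 1) → ℝ} (ha : ∀ i, A < a i) :
    SympEmb (N + 1) (ellipsoid (Fin.cons A fun _ => 2 * A : Fin (N + 1) → ℝ)) (polydisk a) := by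
  obtain ⟨i₀, hi₀⟩ := Finite.exists_min a
  have hN : (0:ℝ) < N + 3 := by positivity
  obtain ⟨δ, hδ, hδa⟩ : ∃ δ > 0, A + (N + 3) * δ ≤ a i₀ := by
    refine ⟨(a i₀ - A) / (N + 3), div_pos (sub_pos.2 (ha i₀)) hN, ?_⟩
    rw [mul_div_cancel₀ _ hN.ne']; linarith
  refine ⟨polyEmb A δ, polyEmb_injOn hδ hA, ?_, ?_, ?_⟩
  · rintro _ ⟨x, hx, rfl⟩ i
    have h1 := polyPre_re_mem hδ hA hx i
    rw [polyEmb, area_polar h1.1]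
    exact h1.2.trans (hδa.trans (hi₀ i))
  · intro x hx
    refine ContDiffAt.contDiffWithinAt (contDiffAt_pi.2 fun i => ?_)
    have h1 := polyPre_re_mem hδ hA (interior_subset hx) i
    have h2 : ContDiffAt ℝ (⊤ : ℕ∞) (fun x : Fin (N + 1) → ℂ => polyPre A δ x i) x :=
      contDiffAt_pi.1 (contDiff_polyPre hδ).contDiffAt i
    exact (contDiffAt_polar h1.1).comp x h2
  · intro x hx v w
    obtain ⟨D₁, hD₁, hs₁⟩ := pi_symp (φ := strip δ) (x := x) fun i => strip_symp hδ (x i)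
    have hD₂ : HasFDerivAt (polyPre A δ) (shear.comp D₁) x :=
      (shear.hasFDerivAt.comp x hD₁).add_const _
    obtain ⟨D₃, hD₃, hs₃⟩ := pi_symp (φ := polar) (x := polyPre A δ x) fun i =>
      polar_symp (polyPre_re_mem hδ hA (interior_subset hx) i).1
    have hD : HasFDerivAt (polyEmb A δ) (D₃.comp (shear.comp D₁)) x := hD₃.comp x hD₂
    rw [hD.fderiv]
    simp only [ContinuousLinearMap.comp_apply]
    rw [hs₃, shear_symp, hs₁]

end ToPolydiskEmb

/-! ### The second capacities of a polydisk -/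

section Assembly

open Filter Topology

variable {n : ℕ}

theorem SympEmb.trans {X Y Z : Set (Fin n → ℂ)} (h₁ : SympEmb n X Y) (h₂ : SympEmb n Y Z) :
    SympEmb n X Z := by
  obtain ⟨φ, hi, hm, hc, hs⟩ := h₁
  obtain ⟨χ, hi', hm', hc', hs'⟩ := h₂
  have hmaps : MapsTo φ X Y := fun x hx => hm (mem_image_of_mem φ hx)
  have hcd : ∀ x ∈ interior X, ContDiffAt ℝ (⊤ : ℕ∞) φ x := fun x hx =>
    (hc x hx).contDiffAt (isOpen_interior.mem_nhds hx)
  -- a symplectic map is a local diffeomorphism, so it sends interior points to interior points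
  have hintg : ∀ x ∈ interior X, φ x ∈ interior Y := by
    intro x hx
    have h1 : HasStrictFDerivAt φ (sympEquiv (fderiv ℝ φ x) (hs x hx) :
        (Fin n → ℂ) →L[ℝ] (Fin n → ℂ)) x := by
      rw [sympEquiv_coe]
      exact (hcd x hx).hasStrictFDerivAt (by simp)
    have h2 := h1.map_nhds_eq_of_equiv
    rw [mem_interior_iff_mem_nhds, ← h2]
    exact mem_map.2 (mem_of_superset (isOpen_interior.mem_nhds hx)
      fun y hy => hmaps (interior_subset hy))
  have hcd' : ∀ y ∈ interior Y, ContDiffAt ℝ (⊤ : ℕ∞) χ y := fun y hy =>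
    (hc' y hy).contDiffAt (isOpen_interior.mem_nhds hy)
  refine ⟨χ ∘ φ, hi'.comp hi hmaps, ?_, ?_, ?_⟩
  · rintro _ ⟨x, hx, rfl⟩
    exact hm' (mem_image_of_mem χ (hmaps hx))
  · intro x hx
    exact ((hcd' _ (hintg x hx)).comp x (hcd x hx)).contDiffWithinAt
  · intro x hx v w
    rw [fderiv_comp x ((hcd' _ (hintg x hx)).differentiableAt (by simp))
      ((hcd x hx).differentiableAt (by simp))]
    simp only [ContinuousLinearMap.comp_apply]
    rw [hs' _ (hintg x hx), hs x hx]

theorem SympEmb.of_subset {X Y : Set (Fin n → ℂ)} (h : X ⊆ Y) : SympEmb n X Y := by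
  refine ⟨id, injOn_id X, by simpa using h, contDiffOn_id, fun x _ v w => ?_⟩
  rw [fderiv_id]; rfl

theorem finite_Nk_set {b : Fin n → ℝ} (hb : ∀ i, 0 < b i) (t : ℝ) :
    {p : Fin n × ℕ | ((p.2 : ℝ) + 1) * b p.1 ≤ t}.Finite := by
  have hfin : (⋃ i : Fin n, (fun m : ℕ => (i, m)) '' {m : ℕ | (m:ℝ) ≤ t / b i}).Finite := by
    refine finite_iUnion fun i => Finite.image _ ?_
    refine (finite_Iic ⌊t / b i⌋₊).subset fun m hm => ?_
    exact Nat.le_floor hm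
  refine hfin.subset fun p hp => ?_
  have hp' : ((p.2 : ℝ) + 1) * b p.1 ≤ t := hp
  refine mem_iUnion.2 ⟨p.1, p.2, ?_, rfl⟩
  show (p.2 : ℝ) ≤ t / b p.1
  rw [le_div_iff₀ (hb p.1)]
  nlinarith [hb p.1]

theorem nonneg_of_mem_Nk_set {b : Fin n → ℝ} (hb : ∀ i, 0 < b i) {t : ℝ}
    (ht : 2 ≤ {p : Fin n × ℕ | ((p.2 : ℝ) + 1) * b p.1 ≤ t}.ncard) : 0 ≤ t := by
  obtain ⟨p, hp⟩ := nonempty_of_ncard_ne_zero (by omega :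
    {p : Fin n × ℕ | ((p.2 : ℝ) + 1) * b p.1 ≤ t}.ncard ≠ 0)
  have hp' : ((p.2 : ℝ) + 1) * b p.1 ≤ t := hp
  have := hb p.1
  exact le_trans (by positivity) hp'

theorem two_mul_mem_Nk_set {b : Fin n → ℝ} (hb : ∀ i, 0 < b i) {i : Fin n} {c : ℝ}
    (h : 2 * b i ≤ c) : 2 ≤ {p : Fin n × ℕ | ((p.2 : ℝ) + 1) * b p.1 ≤ c}.ncard := by
  have h1 := (one_lt_ncard_iff (finite_Nk_set hb c)).2
    ⟨(i, 0), (i, 1), by simp; linarith [hb i], by simp; linarith, by simp⟩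
  omega

theorem Nk_two_le {b : Fin n → ℝ} (hb : ∀ i, 0 < b i) {i : Fin n} {c : ℝ} (h : 2 * b i ≤ c) :
    Nk 2 b ≤ c :=
  csInf_le ⟨0, fun _ ht => nonneg_of_mem_Nk_set hb ht⟩ (two_mul_mem_Nk_set hb h)

theorem of_Nk_two_lt {b : Fin n → ℝ} (hb : ∀ i, 0 < b i) (i₀ : Fin n) {c : ℝ} (h : Nk 2 b < c) :
    (∃ i, 2 * b i < c) ∨ ∃ i j, i ≠ j ∧ b i < c ∧ b j < c := by
  obtain ⟨t, ht, htc⟩ := exists_lt_of_csInf_lt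
    ⟨2 * b i₀, two_mul_mem_Nk_set hb (le_refl (2 * b i₀))⟩ h
  have ht' : 1 < {p : Fin n × ℕ | ((p.2 : ℝ) + 1) * b p.1 ≤ t}.ncard := ht
  obtain ⟨p, q, hp, hq, hpq⟩ := (one_lt_ncard_iff (finite_Nk_set hb t)).1 ht'
  have hp' : ((p.2 : ℝ) + 1) * b p.1 ≤ t := hp
  have hq' : ((q.2 : ℝ) + 1) * b q.1 ≤ t := hq
  have hone : ∀ r : Fin n × ℕ, ((r.2 : ℝ) + 1) * b r.1 ≤ t → b r.1 < c := by
    intro r hr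
    have h1 := hb r.1
    have h2 : (0:ℝ) ≤ r.2 := Nat.cast_nonneg _
    nlinarith
  have htwo : ∀ r : Fin n × ℕ, ((r.2 : ℝ) + 1) * b r.1 ≤ t → r.2 ≠ 0 → 2 * b r.1 < c := by
    intro r hr h0
    have h1 := hb r.1
    have h2 : (1:ℝ) ≤ r.2 := by exact_mod_cast Nat.one_le_iff_ne_zero.2 h0
    nlinarith
  by_cases hpq1 : p.1 = q.1
  · left
    by_cases hp0 : p.2 = 0
    · refine ⟨q.1, htwo q hq' fun hq0 => hpq (Prod.ext hpq1 (by rw [hp0, hq0]))⟩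
    · exact ⟨p.1, htwo p hp' hp0⟩
  · have hlt := hone q hq'
    exact Or.inr ⟨p.1, q.1, hpq1, hone p hp', hlt⟩

/-- A polydisk is contained in an ellipsoid one of whose axes is barely longer than the
corresponding one of the polydisk. -/
theorem polydisk_subset {a : Fin n → ℝ} (ha : ∀ i, 0 < a i) (i₀ : Fin n) {ε : ℝ} (hε : 0 < ε) :
    ∃ b : Fin n → ℝ, (∀ i, 0 < b i) ∧ b i₀ = a i₀ + ε ∧ polydisk a ⊆ ellipsoid b := by
  set S := ∑ i, a i with hS
  have hi₀ := ha i₀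
  have hS0 : 0 < S := Finset.sum_pos (fun i _ => ha i) ⟨i₀, Finset.mem_univ _⟩
  set M : ℝ := S * (a i₀ + ε) / ε with hM
  have hM0 : 0 < M := by positivity
  refine ⟨Function.update (fun _ => M) i₀ (a i₀ + ε), fun i => ?_, by simp, fun z hz => ?_⟩
  · by_cases h : i = i₀
    · subst h; simp; positivity
    · rw [Function.update_of_ne h]; exact hM0
  · have hterm : ∀ i, π * ‖z i‖ ^ 2 / Function.update (fun _ => M) i₀ (a i₀ + ε) i
        ≤ (if i = i₀ then a i₀ / (a i₀ + ε) else 0) + a i / M := by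
      intro i
      have hzi := hz i
      have hai := ha i
      by_cases h : i = i₀
      · subst h
        rw [Function.update_self, if_pos rfl]
        have h1 : π * ‖z i‖ ^ 2 / (a i + ε) ≤ a i / (a i + ε) := by gcongr
        have h2 : 0 ≤ a i / M := by positivity
        linarith
      · rw [Function.update_of_ne h, if_neg h, zero_add]
        gcongr
    show ∑ i, π * ‖z i‖ ^ 2 / Function.update (fun _ => M) i₀ (a i₀ + ε) i ≤ 1
    refine (Finset.sum_le_sum fun i _ => hterm i).trans ?_
    rw [Finset.sum_add_distrib, Finset.sum_ite_eq', if_pos (Finset.mem_univ _), ← Finset.sum_div,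
      ← hS]
    have : S / M = ε / (a i₀ + ε) := by rw [hM]; field_simp
    rw [this, ← add_div, div_self (by positivity)]

theorem pos_cons {N : ℕ} {A : ℝ} (hA : 0 < A) (i : Fin (N + 1)) :
    0 < (Fin.cons A fun _ => 2 * A : Fin (N + 1) → ℝ) i := by
  refine Fin.cases ?_ (fun j => ?_) i
  · simpa using hA
  · simpa using hA

theorem le_cons {N : ℕ} {A : ℝ} (hA : 0 < A) (i : Fin (N + 1)) :
    A ≤ (Fin.cons A fun _ => 2 * A : Fin (N + 1) → ℝ) i := by
  refine Fin.cases ?_ (fun j => ?_) i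
  · simp
  · simp; linarith

theorem two_mul_le_cons {N : ℕ} {A : ℝ} {i : Fin (N + 1)} (hi : i ≠ 0) :
    2 * A ≤ (Fin.cons A fun _ => 2 * A : Fin (N + 1) → ℝ) i := by
  obtain ⟨j, rfl⟩ := Fin.exists_succ_eq.2 hi
  simp

theorem two_mul_le_Nk_cons {N : ℕ} {A : ℝ} (hA : 0 < A) :
    2 * A ≤ Nk 2 (Fin.cons A fun _ => 2 * A : Fin (N + 1) → ℝ) := by
  by_contra! h
  rcases of_Nk_two_lt (pos_cons hA) 0 h with ⟨i, hi⟩ | ⟨i, j, hij, hi, hj⟩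
  · linarith [le_cons hA i]
  · by_cases h0 : i = 0
    · have hj0 : j ≠ 0 := fun h => hij (h0.trans h.symm)
      linarith [two_mul_le_cons (A := A) hj0]
    · linarith [two_mul_le_cons (A := A) h0]

/-- The upper bound for ellipsoids inside the polydisk, from nonsqueezing. -/
theorem Nk_le_of_emb_polydisk {a b : Fin n → ℝ} (ha : ∀ i, 0 < a i) (hb : ∀ i, 0 < b i)
    (h : SympEmb n (ellipsoid b) (polydisk a)) (i₀ : Fin n) : Nk 2 b ≤ 2 * a i₀ := by
  refine le_of_forall_pos_le_add fun ε hε => ?_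
  obtain ⟨b', hb', hbi, hsub⟩ := polydisk_subset ha i₀ (ε := ε / 2) (by positivity)
  have hemb := h.trans (SympEmb.of_subset hsub)
  obtain ⟨i₁, hi₁⟩ : ∃ i, ∀ j, b i ≤ b j := by
    have : Nonempty (Fin n) := ⟨i₀⟩
    exact Finite.exists_min b
  have hle : b i₁ ≤ a i₀ + ε / 2 := by
    by_contra! hlt
    exact nonsqueezing hb hb' hi₁ (i₀ := i₀) (by rw [hbi]; exact hlt) hemb
  exact Nk_two_le hb (i := i₁) (by linarith)

/-- The lower bound for ellipsoids containing the polydisk, from the obstruction applied to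
the ellipsoid `E(A, 2A, …, 2A)` inside it. -/
theorem le_Nk_of_polydisk_emb {N : ℕ} {a b' : Fin (N + 1) → ℝ} (hb' : ∀ i, 0 < b' i) {A : ℝ}
    (hA : 0 < A) (hAa : ∀ i, A < a i) (h : SympEmb (N + 1) (polydisk a) (ellipsoid b')) :
    2 * A ≤ Nk 2 b' := by
  have hemb := (sympEmb_polydisk hA hAa).trans h
  by_contra! hlt
  rcases of_Nk_two_lt hb' 0 hlt with ⟨i, hi⟩ | ⟨i, j, hij, hi, hj⟩
  · exact nonsqueezing (pos_cons hA) hb' (le_cons hA) (by linarith : b' i < A) hemb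
  · refine second_obstruction (pos_cons hA) hb' (i₀ := 0) (fun k hk => two_mul_le_cons hk) ?_
      hij hi hj hemb
    simp

end Assembly

/-- For all `n ≥ 1` and `a₁,…,aₙ > 0`,
`c₂ᵐⁱⁿ(P(a₁,…,aₙ)) = c₂ᵐᵃˣ(P(a₁,…,aₙ))`. -/
theorem stmt4 (n : ℕ) (hn : 1 ≤ n) (a : Fin n → ℝ) (ha : ∀ i, 0 < a i) :
    ckmin n 2 (polydisk a) = ckmax n 2 (polydisk a) := by
  obtain ⟨N, rfl⟩ : ∃ N, n = N + 1 := ⟨n - 1, by omega⟩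
  obtain ⟨i₀, hi₀⟩ := Finite.exists_min a
  have hμ := ha i₀
  have hmin : ckmin (N + 1) 2 (polydisk a) = 2 * a i₀ := by
    have hub : ∀ c ∈ {c : ℝ | ∃ b : Fin (N + 1) → ℝ, (∀ i, 0 < b i) ∧
        SympEmb (N + 1) (ellipsoid b) (polydisk a) ∧ c = Nk 2 b}, c ≤ 2 * a i₀ := by
      rintro c ⟨b, hb, hemb, rfl⟩
      exact Nk_le_of_emb_polydisk ha hb hemb i₀
    have hmem : ∀ A, 0 < A → A < a i₀ → 2 * A ≤ ckmin (N + 1) 2 (polydisk a) := fun A hA hAμ =>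
      (two_mul_le_Nk_cons hA).trans (le_csSup ⟨_, hub⟩
        ⟨_, pos_cons hA, sympEmb_polydisk hA fun i => hAμ.trans_le (hi₀ i), rfl⟩)
    refine le_antisymm (csSup_le ⟨_, _, pos_cons (half_pos hμ),
      sympEmb_polydisk (half_pos hμ) fun i => (half_lt_self hμ).trans_le (hi₀ i), rfl⟩ hub) ?_
    refine le_of_forall_lt_imp_le_of_dense fun x hx => ?_
    rcases le_or_gt x 0 with h0 | h0
    · exact h0.trans ((by positivity : (0:ℝ) ≤ 2 * (a i₀ / 2)).trans
        (hmem _ (half_pos hμ) (half_lt_self hμ)))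
    · have := hmem (x / 2) (by positivity) (by linarith)
      linarith
  have hmax : ckmax (N + 1) 2 (polydisk a) = 2 * a i₀ := by
    have hlb : ∀ c ∈ {c : ℝ | ∃ b : Fin (N + 1) → ℝ, (∀ i, 0 < b i) ∧
        SympEmb (N + 1) (polydisk a) (ellipsoid b) ∧ c = Nk 2 b}, 2 * a i₀ ≤ c := by
      rintro c ⟨b, hb, hemb, rfl⟩
      have hmem : ∀ A, 0 < A → A < a i₀ → 2 * A ≤ Nk 2 b := fun A hA hAμ =>
        le_Nk_of_polydisk_emb hb hA (fun i => hAμ.trans_le (hi₀ i)) hemb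
      refine le_of_forall_lt_imp_le_of_dense fun x hx => ?_
      rcases le_or_gt x 0 with h0 | h0
      · exact h0.trans ((by positivity : (0:ℝ) ≤ 2 * (a i₀ / 2)).trans
          (hmem _ (half_pos hμ) (half_lt_self hμ)))
      · have := hmem (x / 2) (by positivity) (by linarith)
        linarith
    have hex : ∀ ε > 0, ∃ b : Fin (N + 1) → ℝ, (∀ i, 0 < b i) ∧
        SympEmb (N + 1) (polydisk a) (ellipsoid b) ∧ Nk 2 b ≤ 2 * a i₀ + ε := by
      intro ε hε
      obtain ⟨b, hb, hbi, hsub⟩ := polydisk_subset ha i₀ (ε := ε / 2) (by positivity)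
      exact ⟨b, hb, SympEmb.of_subset hsub, Nk_two_le hb (i := i₀) (by rw [hbi]; linarith)⟩
    refine le_antisymm (le_of_forall_pos_le_add fun ε hε => ?_) ?_
    · obtain ⟨b, hb, hemb, hle⟩ := hex ε hε
      exact (csInf_le ⟨_, hlb⟩ ⟨b, hb, hemb, rfl⟩).trans hle
    · obtain ⟨b, hb, hemb, -⟩ := hex 1 one_pos
      exact le_csInf ⟨_, b, hb, hemb, rfl⟩ hlb
  rw [hmin, hmax]

end
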